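/- arXiv:1901.04705 — 7 statements merged into one kernel-verified Lean document; each statement's English description precedes it below -/
import Mathlib

section
/- Let α, β > 0, μ ≥ 0 with α − β(μ+1) < −1, and γ, δ ∈ ℝ, and suppose m := δ(α+1)/β − γ is a positive integer. Define the constant C := β^{m−1} · Γ(−(α+1)/β + μ + 1) · Γ((α+1)/β) / (2^m · Γ(μ+1)). Then S_{α,β,γ,δ,μ}(r) / (C · r^{2(α+1)/β − 2(μ+1)} · (log r)^{−m}) → 1 as r → ∞. -/
open Filter Real

lemma mat_beta (u v : ℝ) (hu : 0 < u) (hv : 0 < v) :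
    ∫ x in Set.Ioo (0:ℝ) 1, x ^ (u - 1) * (1 - x) ^ (v - 1) =
      Gamma u * Gamma v / Gamma (u + v) := by
  have h := ProbabilityTheory.beta_eq_betaIntegralReal u v hu hv
  rw [ProbabilityTheory.beta] at h
  rw [h, Complex.betaIntegral, intervalIntegral.integral_of_le zero_le_one,
    ← MeasureTheory.integral_Ioc_eq_integral_Ioo]
  rw [← Complex.ofReal_re (∫ x in Set.Ioc (0:ℝ) 1, x ^ (u - 1) * (1 - x) ^ (v - 1)),
    ← integral_complex_ofReal]
  congr 1
  refine MeasureTheory.setIntegral_congr_fun measurableSet_Ioc ?_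
  intro x hx
  simp only
  rw [Complex.ofReal_mul, Complex.ofReal_cpow hx.1.le, Complex.ofReal_cpow (by linarith [hx.2])]
  push_cast
  rfl

lemma mat_beta_Ioi (s q : ℝ) (hs : 0 < s) (hq : s < q) :
    ∫ u in Set.Ioi (0:ℝ), u ^ (s - 1) / (u + 1) ^ q =
      Gamma s * Gamma (q - s) / Gamma q := by
  have himg : (fun x : ℝ => x / (1 - x)) '' Set.Ioo 0 1 = Set.Ioi 0 := by
    ext y
    constructor
    · rintro ⟨x, hx, rfl⟩
      exact div_pos hx.1 (by linarith [hx.2])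
    · intro hy
      have hy' : (0:ℝ) < y := hy
      refine ⟨y / (1 + y), ⟨by positivity, ?_⟩, ?_⟩
      · rw [div_lt_one (by positivity)]; linarith
      · field_simp
        simp
  have hinj : Set.InjOn (fun x : ℝ => x / (1 - x)) (Set.Ioo 0 1) := by
    intro x hx y hy h
    have h1 : 1 - x ≠ 0 := by linarith [hx.2]
    have h2 : 1 - y ≠ 0 := by linarith [hy.2]
    simp only at h
    rw [div_eq_div_iff h1 h2] at h
    linarith
  have hder : ∀ x ∈ Set.Ioo (0:ℝ) 1, HasDerivWithinAt (fun x : ℝ => x / (1 - x))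
      (1 / (1 - x) ^ 2) (Set.Ioo 0 1) x := by
    intro x hx
    have h1 : 1 - x ≠ 0 := by linarith [hx.2]
    have := ((hasDerivAt_id x).div ((hasDerivAt_id x).const_sub 1) h1).hasDerivWithinAt
      (s := Set.Ioo 0 1)
    have e : 1 / (1 - x) ^ 2 = (1 * (1 - id x) - id x * (-1)) / (1 - id x) ^ 2 := by simp
    rw [e]
    exact this
  have h := MeasureTheory.integral_image_eq_integral_abs_deriv_smul measurableSet_Ioo hder hinj
    (fun u => u ^ (s - 1) / (u + 1) ^ q)
  rw [himg] at h
  rw [h]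
  have hb := mat_beta s (q - s) hs (by linarith)
  rw [add_sub_cancel] at hb
  rw [← hb]
  refine MeasureTheory.setIntegral_congr_fun measurableSet_Ioo ?_
  intro x hx
  have hx0 : 0 < x := hx.1
  have h1 : 0 < 1 - x := by linarith [hx.2]
  have e1 : x / (1 - x) + 1 = (1 - x)⁻¹ := by field_simp; ring
  simp only [smul_eq_mul]
  rw [e1, abs_of_pos (by positivity), div_rpow hx0.le h1.le, inv_rpow h1.le]
  have e2 : (1 - x) ^ q = (1 - x) ^ (q - s - 1) * (1 - x) ^ (s - 1) * (1 - x) ^ (2:ℕ) := by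
    rw [← rpow_natCast, ← rpow_add h1, ← rpow_add h1]
    congr 1; push_cast; ring
  rw [div_inv_eq_mul, e2]
  have : 0 < (1 - x) ^ (s - 1) := by positivity
  field_simp

lemma mat_int (a b q : ℝ) (ha : 0 < a) (hb : 0 < b) (hq : a + 1 < b * q) :
    ∫ t in Set.Ioi (0:ℝ), t ^ a / (t ^ b + 1) ^ q =
      1 / b * (Gamma ((a + 1) / b) * Gamma (q - (a + 1) / b) / Gamma q) := by
  rw [← mat_beta_Ioi ((a + 1) / b) q (by positivity) (by rw [div_lt_iff₀ hb]; linarith)]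
  rw [← MeasureTheory.integral_comp_rpow_Ioi_of_pos
    (g := fun u : ℝ => u ^ ((a + 1) / b - 1) / (u + 1) ^ q) hb, ← MeasureTheory.integral_const_mul]
  refine MeasureTheory.setIntegral_congr_fun measurableSet_Ioi ?_
  intro t ht
  have ht0 : (0:ℝ) < t := ht
  simp only [smul_eq_mul]
  rw [← rpow_mul ht0.le]
  have : t ^ a = t ^ (b - 1) * t ^ (b * ((a + 1) / b - 1)) := by
    rw [← rpow_add ht0]; congr 1; field_simp; ring
  rw [this]
  field_simp

/-- sum as integral of step function -/
lemma mat_sum (g : ℕ → ℝ) (X : ℝ) (hX : 0 < X)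
    (hi : MeasureTheory.IntegrableOn (fun t : ℝ => g ⌊X * t⌋₊) (Set.Ioi 0)) :
    ∑' n, g n = X * ∫ t in Set.Ioi (0:ℝ), g ⌊X * t⌋₊ := by
  have hi2 : MeasureTheory.IntegrableOn (fun t : ℝ => g ⌊t⌋₊) (Set.Ioi 0) := by
    have := (MeasureTheory.integrableOn_Ioi_comp_mul_left_iff (fun t : ℝ => g ⌊t⌋₊) 0 hX).1 hi
    simpa using this
  have h2 := MeasureTheory.integral_comp_mul_left_Ioi (fun t : ℝ => g ⌊t⌋₊) 0 hX
  rw [h2]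
  simp only [mul_zero, smul_eq_mul]
  rw [mul_inv_cancel_left₀ hX.ne', ← MeasureTheory.integral_Ici_eq_integral_Ioi]
  have hU : (⋃ n : ℕ, Set.Ico (n : ℝ) (n + 1)) = Set.Ici 0 := by
    ext x
    simp only [Set.mem_iUnion, Set.mem_Ico, Set.mem_Ici]
    constructor
    · rintro ⟨n, h, -⟩
      exact (Nat.cast_nonneg n).trans h
    · intro h
      exact ⟨⌊x⌋₊, Nat.floor_le h, Nat.lt_floor_add_one x⟩
  have hd : Pairwise (Function.onFun Disjoint fun n : ℕ => Set.Ico (n : ℝ) (n + 1)) := by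
    intro i j hij
    refine Set.disjoint_left.2 ?_
    rintro x ⟨h1, h2⟩ ⟨h3, h4⟩
    apply hij
    have a1 : (i:ℝ) < j + 1 := by linarith
    have a2 : (j:ℝ) < i + 1 := by linarith
    norm_cast at a1 a2
    omega
  have := MeasureTheory.hasSum_integral_iUnion (f := fun t : ℝ => g ⌊t⌋₊)
    (μ := MeasureTheory.volume)
    (fun n : ℕ => measurableSet_Ico (a := (n:ℝ)) (b := n + 1)) hd
    (by rw [hU, integrableOn_Ici_iff_integrableOn_Ioi]; exact hi2)
  rw [hU] at this
  rw [← this.tsum_eq]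
  congr 1
  ext n
  rw [MeasureTheory.setIntegral_congr_fun (g := fun _ => g n) measurableSet_Ico]
  · simp
  · intro x hx
    simp only
    rw [(Nat.floor_eq_iff ((Nat.cast_nonneg n).trans hx.1)).2 hx]

/-- Potter type bound -/
lemma mat_potter (g ε : ℝ) (hε : 0 < ε) : ∃ K : ℝ, 0 < K ∧ ∀ A B : ℝ, log 2 ≤ A → log 2 ≤ B →
    (A / B) ^ g ≤ K * exp (ε * |A - B|) := by
  have hl : 0 < log 2 := log_pos one_lt_two
  set η := ε / (|g| + 1) with hη
  have hη0 : 0 < η := by positivity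
  set K1 := 1 + 1 / (η * log 2) with hK1
  have hK1p : 0 < K1 := by positivity
  have key : ∀ v : ℝ, 0 ≤ v → 1 + v / log 2 ≤ K1 * exp (η * v) := by
    intro v hv
    have h1 : η * v + 1 ≤ exp (η * v) := add_one_le_exp _
    calc 1 + v / log 2 ≤ K1 * (η * v + 1) := by
          rw [hK1]
          have : 1 / (η * log 2) * (η * v) = v / log 2 := by field_simp
          have h2 : 0 < 1 / (η * log 2) := by positivity
          have h3 : 0 ≤ η * v := by positivity
          nlinarith
      _ ≤ _ := by gcongr
  have key2 : ∀ A B : ℝ, log 2 ≤ A → log 2 ≤ B → A / B ≤ K1 * exp (η * |A - B|) := by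
    intro A B hA hB
    have hB0 : 0 < B := hl.trans_le hB
    refine le_trans ?_ (key _ (abs_nonneg _))
    calc A / B = 1 + (A - B) / B := by field_simp; ring
      _ ≤ 1 + |A - B| / B := by gcongr; exact le_abs_self _
      _ ≤ _ := by gcongr
  refine ⟨K1 ^ |g|, by positivity, ?_⟩
  intro A B hA hB
  have hA0 : 0 < A := hl.trans_le hA
  have hB0 : 0 < B := hl.trans_le hB
  have h1 : (A / B) ^ g ≤ (K1 * exp (η * |A - B|)) ^ |g| := by
    rcases le_total 0 g with h | h
    · rw [abs_of_nonneg h]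
      exact rpow_le_rpow (by positivity) (key2 A B hA hB) h
    · rw [abs_of_nonpos h]
      have : (A / B) ^ g = (B / A) ^ (-g) := by
        rw [← inv_div, inv_rpow (by positivity), rpow_neg (by positivity)]
      rw [this, abs_sub_comm]
      exact rpow_le_rpow (by positivity) (key2 B A hB hA) (by linarith)
  refine h1.trans ?_
  rw [mul_rpow hK1p.le (exp_pos _).le, ← exp_mul]
  refine mul_le_mul_of_nonneg_left (exp_le_exp.2 ?_) (by positivity)
  have : η * |g| ≤ ε := by
    rw [hη, div_mul_eq_mul_div, div_le_iff₀ (by positivity)]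
    nlinarith [abs_nonneg g]
  calc η * |A - B| * |g| = (η * |g|) * |A - B| := by ring
    _ ≤ _ := by gcongr

noncomputable def matF (a b γ δ q X L y : ℝ) : ℝ :=
  y ^ a * (log (y * X) / L) ^ γ / (y ^ b * (log (y * X) / L) ^ δ + 1) ^ q

lemma mat_bound (a b γ δ q : ℝ) (ha : 0 < a) (hb : 0 < b) (hq0 : 0 < q) (hq : a + 1 < b * q) :
    ∃ K p : ℝ, 0 < K ∧ p < -1 ∧ ∀ X L t y : ℝ, 2 ≤ X → 0 < L → (log X / L) ^ γ ≤ 2 →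
      (log X / L) ^ (-δ) ≤ 2 → 0 < t → t ≤ y → y ≤ t + 1 → 2 ≤ y * X →
      0 ≤ matF a b γ δ q X L y ∧ matF a b γ δ q X L y ≤ K * (t + 1) ^ p := by
  obtain ⟨ε, hε, hεa, hεq⟩ : ∃ ε : ℝ, 0 < ε ∧ ε ≤ a ∧ a + ε - (b - ε) * q < -1 := by
    refine ⟨min a ((b * q - a - 1) / (2 * (q + 1))), ?_, min_le_left _ _, ?_⟩
    · apply lt_min ha
      apply div_pos <;> linarith
    · have h := min_le_right a ((b * q - a - 1) / (2 * (q + 1)))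
      rw [le_div_iff₀ (by positivity)] at h
      nlinarith
  set p := a + ε - (b - ε) * q with hp
  obtain ⟨K1, hK1, hP1⟩ := mat_potter γ ε hε
  obtain ⟨K2, hK2, hP2⟩ := mat_potter (-δ) ε hε
  refine ⟨2 * K1 * 2 ^ (-p) * (2 ^ (a + ε) + (2 * K2) ^ q), p, by positivity, hεq, ?_⟩
  intro X L t y hX hL hγ hδ ht hty hyt hyX
  have hl : 0 < log 2 := log_pos one_lt_two
  have hX0 : 0 < X := by linarith
  have hy : 0 < y := by linarith
  have hA : log 2 ≤ log (y * X) := log_le_log (by norm_num) hyX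
  have hB : log 2 ≤ log X := log_le_log (by norm_num) hX
  have hAB : log (y * X) - log X = log y := by rw [log_mul hy.ne' hX0.ne']; ring
  have p1 := hP1 _ _ hA hB
  have p2 := hP2 _ _ hA hB
  rw [hAB] at p1 p2
  unfold matF
  set A := log (y * X)
  set B := log X
  have hA0 : 0 < A := by linarith
  have hB0 : 0 < B := by linarith
  have eAL : A / L = (A / B) * (B / L) := by field_simp
  have q1 : (A / L) ^ γ ≤ 2 * K1 * exp (ε * |log y|) := by
    rw [eAL, mul_rpow (by positivity) (by positivity)]
    calc _ ≤ (K1 * exp (ε * |log y|)) * 2 := by gcongr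
      _ = _ := by ring
  have q2 : (A / L) ^ (-δ) ≤ 2 * K2 * exp (ε * |log y|) := by
    rw [eAL, mul_rpow (by positivity) (by positivity)]
    calc _ ≤ (K2 * exp (ε * |log y|)) * 2 := by gcongr
      _ = _ := by ring
  have hAL : 0 < A / L := by positivity
  refine ⟨by positivity, ?_⟩
  have hey : 1 ≤ y → exp (ε * |log y|) = y ^ ε := by
    intro h
    rw [abs_of_nonneg (log_nonneg h), rpow_def_of_pos hy, mul_comm]
  have hpow : ∀ s : ℝ, 0 < s → s ≤ t + 1 → 0 < s := fun _ h _ => h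
  rcases le_total t 1 with h1 | h1
  · have hden : 1 ≤ (y ^ b * (A / L) ^ δ + 1) ^ q := by
      apply one_le_rpow _ hq0.le
      have : 0 ≤ y ^ b * (A / L) ^ δ := by positivity
      linarith
    have hnum : y ^ a * exp (ε * |log y|) ≤ 2 ^ (a + ε) := by
      rcases le_total 1 y with h2 | h2
      · rw [hey h2, ← rpow_add hy]
        exact rpow_le_rpow hy.le (by linarith) (by linarith)
      · rw [abs_of_nonpos (log_nonpos hy.le h2), rpow_def_of_pos hy, ← exp_add]
        have : log y * a + ε * -log y ≤ 0 := by
          nlinarith [log_nonpos hy.le h2]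
        calc _ ≤ (1:ℝ) := exp_le_one_iff.2 this
          _ ≤ _ := one_le_rpow (by norm_num) (by linarith)
    have ht1 : 1 ≤ (2:ℝ) ^ (-p) * (t + 1) ^ p := by
      have : (2:ℝ) ^ p ≤ (t + 1) ^ p :=
        rpow_le_rpow_of_nonpos (by linarith) (by linarith) (by linarith)
      calc (1:ℝ) = (2:ℝ) ^ (-p) * 2 ^ p := by rw [← rpow_add (by norm_num)]; simp
        _ ≤ _ := by gcongr
    calc _ ≤ y ^ a * (A / L) ^ γ := div_le_self (by positivity) hden
      _ ≤ y ^ a * (2 * K1 * exp (ε * |log y|)) := by gcongr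
      _ = 2 * K1 * (y ^ a * exp (ε * |log y|)) * 1 := by ring
      _ ≤ 2 * K1 * 2 ^ (a + ε) * ((2:ℝ) ^ (-p) * (t + 1) ^ p) := by gcongr
      _ ≤ 2 * K1 * (2 ^ (a + ε) + (2 * K2) ^ q) * ((2:ℝ) ^ (-p) * (t + 1) ^ p) := by
          gcongr
          have : 0 ≤ (2 * K2) ^ q := by positivity
          linarith
      _ = _ := by ring
  · have hy1 : 1 ≤ y := by linarith
    rw [hey hy1] at q1 q2
    have hd : (2 * K2 * y ^ ε)⁻¹ ≤ (A / L) ^ δ := by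
      rw [rpow_neg hAL.le] at q2
      exact inv_le_of_inv_le₀ (by positivity) q2
    have hden : (y ^ b * (2 * K2 * y ^ ε)⁻¹) ^ q ≤ (y ^ b * (A / L) ^ δ + 1) ^ q := by
      apply rpow_le_rpow (by positivity) _ hq0.le
      have : y ^ b * (2 * K2 * y ^ ε)⁻¹ ≤ y ^ b * (A / L) ^ δ := by gcongr
      linarith
    have e1 : y ^ a * (2 * K1 * y ^ ε) / (y ^ b * (2 * K2 * y ^ ε)⁻¹) ^ q
        = 2 * K1 * (2 * K2) ^ q * y ^ p := by
      have : y ^ b * (2 * K2 * y ^ ε)⁻¹ = y ^ (b - ε) / (2 * K2) := by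
        rw [rpow_sub hy]; field_simp
      rw [this, div_rpow (by positivity) (by positivity), ← rpow_mul hy.le, hp,
        rpow_sub hy, rpow_add hy]
      field_simp
    have ht1 : y ^ p ≤ (2:ℝ) ^ (-p) * (t + 1) ^ p := by
      have h3 : y ^ p ≤ ((t + 1) / 2) ^ p :=
        rpow_le_rpow_of_nonpos (by linarith) (by linarith) (by linarith)
      rw [div_rpow (by linarith) (by norm_num)] at h3
      rw [rpow_neg (by norm_num)]
      calc _ ≤ _ := h3
        _ = _ := by ring
    calc _ ≤ y ^ a * (2 * K1 * y ^ ε) / (y ^ b * (2 * K2 * y ^ ε)⁻¹) ^ q := by gcongr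
      _ = 2 * K1 * (2 * K2) ^ q * y ^ p := e1
      _ ≤ 2 * K1 * (2 * K2) ^ q * ((2:ℝ) ^ (-p) * (t + 1) ^ p) := by gcongr
      _ ≤ 2 * K1 * (2 ^ (a + ε) + (2 * K2) ^ q) * ((2:ℝ) ^ (-p) * (t + 1) ^ p) := by
          gcongr
          have : 0 ≤ (2:ℝ) ^ (a + ε) := by positivity
          linarith
      _ = _ := by ring

noncomputable def matX (b δ L : ℝ) : ℝ := exp L * L ^ (-δ / b)

lemma matX_pos (b δ L : ℝ) (hL : 0 < L) : 0 < matX b δ L := by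
  unfold matX; positivity

lemma matX_log (b δ L : ℝ) (hL : 0 < L) : log (matX b δ L) = L + (-δ / b) * log L := by
  unfold matX
  rw [log_mul (exp_pos _).ne' (by positivity), log_exp, log_rpow hL]

lemma matX_ratio (b δ : ℝ) : Tendsto (fun L => log (matX b δ L) / L) atTop (nhds 1) := by
  have h : Tendsto (fun L : ℝ => 1 + (-δ / b) * (log L / L)) atTop (nhds (1 + (-δ / b) * 0)) :=
    (isLittleO_log_id_atTop.tendsto_div_nhds_zero.const_mul _).const_add _
  rw [mul_zero, add_zero] at h
  refine h.congr' ?_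
  filter_upwards [eventually_gt_atTop 0] with L hL
  rw [matX_log b δ L hL]
  field_simp

lemma matX_log_tendsto (b δ : ℝ) : Tendsto (fun L => log (matX b δ L)) atTop atTop := by
  have h := (matX_ratio b δ).pos_mul_atTop one_pos tendsto_id
  refine h.congr' ?_
  filter_upwards [eventually_gt_atTop 0] with L hL
  simp only [id]
  field_simp

lemma matX_tendsto (b δ : ℝ) : Tendsto (fun L => matX b δ L) atTop atTop := by
  have h := tendsto_exp_atTop.comp (matX_log_tendsto b δ)
  refine h.congr' ?_
  filter_upwards [eventually_gt_atTop 0] with L hL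
  exact exp_log (matX_pos b δ L hL)

noncomputable def matY (X t : ℝ) : ℝ := ((⌊X * t⌋₊ : ℝ) + 2) / X

lemma matY_props (X t : ℝ) (hX : 2 ≤ X) (ht : 0 < t) :
    t ≤ matY X t ∧ matY X t ≤ t + 2 / X ∧ matY X t ≤ t + 1 ∧ 2 ≤ matY X t * X := by
  have hX0 : 0 < X := by linarith
  have h1 := Nat.floor_le (show 0 ≤ X * t by positivity)
  have h2 := Nat.lt_floor_add_one (X * t)
  have h3 : matY X t * X = (⌊X * t⌋₊ : ℝ) + 2 := by unfold matY; field_simp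
  have h4 : matY X t ≤ t + 2 / X := by
    unfold matY
    rw [add_div]
    gcongr
    rw [div_le_iff₀ hX0]; linarith
  have h5 : 2 / X ≤ 1 := by rw [div_le_one hX0]; exact hX
  refine ⟨?_, h4, by linarith, ?_⟩
  · unfold matY
    rw [le_div_iff₀ hX0]; linarith
  · rw [h3]; have : (0:ℝ) ≤ (⌊X * t⌋₊ : ℝ) := Nat.cast_nonneg _
    linarith

lemma matY_tendsto (b δ t : ℝ) (ht : 0 < t) :
    Tendsto (fun L => matY (matX b δ L) t) atTop (nhds t) := by
  have hX := matX_tendsto b δ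
  have h1 : Tendsto (fun L => t + 2 / matX b δ L) atTop (nhds (t + 0)) :=
    (hX.const_div_atTop 2).const_add t
  rw [add_zero] at h1
  refine tendsto_of_tendsto_of_tendsto_of_le_of_le' tendsto_const_nhds h1 ?_ ?_
  · filter_upwards [hX.eventually_ge_atTop 2] with L hL
    exact (matY_props _ t hL ht).1
  · filter_upwards [hX.eventually_ge_atTop 2] with L hL
    exact (matY_props _ t hL ht).2.1

lemma mat_ptwise (a b γ δ q t : ℝ) (ht : 0 < t) :
    Tendsto (fun L => matF a b γ δ q (matX b δ L) L (matY (matX b δ L) t)) atTop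
      (nhds (t ^ a / (t ^ b + 1) ^ q)) := by
  have hX := matX_tendsto b δ
  have hY := matY_tendsto b δ t ht
  have hl : Tendsto (fun L => log (matY (matX b δ L) t * matX b δ L) / L) atTop (nhds 1) := by
    have h1 : Tendsto (fun L => log (matY (matX b δ L) t)) atTop (nhds (log t)) :=
      hY.log ht.ne'
    have h2 := (h1.div_atTop tendsto_id).add (matX_ratio b δ)
    rw [zero_add] at h2
    refine h2.congr' ?_
    filter_upwards [hX.eventually_ge_atTop 2] with L hL
    have := (matY_props _ t hL ht).1
    rw [log_mul (by linarith) (by linarith)]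
    simp only [id]
    ring
  have hg : ∀ g : ℝ, Tendsto (fun L => (log (matY (matX b δ L) t * matX b δ L) / L) ^ g) atTop
      (nhds 1) := by
    intro g
    simpa using hl.rpow_const (p := g) (Or.inl one_ne_zero)
  have hya : ∀ g : ℝ, Tendsto (fun L => (matY (matX b δ L) t) ^ g) atTop (nhds (t ^ g)) :=
    fun g => hY.rpow_const (Or.inl ht.ne')
  have hp : 0 < t ^ b + 1 := by positivity
  have hden : Tendsto (fun L => ((matY (matX b δ L) t) ^ b *
      (log (matY (matX b δ L) t * matX b δ L) / L) ^ δ + 1) ^ q) atTop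
      (nhds ((t ^ b * 1 + 1) ^ q)) :=
    (((hya b).mul (hg δ)).add_const 1).rpow_const (Or.inl (by rw [mul_one]; exact hp.ne'))
  have := ((hya a).mul (hg γ)).div hden (by positivity)
  simp only [mul_one] at this
  exact this

lemma mat_meas (a b γ δ q X L : ℝ) :
    Measurable (fun t : ℝ => matF a b γ δ q X L (matY X t)) := by
  have h1 : Measurable (fun n : ℕ => matF a b γ δ q X L (((n:ℝ) + 2) / X)) := measurable_from_top
  exact h1.comp (Nat.measurable_floor.comp (measurable_const_mul X))

lemma mat_main (a b γ δ q : ℝ) (ha : 0 < a) (hb : 0 < b) (hq0 : 0 < q) (hq : a + 1 < b * q) :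
    Tendsto (fun L => ∑' n : ℕ, matF a b γ δ q (matX b δ L) L (((n:ℝ) + 2) / matX b δ L)
        / matX b δ L) atTop
      (nhds (1 / b * (Gamma ((a + 1) / b) * Gamma (q - (a + 1) / b) / Gamma q))) := by
  rw [← mat_int a b q ha hb hq]
  obtain ⟨K, p, hK, hp, hbd⟩ := mat_bound a b γ δ q ha hb hq0 hq
  have hX := matX_tendsto b δ
  have hr : ∀ g : ℝ, ∀ᶠ L in atTop, (log (matX b δ L) / L) ^ g ≤ 2 := by
    intro g
    have : Tendsto (fun L => (log (matX b δ L) / L) ^ g) atTop (nhds 1) := by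
      simpa using (matX_ratio b δ).rpow_const (p := g) (Or.inl one_ne_zero)
    exact this.eventually_le_const one_lt_two
  have hev : ∀ᶠ L in atTop, 0 < matX b δ L ∧ ∀ t : ℝ, 0 < t →
      ‖matF a b γ δ q (matX b δ L) L (matY (matX b δ L) t)‖ ≤ K * (t + 1) ^ p := by
    filter_upwards [hr γ, hr (-δ), hX.eventually_ge_atTop 2, eventually_gt_atTop 0]
      with L h1 h2 h3 h4
    refine ⟨by linarith, fun t ht => ?_⟩
    obtain ⟨y1, -, y2, y3⟩ := matY_props _ t h3 ht
    obtain ⟨z1, z2⟩ := hbd _ L t _ h3 h4 h1 h2 ht y1 y2 y3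
    rw [norm_of_nonneg z1]
    exact z2
  have hint : MeasureTheory.IntegrableOn (fun t : ℝ => K * (t + 1) ^ p) (Set.Ioi 0) :=
    (integrableOn_add_rpow_Ioi_of_lt hp (by norm_num)).const_mul K
  have hdc := MeasureTheory.tendsto_integral_filter_of_dominated_convergence
    (μ := MeasureTheory.volume.restrict (Set.Ioi (0:ℝ))) (l := atTop)
    (F := fun L t => matF a b γ δ q (matX b δ L) L (matY (matX b δ L) t))
    (f := fun t => t ^ a / (t ^ b + 1) ^ q)
    (fun t : ℝ => K * (t + 1) ^ p)
    (Eventually.of_forall fun L => (mat_meas a b γ δ q _ L).aestronglyMeasurable)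
    (by
      filter_upwards [hev] with L hL
      exact MeasureTheory.ae_restrict_of_forall_mem measurableSet_Ioi fun t ht => hL.2 t ht)
    hint
    (MeasureTheory.ae_restrict_of_forall_mem measurableSet_Ioi fun t ht =>
      mat_ptwise a b γ δ q t ht)
  refine hdc.congr' ?_
  filter_upwards [hev] with L hL
  have hi : MeasureTheory.IntegrableOn
      (fun t : ℝ => matF a b γ δ q (matX b δ L) L (matY (matX b δ L) t)) (Set.Ioi 0) := by
    refine MeasureTheory.Integrable.mono' hint (mat_meas a b γ δ q _ L).aestronglyMeasurable ?_
    exact MeasureTheory.ae_restrict_of_forall_mem measurableSet_Ioi fun t ht => hL.2 t ht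
  have := mat_sum (fun n : ℕ => matF a b γ δ q (matX b δ L) L (((n:ℝ) + 2) / matX b δ L))
    (matX b δ L) hL.1 hi
  rw [tsum_div_const, this, mul_div_cancel_left₀ _ hL.1.ne']
  rfl




/-- Theorem 1.1 (integer case): first-order asymptotics of the
power-logarithmic Mathieu-type series when `m = δ(α+1)/β − γ` is a positive
integer. -/
theorem mathieu_power_log_asymptotics_int
    (α β γ δ μ : ℝ) (hα : 0 < α) (hβ : 0 < β) (hμ : 0 ≤ μ)
    (hconv : α - β * (μ + 1) < -1)
    (m : ℕ) (hm : 0 < m) (hmeq : δ * (α + 1) / β - γ = (m : ℝ)) :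
    Filter.Tendsto
      (fun r : ℝ =>
        (∑' n : ℕ, ((n : ℝ) + 2) ^ α * (Real.log ((n : ℝ) + 2)) ^ γ /
          (((n : ℝ) + 2) ^ β * (Real.log ((n : ℝ) + 2)) ^ δ + r ^ 2) ^ (μ + 1)) /
        ((β ^ (m - 1) * Real.Gamma (-((α + 1) / β) + μ + 1) *
            Real.Gamma ((α + 1) / β) / (2 ^ m * Real.Gamma (μ + 1))) *
          r ^ (2 * (α + 1) / β - 2 * (μ + 1)) *
          (Real.log r) ^ (-(m : ℝ))))
      Filter.atTop (nhds 1) := by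
  have hs : 0 < (α + 1) / β := by positivity
  have hq : α + 1 < β * (μ + 1) := by linarith
  have hq0 : 0 < μ + 1 := by linarith
  have hqs : 0 < μ + 1 - (α + 1) / β := by
    rw [sub_pos, div_lt_iff₀ hβ]; linarith
  set J := 1 / β * (Gamma ((α + 1) / β) * Gamma (μ + 1 - (α + 1) / β) / Gamma (μ + 1)) with hJ
  have hG1 := Gamma_pos_of_pos hs
  have hG2 := Gamma_pos_of_pos hqs
  have hG3 := Gamma_pos_of_pos hq0
  have hJ0 : 0 < J := by positivity
  have hL : Tendsto (fun r : ℝ => 2 / β * log r) atTop atTop :=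
    tendsto_log_atTop.const_mul_atTop (by positivity)
  have hlim := ((mat_main α β γ δ (μ + 1) hα hβ hq0 hq).comp hL).div_const J
  rw [← hJ, div_self hJ0.ne'] at hlim
  refine hlim.congr' ?_
  filter_upwards [eventually_gt_atTop 1] with r hr
  have hr0 : 0 < r := by linarith
  have hlr : 0 < log r := log_pos hr
  simp only [Function.comp]
  set L := 2 / β * log r with hLdef
  have hL0 : 0 < L := by positivity
  have hX0 := matX_pos β δ L hL0
  set X := matX β δ L with hXdef
  have eX : ∀ s : ℝ, X ^ s = r ^ (2 * s / β) * L ^ (-δ * s / β) := by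
    intro s
    rw [hXdef, matX, mul_rpow (exp_pos _).le (by positivity), ← exp_mul, ← rpow_mul hL0.le,
      rpow_def_of_pos hr0, hLdef]
    congr 2 <;> ring
  have eXb : X ^ β * L ^ δ = r ^ 2 := by
    rw [eX, mul_assoc, ← rpow_add hL0]
    have h1 : 2 * β / β = (2:ℕ) := by field_simp; norm_num
    have h2 : -δ * β / β + δ = 0 := by field_simp; ring
    rw [h1, h2, rpow_zero, mul_one, rpow_natCast]
  have hterm : ∀ n : ℕ, ((n : ℝ) + 2) ^ α * (Real.log ((n : ℝ) + 2)) ^ γ /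
          (((n : ℝ) + 2) ^ β * (Real.log ((n : ℝ) + 2)) ^ δ + r ^ 2) ^ (μ + 1) =
      (X ^ (α + 1) * L ^ γ / (r ^ 2) ^ (μ + 1)) *
        (matF α β γ δ (μ + 1) X L (((n:ℝ) + 2) / X) / X) := by
    intro n
    have hN : (0:ℝ) < (n:ℝ) + 2 := by positivity
    have hlN : 0 < log ((n:ℝ) + 2) := log_pos (by
      have : (0:ℝ) ≤ n := Nat.cast_nonneg n
      linarith)
    unfold matF
    rw [div_mul_cancel₀ _ hX0.ne']
    set N := (n:ℝ) + 2
    have e1 : N ^ β * log N ^ δ + r ^ 2 = ((N / X) ^ β * (log N / L) ^ δ + 1) * r ^ 2 := by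
      rw [← eXb, div_rpow hN.le hX0.le, div_rpow hlN.le hL0.le]
      have : 0 < X ^ β := by positivity
      have : 0 < L ^ δ := by positivity
      field_simp
    rw [e1, mul_rpow (by positivity) (by positivity), div_rpow hN.le hX0.le α,
      div_rpow hlN.le hL0.le γ, rpow_add hX0, rpow_one]
    have : 0 < X ^ α := by positivity
    have : 0 < L ^ γ := by positivity
    have : 0 < ((N / X) ^ β * (log N / L) ^ δ + 1) ^ (μ + 1) := by positivity
    have : 0 < (r ^ 2) ^ (μ + 1) := by positivity
    field_simp
  simp_rw [hterm]
  rw [tsum_mul_left]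
  set T := ∑' n : ℕ, matF α β γ δ (μ + 1) X L (((n:ℝ) + 2) / X) / X
  have eP : X ^ (α + 1) * L ^ γ / (r ^ 2) ^ (μ + 1) =
      r ^ (2 * (α + 1) / β - 2 * (μ + 1)) * ((β / 2) ^ m * log r ^ (-(m:ℝ))) := by
    have h1 : L ^ (-δ * (α + 1) / β) * L ^ γ = (β / 2) ^ m * log r ^ (-(m:ℝ)) := by
      rw [← rpow_add hL0]
      have : -δ * (α + 1) / β + γ = -(m:ℝ) := by rw [← hmeq]; ring
      rw [this, hLdef, mul_rpow (by positivity) hlr.le, rpow_neg (by positivity), rpow_natCast,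
        ← inv_pow, inv_div]
    have h2 : ((r ^ 2 : ℝ)) ^ (μ + 1) = r ^ (2 * (μ + 1)) := by
      rw [← rpow_natCast, ← rpow_mul hr0.le]; norm_num
    rw [eX, mul_assoc, h1, h2, rpow_sub hr0]
    ring
  have eC : β ^ (m - 1) * Real.Gamma (-((α + 1) / β) + μ + 1) *
            Real.Gamma ((α + 1) / β) / (2 ^ m * Real.Gamma (μ + 1)) = (β / 2) ^ m * J := by
    obtain ⟨k, rfl⟩ : ∃ k, m = k + 1 := ⟨m - 1, by omega⟩
    have : -((α + 1) / β) + μ + 1 = μ + 1 - (α + 1) / β := by ring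
    rw [this, hJ, Nat.add_sub_cancel, div_pow, pow_succ β k]
    field_simp
  rw [eP, eC]
  have h1 : 0 < r ^ (2 * (α + 1) / β - 2 * (μ + 1)) := by positivity
  have h2 : 0 < log r ^ (-(m:ℝ)) := by positivity
  have h3 : 0 < (β / 2) ^ m := by positivity
  generalize r ^ (2 * (α + 1) / β - 2 * (μ + 1)) = u at *
  generalize log r ^ (-(m:ℝ)) = v at *
  generalize (β / 2) ^ m = w at *
  field_simp
end

section
/- Assume the inverse Gamma function expansion: there exist constants C₀ > 0 and x₀ > 0 such that for all x ≥ x₀, |G(x) − u₀(x) − 1/2| ≤ C₀ / log(x/√(2π)), where G(x) is the unique y ≥ 2 with Γ(y) = x and u₀(x) is the unique u ≥ e with u·log u − u = log(x/√(2π)). Let α, β > 0, μ ≥ 0 with α − β(μ+1) < 0, and 0 < d₁ < d₂ < 1. For r large, set g(r) := G(r^{2/β}), let {g(r)} denote the fractional part of g(r), and define m(r) := min( α·{g(r)}, (β(μ+1) − α)·(1 − {g(r)}) ). Then there exist constants C > 0 and r₀ such that for all r ≥ r₀ with d₁ ≤ {g(r)} ≤ d₂, one has | log S^!_{α,β,μ}(r)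 + 2(μ+1 − α/β)·log r + m(r)·log log r | ≤ C · log log log r. -/
open Filter Real

lemma mfa_fact1 (n j : ℕ) : n.factorial * 2 ^ j ≤ 2 * (n + j).factorial := by
  induction j with
  | zero => simp; omega
  | succ j ih =>
    rcases Nat.eq_zero_or_pos (n + j) with h | h
    · obtain ⟨rfl, rfl⟩ : n = 0 ∧ j = 0 := by omega
      simp
    · rw [← Nat.add_assoc, Nat.factorial_succ, pow_succ]
      nlinarith [(n+j).factorial_pos]

lemma mfa_fact2 (k j : ℕ) : (k+1).factorial * 2 ^ j ≤ (k + 1 + j).factorial := by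
  refine le_trans ?_ (Nat.factorial_mul_pow_le_factorial (m := k+1) (n := j))
  gcongr
  omega

noncomputable def mfaT (α β s x : ℝ) (n : ℕ) : ℝ :=
  ((n.factorial : ℝ)) ^ α / (((n.factorial : ℝ)) ^ β + x ^ β) ^ s

lemma mfaT_pos (α β s x : ℝ) (hx : 0 < x) (n : ℕ) : 0 < mfaT α β s x n := by
  have : (0:ℝ) < n.factorial := by exact_mod_cast n.factorial_pos
  unfold mfaT
  positivity

lemma mfaT_le1 (α β s x : ℝ) (hx : 0 < x) (hs : 0 < s) (n : ℕ) :
    mfaT α β s x n ≤ (n.factorial : ℝ) ^ α / x ^ (β * s) := by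
  have : (0:ℝ) < n.factorial := by exact_mod_cast n.factorial_pos
  unfold mfaT
  rw [rpow_mul hx.le]
  gcongr
  have : 0 < (n.factorial : ℝ) ^ β := by positivity
  linarith

lemma mfaT_le2 (α β s γ x : ℝ) (hx : 0 < x) (hs : 0 < s) (hγ : β * s = α + γ) (n : ℕ) :
    mfaT α β s x n ≤ (n.factorial : ℝ) ^ (-γ) := by
  have h0 : (0:ℝ) < n.factorial := by exact_mod_cast n.factorial_pos
  have : (n.factorial : ℝ) ^ (-γ) = (n.factorial : ℝ) ^ α / ((n.factorial : ℝ) ^ β) ^ s := by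
    rw [← rpow_mul h0.le, ← rpow_sub h0, hγ]; congr 1; ring
  rw [this]
  unfold mfaT
  gcongr
  have : 0 < x ^ β := by positivity
  linarith

lemma mfaT_ge1 (α β s x : ℝ) (hx : 0 < x) (hβ : 0 < β) (hs : 0 < s) (n : ℕ)
    (hn : (n.factorial : ℝ) ≤ x) :
    (n.factorial : ℝ) ^ α / x ^ (β * s) / 2 ^ s ≤ mfaT α β s x n := by
  have h0 : (0:ℝ) < n.factorial := by exact_mod_cast n.factorial_pos
  unfold mfaT
  rw [rpow_mul hx.le, div_div, ← mul_rpow (by positivity) (by positivity)]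
  gcongr
  have : (n.factorial : ℝ) ^ β ≤ x ^ β := by gcongr
  linarith

lemma mfaT_ge2 (α β s γ x : ℝ) (hx : 0 < x) (hβ : 0 < β) (hs : 0 < s) (hγ : β * s = α + γ) (n : ℕ)
    (hn : x ≤ (n.factorial : ℝ)) :
    (n.factorial : ℝ) ^ (-γ) / 2 ^ s ≤ mfaT α β s x n := by
  have h0 : (0:ℝ) < n.factorial := by exact_mod_cast n.factorial_pos
  have : (n.factorial : ℝ) ^ (-γ) = (n.factorial : ℝ) ^ α / ((n.factorial : ℝ) ^ β) ^ s := by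
    rw [← rpow_mul h0.le, ← rpow_sub h0, hγ]; congr 1; ring
  rw [this]
  unfold mfaT
  rw [div_div, ← mul_rpow (by positivity) (by positivity)]
  gcongr
  have : x ^ β ≤ (n.factorial : ℝ) ^ β := by gcongr
  linarith

lemma mfa_tail (α β s γ x : ℝ) (hx : 0 < x) (hs : 0 < s) (hγ0 : 0 < γ)
    (hγ : β * s = α + γ) (k j : ℕ) :
    mfaT α β s x (j + (k+1)) ≤ ((k+1).factorial : ℝ) ^ (-γ) * ((2:ℝ) ^ (-γ)) ^ j := by
  refine (mfaT_le2 α β s γ x hx hs hγ _).trans ?_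
  have h := mfa_fact2 k j
  have h' : ((k+1).factorial : ℝ) * 2 ^ j ≤ ((j + (k+1)).factorial : ℝ) := by
    rw [add_comm j]; exact_mod_cast h
  have h0 : (0:ℝ) < (k+1).factorial := by exact_mod_cast (k+1).factorial_pos
  have e : ((2:ℝ) ^ (-γ)) ^ j = ((2:ℝ) ^ j) ^ (-γ) := by
    rw [← rpow_natCast, ← rpow_mul (by norm_num), ← rpow_natCast 2 j, ← rpow_mul (by norm_num)]
    congr 1; ring
  rw [e, ← mul_rpow h0.le (by positivity)]
  exact rpow_le_rpow_of_nonpos (by positivity) h' (by linarith)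

lemma mfa_head (α β s x : ℝ) (hx : 0 < x) (hs : 0 < s) (hα : 0 < α) (k n : ℕ) (hn : n ≤ k) :
    mfaT α β s x n ≤ (2:ℝ) ^ α * ((k.factorial : ℝ) ^ α / x ^ (β * s)) * ((2:ℝ) ^ (-α)) ^ (k - n) := by
  refine (mfaT_le1 α β s x hx hs _).trans ?_
  obtain ⟨j, rfl⟩ := Nat.exists_eq_add_of_le hn
  have h' : (n.factorial : ℝ) * 2 ^ j ≤ 2 * ((n + j).factorial : ℝ) := by exact_mod_cast mfa_fact1 n j
  have h0 : (0:ℝ) < n.factorial := by exact_mod_cast n.factorial_pos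
  have e : ((2:ℝ) ^ (-α)) ^ j = (((2:ℝ) ^ j) ^ α)⁻¹ := by
    rw [← rpow_natCast, ← rpow_mul (by norm_num), ← rpow_natCast 2 j, ← rpow_mul (by norm_num),
      ← rpow_neg (by norm_num)]
    congr 1; ring
  have h2 : (n.factorial : ℝ) ^ α * (2 ^ j) ^ α ≤ 2 ^ α * ((n + j).factorial : ℝ) ^ α := by
    rw [← mul_rpow (by positivity) (by positivity), ← mul_rpow (by positivity) (by positivity)]
    gcongr
  rw [Nat.add_sub_cancel_left, e, ← div_eq_mul_inv, ← mul_div_assoc, div_div, mul_comm (x ^ (β * s)),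
    ← div_div]
  gcongr
  rwa [le_div_iff₀ (by positivity)]

lemma mfa_sum (α β s γ x : ℝ) (hx : 0 < x) (hs : 0 < s) (hα : 0 < α) (hγ0 : 0 < γ)
    (hγ : β * s = α + γ) (k : ℕ) :
    Summable (mfaT α β s x) ∧
    ∑' n, mfaT α β s x n ≤ ((2:ℝ) ^ α * (1 - (2:ℝ) ^ (-α))⁻¹) * ((k.factorial : ℝ) ^ α / x ^ (β * s))
      + (1 - (2:ℝ) ^ (-γ))⁻¹ * ((k+1).factorial : ℝ) ^ (-γ) := by
  have hp : (2:ℝ) ^ (-α) < 1 := rpow_lt_one_of_one_lt_of_neg (by norm_num) (by linarith)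
  have hq : (2:ℝ) ^ (-γ) < 1 := rpow_lt_one_of_one_lt_of_neg (by norm_num) (by linarith)
  have hp0 : 0 < (2:ℝ) ^ (-α) := by positivity
  have hq0 : 0 < (2:ℝ) ^ (-γ) := by positivity
  have hg := summable_geometric_of_lt_one hq0.le hq
  have hg2 := hg.mul_left (((k+1).factorial : ℝ) ^ (-γ))
  have hsh : Summable (fun j => mfaT α β s x (j + (k+1))) :=
    Summable.of_nonneg_of_le (fun j => (mfaT_pos α β s x hx _).le)
      (mfa_tail α β s γ x hx hs hγ0 hγ k) hg2
  have hS : Summable (mfaT α β s x) := (summable_nat_add_iff (k+1)).1 hsh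
  refine ⟨hS, ?_⟩
  rw [← hS.sum_add_tsum_nat_add (k+1)]
  apply add_le_add
  · have h1 : ∑ n ∈ Finset.range (k+1), mfaT α β s x n ≤ ∑ n ∈ Finset.range (k+1),
        (2:ℝ) ^ α * ((k.factorial : ℝ) ^ α / x ^ (β * s)) * ((2:ℝ) ^ (-α)) ^ (k - n) := by
      apply Finset.sum_le_sum
      intro n hn
      exact mfa_head α β s x hx hs hα k n (by simp at hn; omega)
    refine h1.trans ?_
    rw [← Finset.mul_sum]
    have h2 : ∑ n ∈ Finset.range (k+1), ((2:ℝ) ^ (-α)) ^ (k - n)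
        = ∑ n ∈ Finset.range (k+1), ((2:ℝ) ^ (-α)) ^ n := by
      rw [← Finset.sum_range_reflect]
      apply Finset.sum_congr rfl
      intro n hn
      congr 1
      simp at hn; omega
    have h3 : ∑ n ∈ Finset.range (k+1), ((2:ℝ) ^ (-α)) ^ n ≤ (1 - (2:ℝ) ^ (-α))⁻¹ := by
      rw [← tsum_geometric_of_lt_one hp0.le hp]
      exact (summable_geometric_of_lt_one hp0.le hp).sum_le_tsum _ (fun i _ => by positivity)
    rw [h2, mul_right_comm]
    gcongr
  · refine (hsh.tsum_le_tsum (mfa_tail α β s γ x hx hs hγ0 hγ k) hg2).trans ?_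
    rw [tsum_mul_left, tsum_geometric_of_lt_one hq0.le hq, mul_comm]

/-- bounds for the two neighbouring factorials -/
lemma mfa_gamma (g x : ℝ) (k : ℕ) (f : ℝ) (hk : 1 ≤ k) (hf0 : 0 < f) (hf1 : f < 1)
    (hg : g = k + 1 + f) (hx : Gamma g = x) :
    0 < x ∧ (k.factorial : ℝ) ≤ x ∧ x ≤ ((k+1).factorial : ℝ) ∧
    |log (k.factorial : ℝ) - log x + f * log g| ≤ 2 ∧
    |log ((k+1).factorial : ℝ) - log x - (1 - f) * log g| ≤ 2 := by
  have hk' : (1:ℝ) ≤ k := by exact_mod_cast hk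
  have hx0 : 0 < x := by rw [← hx]; exact Gamma_pos_of_pos (by linarith)
  have feq : ∀ {y : ℝ}, 0 < y → (log ∘ Gamma) (y + 1) = (log ∘ Gamma) y + log y := by
    intro y hy
    simp only [Function.comp]
    rw [Gamma_add_one hy.ne', log_mul hy.ne' (Gamma_pos_of_pos hy).ne', add_comm]
  have u := BohrMollerup.f_add_nat_le (n := k+1) convexOn_log_Gamma feq (by omega) hf0 hf1.le
  have l := BohrMollerup.f_add_nat_ge (n := k+1) convexOn_log_Gamma feq (by omega) hf0
  have eg : ((k+1 : ℕ) : ℝ) + f = g := by push_cast; linarith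
  rw [eg] at u l
  simp only [Function.comp, hx] at u l
  have eA : Gamma ((k+1 : ℕ) : ℝ) = k.factorial := by
    push_cast; exact Gamma_nat_eq_factorial k
  rw [eA] at u l
  have hA : (0:ℝ) < k.factorial := by exact_mod_cast k.factorial_pos
  have hB : log ((k+1).factorial : ℝ) = log (k.factorial : ℝ) + log (k+1) := by
    rw [Nat.factorial_succ]; push_cast; rw [log_mul (by positivity) hA.ne', add_comm]
  push_cast at u l
  rw [add_sub_cancel_right] at l
  have hB0 : (0:ℝ) < (k+1).factorial := by exact_mod_cast (k+1).factorial_pos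
  have hlk : 0 ≤ log (k:ℝ) := log_nonneg hk'
  have hlk1 : 0 ≤ log ((k:ℝ)+1) := log_nonneg (by linarith)
  have e1 : log ((k:ℝ)+1) ≤ log g := log_le_log (by positivity) (by linarith)
  have e2 : log g ≤ log k + log 3 := by
    rw [← log_mul (by positivity) (by norm_num)]
    exact log_le_log (by linarith) (by linarith)
  have e3 : log (k:ℝ) ≤ log (k+1) := log_le_log (by positivity) (by linarith)
  have e4 : log (3:ℝ) ≤ 2 := by have := log_le_sub_one_of_pos (x := 3) (by norm_num); linarith
  refine ⟨hx0, ?_, ?_, ?_, ?_⟩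
  · rw [← log_le_log_iff hA hx0]
    nlinarith
  · rw [← log_le_log_iff hx0 hB0, hB]
    nlinarith
  · rw [abs_le]; constructor <;> nlinarith
  · rw [hB, abs_le]; constructor <;> nlinarith

/-- asymptotics in terms of `log g` -/
lemma mfa_main (α β s γ : ℝ) (hβ : 0 < β) (hs : 0 < s) (hα : 0 < α) (hγ0 : 0 < γ)
    (hγ : β * s = α + γ) : ∃ C > (0:ℝ), ∀ (g x : ℝ) (k : ℕ) (f : ℝ), 1 ≤ k → 0 < f → f < 1 →
    g = k + 1 + f → Gamma g = x → 
    |log (∑' n, mfaT α β s x n) + γ * log x + min (α * f) (γ * (1 - f)) * log g| ≤ C := by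
  set K1 := (2:ℝ) ^ α * (1 - (2:ℝ) ^ (-α))⁻¹ with hK1
  set K2 := (1 - (2:ℝ) ^ (-γ))⁻¹ with hK2
  have hp : (2:ℝ) ^ (-α) < 1 := rpow_lt_one_of_one_lt_of_neg (by norm_num) (by linarith)
  have hq : (2:ℝ) ^ (-γ) < 1 := rpow_lt_one_of_one_lt_of_neg (by norm_num) (by linarith)
  have hK1p : 0 < K1 := mul_pos (by positivity) (inv_pos.2 (by linarith))
  have hK2p : 0 < K2 := inv_pos.2 (by linarith)
  refine ⟨|log (K1 + K2)| + 2 * α + 2 * γ + s * log 2, ?_, ?_⟩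
  · have := abs_nonneg (log (K1 + K2))
    have := log_pos (x := 2) (by norm_num)
    positivity
  intro g x k f hk hf0 hf1 hg hx
  obtain ⟨hx0, hA, hB, lA, lB⟩ := mfa_gamma g x k f hk hf0 hf1 hg hx
  obtain ⟨hS, hle⟩ := mfa_sum α β s γ x hx0 hs hα hγ0 hγ k
  rw [← hK1, ← hK2] at hle
  have hA0 : (0:ℝ) < k.factorial := by exact_mod_cast k.factorial_pos
  have hB0 : (0:ℝ) < (k+1).factorial := by exact_mod_cast (k+1).factorial_pos
  set P := (k.factorial : ℝ) ^ α / x ^ (β * s) with hP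
  set Q := ((k+1).factorial : ℝ) ^ (-γ) with hQ
  have hP0 : 0 < P := by positivity
  have hQ0 : 0 < Q := by positivity
  have hlP : log P = α * log (k.factorial : ℝ) - (α + γ) * log x := by
    rw [hP, log_div (by positivity) (by positivity), log_rpow hA0, log_rpow hx0, hγ]
  have hlQ : log Q = -γ * log ((k+1).factorial : ℝ) := by rw [hQ, log_rpow hB0]
  have g1 : P / 2 ^ s ≤ ∑' n, mfaT α β s x n :=
    (mfaT_ge1 α β s x hx0 hβ hs k hA).trans
      (hS.le_tsum k (fun j _ => (mfaT_pos α β s x hx0 j).le))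
  have g2 : Q / 2 ^ s ≤ ∑' n, mfaT α β s x n :=
    (mfaT_ge2 α β s γ x hx0 hβ hs hγ (k+1) hB).trans
      (hS.le_tsum (k+1) (fun j _ => (mfaT_pos α β s x hx0 j).le))
  set S := ∑' n, mfaT α β s x n with hSd
  have hS0 : 0 < S := lt_of_lt_of_le (by positivity) g1
  have g1' : log P - s * log 2 ≤ log S := by
    rw [← log_rpow (by norm_num), ← log_div (by positivity) (by positivity)]
    exact log_le_log (by positivity) g1
  have g2' : log Q - s * log 2 ≤ log S := by
    rw [← log_rpow (by norm_num), ← log_div (by positivity) (by positivity)]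
    exact log_le_log (by positivity) g2
  have hu : log S ≤ log (K1 + K2) + max (log P) (log Q) := by
    rcases le_total P Q with h | h
    · have : log Q ≤ max (log P) (log Q) := le_max_right _ _
      have : log S ≤ log ((K1 + K2) * Q) := log_le_log hS0 (hle.trans (by nlinarith))
      rw [log_mul (by positivity) (by positivity)] at this
      linarith
    · have : log P ≤ max (log P) (log Q) := le_max_left _ _
      have : log S ≤ log ((K1 + K2) * P) := log_le_log hS0 (hle.trans (by nlinarith))
      rw [log_mul (by positivity) (by positivity)] at this
      linarith
  have hL : 0 ≤ log g := log_nonneg (by linarith [show (1:ℝ) ≤ k by exact_mod_cast hk])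
  have hab := le_abs_self (log (K1 + K2))
  have hab0 := abs_nonneg (log (K1 + K2))
  have hs2 : 0 ≤ s * log 2 := mul_nonneg hs.le (log_nonneg (by norm_num))
  obtain ⟨a1, a2⟩ := abs_le.1 lA
  obtain ⟨b1, b2⟩ := abs_le.1 lB
  have pe : |log P + γ * log x + (α * f) * log g| ≤ 2 * α := by
    rw [hlP, show α * log (k.factorial : ℝ) - (α + γ) * log x + γ * log x + (α * f) * log g =
      α * (log (k.factorial : ℝ) - log x + f * log g) by ring, abs_mul, abs_of_pos hα]
    linarith [mul_le_mul_of_nonneg_left lA hα.le]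
  have qe : |log Q + γ * log x + (γ * (1 - f)) * log g| ≤ 2 * γ := by
    rw [hlQ, show -γ * log ((k+1).factorial : ℝ) + γ * log x + (γ * (1 - f)) * log g =
      -γ * (log ((k+1).factorial : ℝ) - log x - (1 - f) * log g) by ring, abs_mul, abs_neg,
      abs_of_pos hγ0]
    linarith [mul_le_mul_of_nonneg_left lB hγ0.le]
  obtain ⟨p1, p2⟩ := abs_le.1 pe
  obtain ⟨q1, q2⟩ := abs_le.1 qe
  have m1 : min (α * f) (γ * (1 - f)) * log g ≤ (α * f) * log g :=
    mul_le_mul_of_nonneg_right (min_le_left _ _) hL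
  have m2 : min (α * f) (γ * (1 - f)) * log g ≤ (γ * (1 - f)) * log g :=
    mul_le_mul_of_nonneg_right (min_le_right _ _) hL
  rw [abs_le]; constructor
  · rcases min_choice (α * f) (γ * (1 - f)) with h | h <;> rw [h] <;> linarith
  · rcases max_choice (log P) (log Q) with h | h <;> rw [h] at hu <;> linarith

/-- size of `log g` -/
lemma mfa_size (g x : ℝ) (k : ℕ) (f : ℝ) (hk : 1 ≤ k) (hf0 : 0 < f) (hf1 : f < 1)
    (hg : g = k + 1 + f) (hx : Gamma g = x) (hx3 : 3 ≤ log x) :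
    log g ≤ 2 + log (log x) ∧ log (log x) ≤ log g + log (2 + log (log x)) := by
  obtain ⟨hx0, hA, hB, -, -⟩ := mfa_gamma g x k f hk hf0 hf1 hg hx
  have hk' : (1:ℝ) ≤ k := by exact_mod_cast hk
  have hA0 : (0:ℝ) < k.factorial := by exact_mod_cast k.factorial_pos
  have hB0 : (0:ℝ) < (k+1).factorial := by exact_mod_cast (k+1).factorial_pos
  have lA := log_le_log hA0 hA
  have lB := log_le_log hx0 hB
  have c1 : (k:ℝ) * log 2 ≤ log 2 + log (k.factorial : ℝ) := by
    have h : (2:ℝ)^k ≤ 2 * (k.factorial : ℝ) := by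
      have := mfa_fact1 0 k
      simp at this
      exact_mod_cast this
    have := log_le_log (by positivity) h
    rwa [log_pow, log_mul (by norm_num) hA0.ne'] at this
  have hl2 := log_two_gt_d9
  have hl2' := log_two_lt_d9
  have g0 : 2 < g := by linarith
  have c2 : g ≤ 3 * log x := by nlinarith
  have hlg : 0 < log g := log_pos (by linarith)
  have d1 : log g ≤ 2 + log (log x) := by
    have := log_le_log (by linarith) c2
    rw [log_mul (by norm_num) (by linarith)] at this
    have := log_le_sub_one_of_pos (x := 3) (by norm_num)
    linarith
  refine ⟨d1, ?_⟩
  have c3 : log x ≤ g * log g := by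
    have h : ((k+1).factorial : ℝ) ≤ ((k:ℝ)+1) ^ (k+1) := by
      exact_mod_cast Nat.factorial_le_pow (k+1)
    have := log_le_log hB0 h
    rw [log_pow] at this
    push_cast at this
    have e : log ((k:ℝ)+1) ≤ log g := log_le_log (by positivity) (by linarith)
    have : ((k:ℝ)+1) * log (k+1) ≤ g * log g := by
      apply mul_le_mul (by linarith) e (log_nonneg (by linarith)) (by linarith)
    linarith
  have := log_le_log (by linarith) c3
  rw [log_mul (by linarith) hlg.ne'] at this
  have := log_le_log hlg d1
  linarith

theorem mathieu_factorial_asymptotics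
    (α β μ : ℝ) (hα : 0 < α) (hβ : 0 < β) (hμ : 0 ≤ μ)
    (hconv : α - β * (μ + 1) < 0)
    (d₁ d₂ : ℝ) (hd₁ : 0 < d₁) (hd₁₂ : d₁ < d₂) (hd₂ : d₂ < 1)
    (G u₀ : ℝ → ℝ)
    (hG : ∀ᶠ x in Filter.atTop, 2 ≤ G x ∧ Real.Gamma (G x) = x)
    (hu₀ : ∀ᶠ x in Filter.atTop, Real.exp 1 ≤ u₀ x ∧
      u₀ x * Real.log (u₀ x) - u₀ x = Real.log (x / Real.sqrt (2 * Real.pi)))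
    (hinv : ∃ C₀ > (0 : ℝ), ∃ x₀ > (0 : ℝ), ∀ x ≥ x₀,
      |G x - u₀ x - 1 / 2| ≤ C₀ / Real.log (x / Real.sqrt (2 * Real.pi))) :
    ∃ C > (0 : ℝ), ∃ r₀ : ℝ, ∀ r ≥ r₀,
      d₁ ≤ Int.fract (G (r ^ (2 / β))) → Int.fract (G (r ^ (2 / β))) ≤ d₂ →
      |Real.log (∑' n : ℕ,
          ((n.factorial : ℝ)) ^ α / (((n.factorial : ℝ)) ^ β + r ^ 2) ^ (μ + 1))
        + 2 * (μ + 1 - α / β) * Real.log r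
        + min (α * Int.fract (G (r ^ (2 / β))))
            ((β * (μ + 1) - α) * (1 - Int.fract (G (r ^ (2 / β)))))
          * Real.log (Real.log r)|
        ≤ C * Real.log (Real.log (Real.log r)) := by
  set γ := β * (μ + 1) - α with hγd
  have hγ0 : 0 < γ := by linarith
  have hγ : β * (μ + 1) = α + γ := by rw [hγd]; ring
  obtain ⟨C1, hC1, hmain⟩ := mfa_main α β (μ + 1) γ hβ (by linarith) hα hγ0 hγ
  have hb : 0 < 2 / β := by positivity
  set b := log (2 / β) with hbd
  have t1 : Tendsto (fun r : ℝ => r ^ (2 / β)) atTop atTop := tendsto_rpow_atTop hb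
  have t2 : Tendsto (fun r : ℝ => log (r ^ (2 / β))) atTop atTop := tendsto_log_atTop.comp t1
  have t3 : Tendsto (fun r : ℝ => log (log r)) atTop atTop :=
    tendsto_log_atTop.comp tendsto_log_atTop
  have t4 : Tendsto (fun r : ℝ => log (log (log r))) atTop atTop := tendsto_log_atTop.comp t3
  have ev : ∀ᶠ r : ℝ in atTop, (2 ≤ G (r ^ (2 / β)) ∧ Gamma (G (r ^ (2 / β))) = r ^ (2 / β)) ∧
      3 ≤ log (r ^ (2 / β)) ∧ 2 + |b| ≤ log (log r) ∧ 1 ≤ log (log (log r)) ∧ 1 < r := by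
    filter_upwards [t1.eventually hG, t2.eventually_ge_atTop 3, t3.eventually_ge_atTop (2 + |b|),
      t4.eventually_ge_atTop 1, eventually_gt_atTop 1] with r h1 h2 h3 h4 h5
    exact ⟨h1, h2, h3, h4, h5⟩
  obtain ⟨r₀, hr₀⟩ := eventually_atTop.1 ev
  refine ⟨C1 + (α + γ) * (4 + |b|), by positivity, r₀, ?_⟩
  intro r hr hf1 hf2
  obtain ⟨⟨hg2, hgx⟩, hx3, hy, hz, hr1⟩ := hr₀ r hr
  set x := r ^ (2 / β) with hxd
  set g := G x with hgd
  set f := Int.fract g with hfd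
  have hr0 : 0 < r := by linarith
  have hx0 : 0 < x := by positivity
  have hxβ : x ^ β = r ^ 2 := by
    rw [hxd, ← rpow_mul hr0.le, div_mul_cancel₀ _ hβ.ne']; norm_num
  have hlx : log x = 2 / β * log r := log_rpow hr0 _
  have hfl : (2:ℤ) ≤ ⌊g⌋ := Int.le_floor.2 (by exact_mod_cast hg2)
  obtain ⟨k, hk⟩ : ∃ k : ℕ, ⌊g⌋ = k + 1 := ⟨(⌊g⌋ - 1).toNat, by omega⟩
  have hk1 : 1 ≤ k := by omega
  have hgk : g = k + 1 + f := by
    have := Int.floor_add_fract g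
    rw [hk] at this
    push_cast at this
    exact this.symm
  have hf0 : 0 < f := by linarith
  have hf1' : f < 1 := by linarith
  have M := hmain g x k f hk1 hf0 hf1' hgk hgx
  obtain ⟨s1, s2⟩ := mfa_size g x k f hk1 hf0 hf1' hgk hgx hx3
  have hlr : 0 < log r := log_pos hr1
  have hllx : log (log x) = b + log (log r) := by rw [hlx, log_mul hb.ne' hlr.ne']
  have hmS : ∑' n : ℕ, ((n.factorial : ℝ)) ^ α / (((n.factorial : ℝ)) ^ β + r ^ 2) ^ (μ + 1)
      = ∑' n, mfaT α β (μ + 1) x n := by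
    simp only [mfaT, hxβ]
  have hγl : γ * log x = 2 * (μ + 1 - α / β) * log r := by
    rw [hlx, hγd]; field_simp
  rw [hmS, ← hγl]
  set m := min (α * f) (γ * (1 - f)) with hm
  have hm0 : 0 ≤ m := le_min (by positivity) (mul_nonneg hγ0.le (by linarith))
  have hm1 : m ≤ α + γ := (min_le_left _ _).trans (by nlinarith)
  have hbb := abs_le.1 (le_refl |b|)
  have hy2 : log (2 + log (log x)) ≤ 1 + log (log (log r)) := by
    have h : log (2 + log (log x)) ≤ log (2 * log (log r)) := by
      apply log_le_log
      · rw [hllx]; linarith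
      · rw [hllx]; linarith
    rw [log_mul (by norm_num) (by linarith [abs_nonneg b])] at h
    linarith [log_two_lt_d9]
  have hL : |log (log r) - log g| ≤ (4 + |b|) * log (log (log r)) := by
    have := abs_nonneg b
    rw [hllx] at s1 s2
    rw [hllx] at hy2
    have hbz := le_mul_of_one_le_right this hz
    rw [add_mul, abs_le]; constructor <;> linarith
  have e : log (∑' n, mfaT α β (μ + 1) x n) + γ * log x + m * log (log r)
      = (log (∑' n, mfaT α β (μ + 1) x n) + γ * log x + m * log g)
        + m * (log (log r) - log g) := by ring
  rw [e]
  refine (abs_add_le _ _).trans ?_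
  rw [abs_mul, abs_of_nonneg hm0]
  have : m * |log (log r) - log g| ≤ (α + γ) * ((4 + |b|) * log (log (log r))) :=
    mul_le_mul hm1 hL (abs_nonneg _) (by linarith)
  have := le_mul_of_one_le_right hC1.le hz
  linarith
end

section
/- Let η, θ ∈ ℝ. There exists a function F analytic (complex differentiable) on ℂ \ (−∞, 1] such that for all complex s with Re(s) > 1, F(s) = Σ_{n=2}^∞ (log n)^η / (n (log n)^θ)^s, where the series converges absolutely for Re(s) > 1. -/
open Filter Complex

def ZOm : Set ℂ := {s : ℂ | ¬(s.im = 0 ∧ s.re ≤ 1)}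

lemma ZOm_eq : ZOm = (fun s : ℂ => s - 1) ⁻¹' slitPlane := by
  ext s
  simp only [ZOm, Set.mem_ofPred_eq, Set.mem_preimage, mem_slitPlane_iff, sub_re, one_re, sub_im,
    one_im, sub_zero, not_and_or, not_le, sub_pos]
  tauto

lemma ZOm_open : IsOpen ZOm := by
  rw [ZOm_eq]
  exact isOpen_slitPlane.preimage (by fun_prop)

lemma ZOm_preconnected : IsPreconnected ZOm := by
  have h : ZOm = (fun s : ℂ => s + 1) '' slitPlane := by
    rw [ZOm_eq]
    ext s
    simp only [Set.mem_preimage, Set.mem_image]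
    constructor
    · intro h
      exact ⟨s - 1, h, by ring⟩
    · rintro ⟨x, hx, rfl⟩
      simpa using hx
  rw [h]
  refine IsPreconnected.image ?_ _ (by fun_prop)
  exact (starConvex_one_slitPlane.isPathConnected one_mem_slitPlane).isConnected.isPreconnected

lemma ZOm_add {s : ℂ} (hs : s ∈ ZOm) {t : ℝ} (ht : 0 ≤ t) : s + t ∈ ZOm := by
  simp only [ZOm, Set.mem_ofPred_eq, not_and, add_im, ofReal_im, add_zero, add_re, ofReal_re] at *
  intro h
  have := hs h
  linarith

lemma ZOm_of_re {s : ℂ} (hs : 1 < s.re) : s ∈ ZOm := by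
  simp only [ZOm, Set.mem_ofPred_eq, not_and]
  intro _
  linarith

lemma log_ge_half (n : ℕ) : 1 / 2 ≤ Real.log ((n : ℝ) + 2) := by
  have h1 : Real.log 2 ≤ Real.log ((n : ℝ) + 2) :=
    Real.log_le_log (by norm_num) (by linarith [Nat.cast_nonneg (α := ℝ) n])
  linarith [Real.log_two_gt_d9]

lemma log_pos' (n : ℕ) : 0 < Real.log ((n : ℝ) + 2) := by linarith [log_ge_half n]

/-- basic summability -/
lemma summable_base (c σ : ℝ) (hσ : 1 < σ) :
    Summable (fun n : ℕ => (Real.log ((n : ℝ) + 2)) ^ c * Real.exp (-σ * Real.log ((n : ℝ) + 2))) := by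
  have key : Summable (fun n : ℕ => (Real.log (n : ℝ)) ^ c * (n : ℝ) ^ (-σ)) := by
    refine summable_of_isBigO_nat (g := fun n : ℕ => (n : ℝ) ^ (-((1 + σ) / 2))) ?_ ?_
    · rw [Real.summable_nat_rpow]; linarith
    · have h := (isLittleO_log_rpow_rpow_atTop c (show 0 < (σ - 1) / 2 by linarith)).isBigO
      have h2 := h.mul (Asymptotics.isBigO_refl (fun x : ℝ => x ^ (-σ)) atTop)
      have h3 := h2.comp_tendsto tendsto_natCast_atTop_atTop
      refine h3.congr' (by rfl) ?_
      filter_upwards [eventually_gt_atTop 0] with n hn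
      have : (0 : ℝ) < n := by exact_mod_cast hn
      simp only [Function.comp]
      rw [← Real.rpow_add this]
      congr 1; ring
  have h2 := (summable_nat_add_iff 2).2 key
  refine h2.congr fun n => ?_
  push_cast
  rw [Real.rpow_def_of_pos (by positivity : (0 : ℝ) < n + 2) (-σ)]
  congr 2; ring

lemma norm_term (k : ℕ) (z : ℂ) (n : ℕ) :
    ‖((Real.log ((n : ℝ) + 2) : ℂ)) ^ k * Complex.exp (-z * (Real.log ((n : ℝ) + 2) : ℝ))‖
      = (Real.log ((n : ℝ) + 2)) ^ (k : ℝ) * Real.exp (-z.re * Real.log ((n : ℝ) + 2)) := by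
  rw [norm_mul, norm_pow, Complex.norm_real, Complex.norm_exp, Real.norm_of_nonneg (log_pos' n).le]
  simp [Real.rpow_natCast]

/-- Derivatives of `ζ - 1`. -/
lemma exists_G (k : ℕ) : ∃ G : ℂ → ℂ, DifferentiableOn ℂ G ZOm ∧
    ∀ z : ℂ, 1 < z.re → HasSum (fun n : ℕ => ((Real.log ((n : ℝ) + 2) : ℂ)) ^ k *
      Complex.exp (-z * (Real.log ((n : ℝ) + 2) : ℝ))) (G z) := by
  induction k with
  | zero =>
    refine ⟨fun z => riemannZeta z - 1, ?_, ?_⟩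
    · intro s hs
      have : s ≠ 1 := by
        rintro rfl
        simp [ZOm] at hs
      exact ((differentiableAt_riemannZeta this).sub_const 1).differentiableWithinAt
    · intro z hz
      have hsum : Summable (fun n : ℕ => 1 / ((n : ℂ)) ^ z) :=
        Complex.summable_one_div_nat_cpow.2 hz
      have h := hsum.hasSum
      rw [← zeta_eq_tsum_one_div_nat_cpow hz] at h
      have h2 := (hasSum_nat_add_iff' 2).2 h
      have hz0 : z ≠ 0 := Complex.ne_zero_of_one_lt_re hz
      simp only [Finset.sum_range_succ, Finset.sum_range_zero, Nat.cast_zero, Nat.cast_one,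
        Complex.zero_cpow hz0, Complex.one_cpow, div_zero, zero_add, div_one] at h2
      refine h2.congr_fun ?_ |> fun h => h
      intro n
      have hn : ((n + 2 : ℕ) : ℂ) ≠ 0 := by exact_mod_cast (Nat.succ_ne_zero (n + 1))
      rw [Complex.cpow_def_of_ne_zero hn, one_div, ← Complex.exp_neg, Complex.ofReal_log (by positivity)]
      push_cast
      simp only [pow_zero, one_mul]
      congr 1; ring
  | succ k ih =>
    obtain ⟨G, hG, hs⟩ := ih
    refine ⟨fun z => -deriv G z, (hG.deriv ZOm_open).neg, ?_⟩
    intro z hz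
    obtain ⟨σ, h1, h2⟩ := exists_between hz
    have hU : IsOpen {w : ℂ | σ < w.re} := isOpen_lt continuous_const continuous_re
    have h := hasSum_deriv_of_summable_norm (F := fun (n : ℕ) (z : ℂ) =>
      ((Real.log ((n : ℝ) + 2) : ℂ)) ^ k * Complex.exp (-z * (Real.log ((n : ℝ) + 2) : ℝ)))
      (U := {w : ℂ | σ < w.re}) (z := z) (summable_base k σ h1) (fun i => by fun_prop) hU
      (fun i w hw => by
        rw [norm_term]
        have := log_pos' i
        have hw : σ < w.re := hw
        gcongr) h2
    have e : deriv (fun w : ℂ => ∑' n : ℕ, ((Real.log ((n : ℝ) + 2) : ℂ)) ^ k *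
        Complex.exp (-w * (Real.log ((n : ℝ) + 2) : ℝ))) z = deriv G z := by
      apply Filter.EventuallyEq.deriv_eq
      filter_upwards [hU.mem_nhds h2] with w hw
      exact (hs w (h1.trans hw)).tsum_eq
    rw [e] at h
    refine h.neg.congr_fun ?_ |> fun h => h
    intro n
    have hd : HasDerivAt (fun z : ℂ => ((Real.log ((n : ℝ) + 2) : ℂ)) ^ k *
        Complex.exp (-z * (Real.log ((n : ℝ) + 2) : ℝ)))
        (((Real.log ((n : ℝ) + 2) : ℂ)) ^ k * (Complex.exp (-z * (Real.log ((n : ℝ) + 2) : ℝ)) *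
          (-1 * (Real.log ((n : ℝ) + 2) : ℝ)))) z :=
      ((((hasDerivAt_id z).neg).mul_const _).cexp).const_mul _
    rw [hd.deriv]
    ring

lemma G_decay (k : ℕ) (G : ℂ → ℂ) (hG : DifferentiableOn ℂ G ZOm)
    (hs : ∀ z : ℂ, 1 < z.re → HasSum (fun n : ℕ => ((Real.log ((n : ℝ) + 2) : ℂ)) ^ k *
      Complex.exp (-z * (Real.log ((n : ℝ) + 2) : ℝ))) (G z))
    (K : Set ℂ) (hK : IsCompact K) (hKO : K ⊆ ZOm) :
    ∃ C : ℝ, 0 ≤ C ∧ ∀ s ∈ K, ∀ t : ℝ, 0 ≤ t → ‖G (s + t)‖ ≤ C * Real.exp (-(1 / 2) * t) := by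
  obtain ⟨M, hM⟩ := hK.isBounded.exists_norm_le
  set T : ℝ := M + 2
  have hcomp : IsCompact ((fun p : ℂ × ℝ => p.1 + (p.2 : ℂ)) '' (K ×ˢ Set.Icc 0 T)) :=
    (hK.prod isCompact_Icc).image (by fun_prop)
  obtain ⟨C1, hC1⟩ := hcomp.exists_bound_of_continuousOn (f := G) (hG.continuousOn.mono (by
    rintro _ ⟨⟨s, t⟩, ⟨h1, h2⟩, rfl⟩
    exact ZOm_add (hKO h1) h2.1))
  set A : ℝ := ∑' n : ℕ, (Real.log ((n : ℝ) + 2)) ^ (k : ℝ) * Real.exp (-2 * Real.log ((n : ℝ) + 2))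
  have hA : 0 ≤ A := tsum_nonneg fun n => by have := log_pos' n; positivity
  have hsA := summable_base k 2 (by norm_num)
  refine ⟨(|C1| + A) * Real.exp (1 / 2 * T), by positivity, fun s hsK t ht => ?_⟩
  rw [mul_assoc, ← Real.exp_add]
  rcases le_or_gt t T with h | h
  · have h1 := hC1 (s + t) ⟨(s, t), ⟨hsK, ht, h⟩, rfl⟩
    have h2 : 1 ≤ Real.exp (1 / 2 * T + -(1 / 2) * t) := Real.one_le_exp (by linarith)
    calc ‖G (s + t)‖ ≤ (|C1| + A) * 1 := by linarith [le_abs_self C1]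
      _ ≤ _ := by gcongr
  · have hre : 2 ≤ (s + t).re := by
      have := (abs_le.1 ((abs_re_le_norm s).trans (hM s hsK))).1
      simp only [add_re, ofReal_re]
      linarith
    have hre' : t - T ≤ (s + t).re - 2 := by
      have := (abs_le.1 ((abs_re_le_norm s).trans (hM s hsK))).1
      simp only [add_re, ofReal_re]
      linarith
    have h1 : ‖G (s + t)‖ ≤ A * Real.exp (1 / 2 * T + -(1 / 2) * t) := by
      rw [← (hs (s + t) (by linarith)).tsum_eq]
      refine tsum_of_norm_bounded (hsA.hasSum.mul_right _) fun n => ?_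
      rw [norm_term, mul_assoc, ← Real.exp_add]
      have := log_pos' n
      have := log_ge_half n
      gcongr
      nlinarith
    refine h1.trans ?_
    gcongr
    linarith [abs_nonneg C1]

/-- Holomorphic dependence of an integral on a parameter. -/
lemma diff_integral {μ : MeasureTheory.Measure ℝ} (f : ℂ → ℝ → ℂ) (s₀ : ℂ) (R : ℝ) (hR : 0 < R)
    (b : ℝ → ℝ) (hb : MeasureTheory.Integrable b μ)
    (hm : ∀ s ∈ Metric.ball s₀ R, MeasureTheory.AEStronglyMeasurable (f s) μ)
    (hbd : ∀ᵐ t ∂μ, ∀ s ∈ Metric.ball s₀ R, ‖f s t‖ ≤ b t)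
    (hd : ∀ᵐ t ∂μ, DifferentiableOn ℂ (fun s => f s t) (Metric.ball s₀ R)) :
    DifferentiableAt ℂ (fun s => ∫ t, f s t ∂μ) s₀ := by
  have hmem : s₀ ∈ Metric.ball s₀ R := Metric.mem_ball_self hR
  have hderiv : ∀ᵐ t ∂μ, ∀ s ∈ Metric.ball s₀ R, HasDerivAt (fun s => f s t)
      (deriv (fun s => f s t) s) s := by
    filter_upwards [hd] with t ht s hs
    exact (ht.differentiableAt (Metric.isOpen_ball.mem_nhds hs)).hasDerivAt
  refine (hasDerivAt_integral_of_dominated_loc_of_deriv_le (μ := μ) (F := f) (x₀ := s₀)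
    (F' := fun s t => deriv (fun s => f s t) s) (s := Metric.ball s₀ (R / 2))
    (bound := fun t => b t / (R / 4)) (Metric.ball_mem_nhds s₀ (by positivity)) ?_ ?_ ?_ ?_ ?_
      ?_).2.differentiableAt
  · filter_upwards [Metric.ball_mem_nhds s₀ hR] with s hs using hm s hs
  · refine hb.mono' (hm s₀ hmem) ?_
    filter_upwards [hbd] with t ht using ht s₀ hmem
  · have hu : Tendsto (fun n : ℕ => s₀ + ((R / 2 / ((n : ℝ) + 1) : ℝ) : ℂ)) atTop
        (nhdsWithin s₀ {s₀}ᶜ) := by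
      rw [tendsto_nhdsWithin_iff]
      constructor
      · have h0 : Tendsto (fun n : ℕ => (R / 2 / ((n : ℝ) + 1) : ℝ)) atTop (nhds 0) := by
          have := tendsto_one_div_add_atTop_nhds_zero_nat (𝕜 := ℝ) |>.const_mul (R / 2)
          simpa [div_eq_mul_inv] using this
        have h1 := (Complex.continuous_ofReal.tendsto 0).comp h0
        simpa using h1.const_add s₀
      · refine Eventually.of_forall fun n => ?_
        have : (R / 2 / ((n : ℝ) + 1) : ℝ) ≠ 0 := by positivity
        simp only [Set.mem_compl_iff, Set.mem_singleton_iff, add_eq_left]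
        exact_mod_cast this
    refine aestronglyMeasurable_of_tendsto_ae atTop
      (f := fun (n : ℕ) t => slope (fun s => f s t) s₀ (s₀ + ((R / 2 / ((n : ℝ) + 1) : ℝ) : ℂ)))
      (fun n => ?_) ?_
    · simp only [slope, vsub_eq_sub]
      refine MeasureTheory.AEStronglyMeasurable.const_smul (𝕜 := ℂ) (MeasureTheory.AEStronglyMeasurable.sub (hm _ ?_) (hm _ hmem)) _
      rw [Metric.mem_ball, dist_eq_norm, add_sub_cancel_left, Complex.norm_real,
        Real.norm_of_nonneg (by positivity), div_lt_iff₀ (by positivity)]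
      nlinarith [Nat.cast_nonneg (α := ℝ) n]
    · filter_upwards [hderiv] with t ht
      exact (ht s₀ hmem).tendsto_slope.comp hu
  · filter_upwards [hbd, hd] with t ht hdt s hs
    have hsub : Metric.closedBall s (R / 4) ⊆ Metric.ball s₀ R := by
      intro z hz
      rw [Metric.mem_ball] at *
      rw [Metric.mem_closedBall] at hz
      linarith [dist_triangle z s s₀]
    refine Complex.norm_deriv_le_of_forall_mem_sphere_norm_le (by positivity) ?_ ?_
    · exact (hdt.mono hsub).diffContOnCl_ball subset_rfl
    · intro z hz
      exact ht z (hsub (Metric.sphere_subset_closedBall hz))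
  · exact hb.div_const _
  · filter_upwards [hderiv] with t ht s hs
    exact ht s (Metric.ball_subset_ball (by linarith) hs)

lemma diff_H (k : ℕ) (G : ℂ → ℂ) (hG : DifferentiableOn ℂ G ZOm)
    (hs : ∀ z : ℂ, 1 < z.re → HasSum (fun n : ℕ => ((Real.log ((n : ℝ) + 2) : ℂ)) ^ k *
      Complex.exp (-z * (Real.log ((n : ℝ) + 2) : ℝ))) (G z))
    (α β s₀ : ℂ) (h0 : s₀ ∈ ZOm) (hw : 0 < (α + β * s₀).re) :
    DifferentiableAt ℂ (fun s : ℂ => mellin (fun t : ℝ => G (s + t)) (α + β * s) /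
      Complex.Gamma (α + β * s)) s₀ := by
  have hGam : DifferentiableAt ℂ (fun s : ℂ => Complex.Gamma (α + β * s)) s₀ := by
    have h1 : DifferentiableAt ℂ Complex.Gamma (α + β * s₀) := by
      refine Complex.differentiableAt_Gamma _ fun m hm => ?_
      rw [hm] at hw
      simp only [neg_re, natCast_re] at hw
      linarith [Nat.cast_nonneg (α := ℝ) m]
    exact h1.comp s₀ (f := fun s : ℂ => α + β * s) (by fun_prop)
  refine DifferentiableAt.div ?_ hGam (Complex.Gamma_ne_zero_of_re_pos hw)
  set a : ℝ := (α + β * s₀).re / 2 with ha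
  set c : ℝ := (α + β * s₀).re * 2 with hc
  have ha0 : 0 < a := by positivity
  have hev : ∀ᶠ s in nhds s₀, s ∈ ZOm ∧ a < (α + β * s).re ∧ (α + β * s).re < c := by
    have hcont : Continuous fun s : ℂ => (α + β * s).re := by fun_prop
    refine Eventually.and (ZOm_open.eventually_mem h0) (Eventually.and ?_ ?_)
    · exact hcont.continuousAt.eventually_const_lt (by simp only [ha]; linarith)
    · exact hcont.continuousAt.eventually_lt_const (by simp only [hc]; linarith)
  obtain ⟨R, hR, hball⟩ := Metric.eventually_nhds_iff_ball.1 hev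
  obtain ⟨C, hC0, hC⟩ := G_decay k G hG hs (Metric.closedBall s₀ (R / 2))
    (isCompact_closedBall _ _) (fun z hz => (hball z (Metric.closedBall_subset_ball
      (by linarith) hz)).1)
  have hsub : Metric.ball s₀ (R / 2) ⊆ Metric.ball s₀ R := Metric.ball_subset_ball (by linarith)
  unfold mellin
  refine diff_integral (μ := MeasureTheory.volume.restrict (Set.Ioi 0))
    (fun s t => (t : ℂ) ^ (α + β * s - 1) • G (s + t)) s₀ (R / 2) (by positivity)
    (fun t => C * (t ^ (a - 1) * Real.exp (-(1 / 2) * t ^ (1 : ℝ)) +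
      t ^ (c - 1) * Real.exp (-(1 / 2) * t ^ (1 : ℝ)))) ?_ ?_ ?_ ?_
  · refine MeasureTheory.Integrable.const_mul (MeasureTheory.Integrable.add ?_ ?_) C
    · exact integrableOn_rpow_mul_exp_neg_mul_rpow (by linarith) one_pos (by norm_num)
    · exact integrableOn_rpow_mul_exp_neg_mul_rpow (by simp only [hc]; linarith) one_pos
        (by norm_num)
  · intro s hs'
    refine ContinuousOn.aestronglyMeasurable ?_ measurableSet_Ioi
    refine ContinuousOn.fun_smul ?_ ?_
    · intro t ht
      exact (Complex.continuousAt_ofReal_cpow_const _ _ (Or.inr (ne_of_gt ht))).continuousWithinAt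
    · refine hG.continuousOn.comp (by fun_prop) fun t ht => ?_
      exact ZOm_add (hball s (hsub hs')).1 (le_of_lt ht)
  · filter_upwards [MeasureTheory.ae_restrict_mem measurableSet_Ioi] with t ht s hs'
    have ht : 0 < t := ht
    obtain ⟨_, h1, h2⟩ := hball s (hsub hs')
    rw [norm_smul, Complex.norm_cpow_eq_rpow_re_of_pos ht, Real.rpow_one, ← add_mul,
      mul_left_comm]
    have h3 := hC s (Metric.ball_subset_closedBall hs') t ht.le
    have h4 : t ^ (α + β * s - 1).re ≤ t ^ (a - 1) + t ^ (c - 1) := by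
      have e : (α + β * s - 1).re = (α + β * s).re - 1 := by simp
      rw [e]
      have p1 : 0 < t ^ (a - 1) := Real.rpow_pos_of_pos ht _
      have p2 : 0 < t ^ (c - 1) := Real.rpow_pos_of_pos ht _
      rcases le_total t 1 with h | h
      · have := Real.rpow_le_rpow_of_exponent_ge ht h (show a - 1 ≤ (α + β * s).re - 1 by linarith)
        linarith
      · have := Real.rpow_le_rpow_of_exponent_le h (show (α + β * s).re - 1 ≤ c - 1 by linarith)
        linarith
    exact mul_le_mul h4 h3 (norm_nonneg _) (by positivity)
  · filter_upwards [MeasureTheory.ae_restrict_mem measurableSet_Ioi] with t ht s hs'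
    have ht : 0 < t := ht
    refine DifferentiableAt.differentiableWithinAt ?_
    refine DifferentiableAt.fun_smul ?_ ?_
    · refine DifferentiableAt.const_cpow (by fun_prop) (Or.inl ?_)
      exact_mod_cast ht.ne'
    · have h1 : DifferentiableAt ℂ G (s + t) :=
        hG.differentiableAt (ZOm_open.mem_nhds (ZOm_add (hball s (hsub hs')).1 ht.le))
      exact h1.comp s (f := fun s : ℂ => s + t) (by fun_prop)

lemma hasSum_H (k : ℕ) (G : ℂ → ℂ)
    (hs : ∀ z : ℂ, 1 < z.re → HasSum (fun n : ℕ => ((Real.log ((n : ℝ) + 2) : ℂ)) ^ k *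
      Complex.exp (-z * (Real.log ((n : ℝ) + 2) : ℝ))) (G z))
    (w s : ℂ) (h1 : 1 < s.re) (hw : 0 < (w + k).re) :
    HasSum (fun n : ℕ => Complex.exp (-w * (Real.log (Real.log ((n : ℝ) + 2)) : ℝ)) *
      Complex.exp (-s * (Real.log ((n : ℝ) + 2) : ℝ)))
      (mellin (fun t : ℝ => G (s + t)) (w + k) / Complex.Gamma (w + k)) := by
  have h := hasSum_mellin (a := fun n : ℕ => ((Real.log ((n : ℝ) + 2) : ℂ)) ^ k *
      Complex.exp (-s * (Real.log ((n : ℝ) + 2) : ℝ))) (p := fun n : ℕ => Real.log ((n : ℝ) + 2))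
      (F := fun t : ℝ => G (s + t)) (s := w + k) (fun n => Or.inr (log_pos' n)) hw ?_ ?_
  · refine (h.div_const (Complex.Gamma (w + k))).congr_fun ?_ |> fun h => h
    intro n
    have hG := Complex.Gamma_ne_zero_of_re_pos hw
    have hL := log_pos' n
    have hL' : ((Real.log ((n : ℝ) + 2) : ℝ) : ℂ) ≠ 0 := by exact_mod_cast hL.ne'
    rw [Complex.cpow_add _ _ hL', Complex.cpow_natCast, Complex.cpow_def_of_ne_zero hL',
      ← Complex.ofReal_log hL.le, neg_mul w, Complex.exp_neg, mul_comm w]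
    field_simp
  · intro t ht
    have ht : 0 < t := ht
    refine (hs (s + t) (by simp; linarith)).congr_fun ?_ |> fun h => h
    intro n
    rw [mul_assoc, Complex.ofReal_exp, ← Complex.exp_add]
    congr 2
    push_cast
    ring
  · refine (summable_base (k - (w + k).re) s.re h1).congr fun n => ?_
    rw [norm_term, Real.rpow_sub (log_pos' n)]
    ring

lemma H_indep (G : ℕ → ℂ → ℂ) (hG : ∀ k, DifferentiableOn ℂ (G k) ZOm)
    (hs : ∀ k, ∀ z : ℂ, 1 < z.re → HasSum (fun n : ℕ => ((Real.log ((n : ℝ) + 2) : ℂ)) ^ k *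
      Complex.exp (-z * (Real.log ((n : ℝ) + 2) : ℝ))) (G k z))
    (j k : ℕ) (w s : ℂ) (h0 : s ∈ ZOm) (hj : 0 < (w + j).re) (hk : 0 < (w + k).re) :
    mellin (fun t : ℝ => G j (s + t)) (w + j) / Complex.Gamma (w + j) =
      mellin (fun t : ℝ => G k (s + t)) (w + k) / Complex.Gamma (w + k) := by
  have hd : ∀ k : ℕ, 0 < (w + k).re → AnalyticOnNhd ℂ (fun s : ℂ =>
      mellin (fun t : ℝ => G k (s + t)) (w + k) / Complex.Gamma (w + k)) ZOm := by
    intro k hk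
    refine DifferentiableOn.analyticOnNhd (fun s hsO => ?_) ZOm_open
    have := diff_H k (G k) (hG k) (hs k) (w + k) 0 s hsO (by simpa using hk)
    simp only [zero_mul, add_zero] at this
    exact this.differentiableWithinAt
  have h2 : (2 : ℂ) ∈ ZOm := ZOm_of_re (by norm_num)
  refine (hd j hj).eqOn_of_preconnected_of_eventuallyEq (hd k hk) ZOm_preconnected h2 ?_ h0
  filter_upwards [(isOpen_lt continuous_const continuous_re).mem_nhds
    (show (1 : ℝ) < (2 : ℂ).re by norm_num)] with z hz
  exact (hasSum_H j (G j) (hs j) w z hz hj).unique (hasSum_H k (G k) (hs k) w z hz hk)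

/-- Lemma 2.2 (analytic continuation): the Dirichlet series
`ζ_{η,θ}(s) = ∑_{n=2}^∞ (log n)^η / (n (log n)^θ)^s` extends to an analytic
(complex differentiable) function on `ℂ \ (−∞, 1]`.  Here
`(n (log n)^θ)^s = exp(s (log n + θ log log n))`. -/
theorem zeta_eta_theta_analytic_continuation (η θ : ℝ) :
    ∃ F : ℂ → ℂ,
      DifferentiableOn ℂ F {s : ℂ | ¬(s.im = 0 ∧ s.re ≤ 1)} ∧
      ∀ s : ℂ, 1 < s.re →
        (Summable (fun n : ℕ =>
          ‖((Real.log ((n : ℝ) + 2)) ^ η : ℝ) *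
            Complex.exp (-s * ((Real.log ((n : ℝ) + 2) : ℝ)
              + θ * Real.log (Real.log ((n : ℝ) + 2))))‖) ∧
        F s = ∑' n : ℕ,
          ((Real.log ((n : ℝ) + 2)) ^ η : ℝ) *
            Complex.exp (-s * ((Real.log ((n : ℝ) + 2) : ℝ)
              + θ * Real.log (Real.log ((n : ℝ) + 2))))) := by
  choose G hG hs using exists_G
  have hterm : ∀ (s : ℂ) (n : ℕ), ((Real.log ((n : ℝ) + 2)) ^ η : ℝ) *
            Complex.exp (-s * ((Real.log ((n : ℝ) + 2) : ℝ)
              + θ * Real.log (Real.log ((n : ℝ) + 2)))) =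
      Complex.exp (-(-(η : ℂ) + θ * s) * (Real.log (Real.log ((n : ℝ) + 2)) : ℝ)) *
      Complex.exp (-s * (Real.log ((n : ℝ) + 2) : ℝ)) := by
    intro s n
    rw [Real.rpow_def_of_pos (log_pos' n), Complex.ofReal_exp, ← Complex.exp_add,
      ← Complex.exp_add]
    congr 1
    push_cast
    ring
  have hre : ∀ s : ℂ, ∀ k : ℕ, (-(η : ℂ) + θ * s + k).re = -η + θ * s.re + k := by
    intro s k
    simp
  set κ : ℂ → ℕ := fun s => ⌈-(-η + θ * s.re)⌉₊ + 1 with hκ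
  have hκ0 : ∀ s, 0 < (-(η : ℂ) + θ * s + (κ s : ℕ)).re := by
    intro s
    rw [hre]
    have := Nat.le_ceil (-(-η + θ * s.re))
    simp only [hκ]
    push_cast
    linarith
  refine ⟨fun s => mellin (fun t : ℝ => G (κ s) (s + t)) (-(η : ℂ) + θ * s + (κ s : ℕ)) /
    Complex.Gamma (-(η : ℂ) + θ * s + (κ s : ℕ)), ?_, ?_⟩
  · intro s₀ h0
    have h0 : s₀ ∈ ZOm := h0
    refine DifferentiableAt.differentiableWithinAt ?_
    set K := κ s₀ with hK
    have hd := diff_H K (G K) (hG K) (hs K) (-(η : ℂ) + K) θ s₀ h0 (by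
      have := hκ0 s₀
      rwa [add_right_comm] at this)
    refine hd.congr_of_eventuallyEq ?_
    have hcont : Continuous fun s : ℂ => (-(η : ℂ) + θ * s + (K : ℕ)).re := by fun_prop
    filter_upwards [ZOm_open.mem_nhds h0,
      hcont.continuousAt.eventually_const_lt (hκ0 s₀)] with s h1 h2
    have := H_indep G hG hs (κ s) K (-(η : ℂ) + θ * s) s h1 (hκ0 s) h2
    rw [this, add_right_comm]
  · intro s h1
    simp only [hterm]
    have h := hasSum_H (κ s) (G (κ s)) (hs _) (-(η : ℂ) + θ * s) s h1 (hκ0 s)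
    exact ⟨h.summable.norm, h.tsum_eq.symm⟩
end

section
/- Let η, θ ∈ ℝ and let F be the analytic continuation of ζ_{η,θ} to ℂ \ (−∞, 1]. For any 0 < σ₁ ≤ σ₂ there exist constants C > 0 and k ∈ ℕ such that |F(s)| ≤ C·(1 + |Im(s)|)^k for all s with σ₁ ≤ Re(s) ≤ σ₂ and |Im(s)| ≥ 1. -/
open Filter Complex

namespace ZetaAux
open Set MeasureTheory Topology

/-- the integrand -/
noncomputable def E (η θ : ℝ) (s u : ℂ) : ℂ :=
  Complex.exp (((η : ℂ) - s * θ) * Complex.log u + (1 - s) * u)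

lemma pow_le_exp (M : ℕ) {ε y : ℝ} (hε : 0 < ε) (hy : 0 ≤ y) :
    y ^ M ≤ (M.factorial / ε ^ M) * Real.exp (ε * y) := by
  have h := Real.pow_div_factorial_le_exp (x := ε * y) (by positivity) M
  rw [div_le_iff₀ (by positivity), mul_pow] at h
  rw [div_mul_eq_mul_div, le_div_iff₀ (by positivity)]
  linarith

lemma abs_arg_le {z : ℂ} (hz : 0 < z.re) : |arg z| ≤ |z.im| / z.re := by
  have h1 : |arg z| < Real.pi / 2 := abs_arg_lt_pi_div_two_iff.2 (Or.inl hz)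
  have h2 := Real.le_tan (abs_nonneg _) h1
  refine h2.trans ?_
  rcases abs_cases (arg z) with ⟨h, -⟩ | ⟨h, -⟩ <;> rw [h]
  · rw [Complex.tan_arg]; gcongr; exact le_abs_self _
  · rw [Real.tan_neg, Complex.tan_arg, ← neg_div]; gcongr; exact neg_le_abs _

lemma norm_u_le {a v : ℝ} (ha : 1 ≤ a) (hv : 0 ≤ v) : ‖(a : ℂ) - v * I‖ ≤ a * (1 + v) := by
  calc ‖(a : ℂ) - v * I‖ ≤ ‖(a : ℂ)‖ + ‖(v : ℂ) * I‖ := norm_sub_le _ _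
    _ = a + v := by simp [abs_of_nonneg hv, abs_of_nonneg (zero_le_one.trans ha)]
    _ ≤ _ := by nlinarith

lemma le_norm_u {a v : ℝ} : a ≤ ‖(a : ℂ) - v * I‖ := by
  have := Complex.re_le_norm ((a : ℂ) - v * I)
  simpa using this

lemma norm_E_le {η θ : ℝ} {s : ℂ} {B : ℕ} (hB : |η| + |s.re| * |θ| ≤ B) {a v : ℝ} (ha : 1 ≤ a)
    (haθ : 2 * |θ| ≤ a) (hv : 0 ≤ v) (ht : 0 ≤ s.im) :
    ‖E η θ s (a - v * I)‖ ≤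
      (a * (1 + v)) ^ B * Real.exp ((1 - s.re) * a) * Real.exp (-(s.im * v / 2)) := by
  set u : ℂ := a - v * I with hu
  have hure : u.re = a := by simp [hu]
  have huim : u.im = -v := by simp [hu]
  have h1 : 1 ≤ ‖u‖ := ha.trans le_norm_u
  have hlog : 0 ≤ Real.log ‖u‖ := Real.log_nonneg h1
  have harg : |arg u| ≤ v / a := by
    have := abs_arg_le (z := u) (by rw [hure]; linarith)
    rwa [hure, huim, abs_neg, abs_of_nonneg hv] at this
  have hpos : 0 < a * (1 + v) := by positivity
  rw [E, Complex.norm_exp, ← Real.exp_log (pow_pos hpos B), ← Real.exp_add, ← Real.exp_add,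
    Real.exp_le_exp, Real.log_pow]
  have e : (((η : ℂ) - s * θ) * Complex.log u + (1 - s) * u).re =
      (η - s.re * θ) * Real.log ‖u‖ + s.im * (θ * arg u) + (1 - s.re) * a - s.im * v := by
    simp [Complex.log_re, Complex.log_im, hure, huim]; ring
  rw [e]
  have i1 : (η - s.re * θ) * Real.log ‖u‖ ≤ B * Real.log (a * (1 + v)) := by
    have : η - s.re * θ ≤ B := by
      refine le_trans ?_ hB
      rw [← abs_mul]
      linarith [le_abs_self η, neg_abs_le (s.re * θ)]
    have h2 : Real.log ‖u‖ ≤ Real.log (a * (1 + v)) :=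
      Real.log_le_log (by linarith) (norm_u_le ha hv)
    calc _ ≤ B * Real.log ‖u‖ := by gcongr
      _ ≤ _ := by gcongr
  have i2 : θ * arg u ≤ v / 2 := by
    calc θ * arg u ≤ |θ| * |arg u| := by rw [← abs_mul]; exact le_abs_self _
      _ ≤ (a / 2) * (v / a) := by gcongr; linarith
      _ = v / 2 := by field_simp
  have i3 := mul_le_mul_of_nonneg_left i2 ht
  linarith

lemma dom_le (M : ℕ) {ε t a v : ℝ} (hε : 0 < ε) (ht : 4 * ε ≤ t) (ha : 0 ≤ a) (hv : 0 ≤ v) :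
    (a * (1 + v)) ^ M * Real.exp (-(t * v / 2)) ≤
      a ^ M * (M.factorial / ε ^ M * Real.exp ε) * Real.exp (-ε * v) := by
  have h := pow_le_exp M hε (by positivity : 0 ≤ 1 + v)
  have h2 : Real.exp (-(t * v / 2)) ≤ Real.exp (-ε * v) * Real.exp (-ε * v) := by
    rw [← Real.exp_add, Real.exp_le_exp]; nlinarith
  have h3 : Real.exp (ε * v) * Real.exp (-ε * v) = 1 := by rw [← Real.exp_add]; simp
  rw [mul_pow]
  calc _ ≤ a ^ M * (M.factorial / ε ^ M * Real.exp (ε * (1 + v))) *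
        (Real.exp (-ε * v) * Real.exp (-ε * v)) := by gcongr
    _ = a ^ M * (M.factorial / ε ^ M * Real.exp ε) * Real.exp (-ε * v) *
        (Real.exp (ε * v) * Real.exp (-ε * v)) := by rw [mul_add, Real.exp_add]; ring_nf
    _ = _ := by rw [h3, mul_one]

lemma dom_int (K : ℝ) {ε : ℝ} (hε : 0 < ε) :
    Integrable (fun v => K * Real.exp (-ε * v)) (volume.restrict (Ioi (0 : ℝ))) :=
  (exp_neg_integrableOn_Ioi 0 hε).const_mul K

lemma slit {a v : ℝ} (ha : 1 ≤ a) : (a : ℂ) - v * I ∈ slitPlane := by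
  left; simp; linarith

lemma hasDerivAt_E_u {η θ : ℝ} {s u : ℂ} (hu : u ∈ slitPlane) :
    HasDerivAt (E η θ s) (E η θ s u * ((η - s * θ) / u + (1 - s))) u := by
  unfold E
  have h := (((hasDerivAt_log hu).const_mul ((η : ℂ) - s * θ)).add
    ((hasDerivAt_id u).const_mul (1 - s))).cexp
  exact h.congr_deriv (by simp [div_eq_mul_inv])

lemma hasDerivAt_E_s {η θ : ℝ} {s u : ℂ} :
    HasDerivAt (fun s => E η θ s u) (E η θ s u * (-θ * Complex.log u - u)) s := by
  unfold E
  have h := (((((hasDerivAt_id s).mul_const (θ : ℂ)).const_sub (η : ℂ)).mul_const (Complex.log u)).add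
    (((hasDerivAt_id s).const_sub 1).mul_const u)).cexp
  exact h.congr_deriv (by simp; ring)

lemma continuous_E_v {η θ : ℝ} {s : ℂ} {a : ℝ} (ha : 1 ≤ a) :
    Continuous (fun v : ℝ => E η θ s (a - v * I)) := by
  rw [continuous_iff_continuousAt]
  intro v
  exact ContinuousAt.comp (f := fun v : ℝ => (a : ℂ) - v * I) (hasDerivAt_E_u (slit ha)).continuousAt
    (by fun_prop)

lemma E_dom {η θ : ℝ} {s : ℂ} {B : ℕ} (hB : |η| + |s.re| * |θ| ≤ B) {a v ε : ℝ} (ha : 1 ≤ a)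
    (haθ : 2 * |θ| ≤ a) (hv : 0 ≤ v) (hε : 0 < ε) (ht : 4 * ε ≤ s.im) (j : ℕ) :
    ‖E η θ s (a - v * I)‖ * (a * (1 + v)) ^ j ≤ Real.exp ((1 - s.re) * a) *
      (a ^ (B + j) * ((B + j).factorial / ε ^ (B + j) * Real.exp ε)) * Real.exp (-ε * v) := by
  have h1 := norm_E_le hB ha haθ hv (by linarith)
  have h2 := dom_le (B + j) hε ht (by linarith : 0 ≤ a) hv
  have hpos : 0 < a * (1 + v) := by positivity
  calc _ ≤ ((a * (1 + v)) ^ B * Real.exp ((1 - s.re) * a) * Real.exp (-(s.im * v / 2))) *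
        (a * (1 + v)) ^ j := by gcongr
    _ = Real.exp ((1 - s.re) * a) * ((a * (1 + v)) ^ (B + j) * Real.exp (-(s.im * v / 2))) := by
        rw [pow_add]; ring
    _ ≤ Real.exp ((1 - s.re) * a) * (a ^ (B + j) * ((B + j).factorial / ε ^ (B + j) * Real.exp ε) *
        Real.exp (-ε * v)) := by gcongr
    _ = _ := by ring

lemma E_int {η θ : ℝ} {s : ℂ} {a : ℝ} (ha : 1 ≤ a)
    (haθ : 2 * |θ| ≤ a) (ht : 0 < s.im) :
    Integrable (fun v : ℝ => E η θ s (a - v * I)) (volume.restrict (Ioi (0 : ℝ))) := by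
  obtain ⟨B, hB⟩ := exists_nat_ge (|η| + |s.re| * |θ|)
  refine (dom_int (Real.exp ((1 - s.re) * a) *
      (a ^ (B + 0) * ((B + 0).factorial / (s.im / 4) ^ (B + 0) * Real.exp (s.im / 4))))
      (by positivity : 0 < s.im / 4)).mono' (continuous_E_v ha).aestronglyMeasurable ?_
  refine (ae_restrict_mem measurableSet_Ioi).mono fun v hv => ?_
  have := E_dom hB ha haθ (le_of_lt hv) (by positivity : 0 < s.im / 4) (by linarith) 0
  simpa using this

/-- primitive -/
noncomputable def P (η θ : ℝ) (s : ℂ) (a : ℝ) : ℂ :=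
  I * ∫ v in Ioi (0 : ℝ), E η θ s (a - v * I)

lemma norm_P_le {η θ : ℝ} {s : ℂ} {B : ℕ} (hB : |η| + |s.re| * |θ| ≤ B) {a ε : ℝ} (ha : 1 ≤ a)
    (haθ : 2 * |θ| ≤ a) (hε : 0 < ε) (ht : 4 * ε ≤ s.im) :
    ‖P η θ s a‖ ≤ Real.exp ((1 - s.re) * a) *
      (a ^ B * (B.factorial / ε ^ B * Real.exp ε)) * ∫ v in Ioi (0 : ℝ), Real.exp (-ε * v) := by
  rw [P, norm_mul, norm_I, one_mul, ← integral_const_mul]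
  refine norm_integral_le_of_norm_le (dom_int _ hε) ?_
  refine (ae_restrict_mem measurableSet_Ioi).mono fun v hv => ?_
  simpa using E_dom hB ha haθ (le_of_lt hv) hε ht 0

lemma P_diff_s {η θ : ℝ} {s₀ : ℂ} {a : ℝ} (ha : 1 ≤ a)
    (haθ : 2 * |θ| ≤ a) (ht : 0 < s₀.im) : DifferentiableAt ℂ (fun s => P η θ s a) s₀ := by
  set r := s₀.im / 2 with hr
  have hr0 : 0 < r := by positivity
  obtain ⟨B, hB⟩ := exists_nat_ge (|η| + (|s₀.re| + r) * |θ|)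
  have hre : ∀ s ∈ Metric.ball s₀ r, |s.re - s₀.re| < r := fun s hs => by
    rw [mem_ball_iff_norm] at hs
    exact (Complex.abs_re_le_norm (s - s₀)).trans_lt hs
  have him : ∀ s ∈ Metric.ball s₀ r, r ≤ s.im := fun s hs => by
    rw [mem_ball_iff_norm] at hs
    have := (Complex.abs_im_le_norm (s - s₀)).trans_lt hs
    rw [Complex.sub_im, abs_lt] at this
    linarith
  have hε : 0 < r / 4 := by positivity
  unfold P
  refine DifferentiableAt.const_mul ?_ _
  refine (hasDerivAt_integral_of_dominated_loc_of_deriv_le (Metric.ball_mem_nhds s₀ hr0)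
    (F := fun s (v : ℝ) => E η θ s (a - v * I))
    (F' := fun s (v : ℝ) => E η θ s (a - v * I) * (-θ * Complex.log (a - v * I) - (a - v * I)))
    (bound := fun v => ((5 * |θ| + 1) * (Real.exp ((1 + |s₀.re| + r) * a) *
      (a ^ (B + 1) * ((B + 1).factorial / (r / 4) ^ (B + 1) * Real.exp (r / 4))))) *
      Real.exp (-(r / 4) * v))
    ?_ ?_ ?_ ?_ ?_ ?_).2.differentiableAt
  · exact Eventually.of_forall fun s => (continuous_E_v ha).aestronglyMeasurable
  · exact E_int ha haθ ht
  · refine Continuous.aestronglyMeasurable ((continuous_E_v ha).mul ?_)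
    refine Continuous.sub (continuous_const.mul ?_) (by fun_prop)
    exact Continuous.clog (by fun_prop) (fun v => slit ha)
  · refine (ae_restrict_mem measurableSet_Ioi).mono fun v hv s hs => ?_
    have hv' : 0 ≤ v := le_of_lt hv
    have h1 := abs_lt.1 (hre s hs)
    have hB' : |η| + |s.re| * |θ| ≤ B := by
      refine le_trans ?_ hB
      gcongr
      have : s.re = s₀.re + (s.re - s₀.re) := by ring
      rw [this]
      exact (abs_add_le _ _).trans (by gcongr; exact (hre s hs).le)
    have h2 := E_dom hB' ha haθ hv' hε (by linarith [him s hs]) 1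
    have hn1 : 1 ≤ ‖(a : ℂ) - v * I‖ := ha.trans le_norm_u
    have h3 : ‖(-θ * Complex.log (a - v * I) - (a - v * I) : ℂ)‖ ≤ (5 * |θ| + 1) * (a * (1 + v)) := by
      have hl : ‖Complex.log (a - v * I)‖ ≤ 5 * ‖(a : ℂ) - v * I‖ := by
        refine (Complex.norm_le_abs_re_add_abs_im _).trans ?_
        rw [Complex.log_re, Complex.log_im, abs_of_nonneg (Real.log_nonneg hn1)]
        have := Real.log_le_self (by linarith : 0 ≤ ‖(a : ℂ) - v * I‖)
        have := Complex.abs_arg_le_pi (a - v * I)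
        have := Real.pi_le_four
        linarith
      calc _ ≤ ‖(-θ * Complex.log (a - v * I) : ℂ)‖ + ‖(a : ℂ) - v * I‖ := norm_sub_le _ _
        _ = |θ| * ‖Complex.log (a - v * I)‖ + ‖(a : ℂ) - v * I‖ := by simp
        _ ≤ |θ| * (5 * ‖(a : ℂ) - v * I‖) + ‖(a : ℂ) - v * I‖ := by gcongr
        _ = (5 * |θ| + 1) * ‖(a : ℂ) - v * I‖ := by ring
        _ ≤ _ := by gcongr; exact norm_u_le ha hv'
    rw [norm_mul]
    calc _ ≤ ‖E η θ s (a - v * I)‖ * ((5 * |θ| + 1) * (a * (1 + v))) := by gcongr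
      _ = (5 * |θ| + 1) * (‖E η θ s (a - v * I)‖ * (a * (1 + v)) ^ 1) := by ring
      _ ≤ (5 * |θ| + 1) * (Real.exp ((1 - s.re) * a) *
      (a ^ (B + 1) * ((B + 1).factorial / (r / 4) ^ (B + 1) * Real.exp (r / 4))) *
        Real.exp (-(r / 4) * v)) := by gcongr
      _ ≤ (5 * |θ| + 1) * (Real.exp ((1 + |s₀.re| + r) * a) *
      (a ^ (B + 1) * ((B + 1).factorial / (r / 4) ^ (B + 1) * Real.exp (r / 4))) *
        Real.exp (-(r / 4) * v)) := by
          gcongr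
          linarith [neg_abs_le s₀.re]
      _ = _ := by ring
  · exact dom_int _ hε
  · exact Eventually.of_forall fun v s _ => hasDerivAt_E_s

lemma P_deriv {η θ : ℝ} {s : ℂ} {a : ℝ} (ha : 1 < a)
    (haθ : 2 * |θ| < a) (ht : 0 < s.im) : HasDerivAt (P η θ s) (E η θ s a) a := by
  obtain ⟨B, hB⟩ := exists_nat_ge (|η| + |s.re| * |θ|)
  have hε : 0 < s.im / 4 := by positivity
  set L := ‖(η : ℂ) - s * θ‖ + ‖1 - s‖ with hL
  have hnhd : Ioo (max 1 (2 * |θ|)) (a + 1) ∈ 𝓝 a := Ioo_mem_nhds (by simp [ha, haθ]) (by linarith)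
  have hd : ∀ v : ℝ, ∀ x : ℝ, 1 ≤ x → HasDerivAt (fun x : ℝ => E η θ s (x - v * I))
      (E η θ s (x - v * I) * ((η - s * θ) / (x - v * I) + (1 - s))) x := by
    intro v x hx
    have h := (hasDerivAt_E_u (η := η) (θ := θ) (s := s) (slit (v := v) hx)).scomp (𝕜 := ℝ) x
      (h := fun x : ℝ => (x : ℂ) - v * I) ((Complex.ofRealCLM.hasDerivAt (x := x)).sub_const _)
    simpa [Function.comp_def] using h
  have key := hasDerivAt_integral_of_dominated_loc_of_deriv_le hnhd
    (μ := volume.restrict (Ioi (0 : ℝ)))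
    (F := fun (x : ℝ) (v : ℝ) => E η θ s (x - v * I))
    (F' := fun (x : ℝ) (v : ℝ) => E η θ s (x - v * I) * ((η - s * θ) / (x - v * I) + (1 - s)))
    (bound := fun v => (L * (Real.exp (|1 - s.re| * (a + 1)) *
      ((a + 1) ^ B * (B.factorial / (s.im / 4) ^ B * Real.exp (s.im / 4))))) *
      Real.exp (-(s.im / 4) * v))
    ?_ ?_ ?_ ?_ ?_ ?_
  · have h2 := key.2.const_mul I
    have e : E η θ s a = I * ∫ v in Ioi (0 : ℝ),
        E η θ s (a - v * I) * ((η - s * θ) / (a - v * I) + (1 - s)) := by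
      have hint := key.1.const_mul (-I)
      have hten : Tendsto (fun v : ℝ => E η θ s (a - v * I)) atTop (𝓝 0) := by
        have hz : Tendsto (fun v : ℝ => (Real.exp ((1 - s.re) * a) *
            (a ^ (B + 0) * ((B + 0).factorial / (s.im / 4) ^ (B + 0) * Real.exp (s.im / 4)))) *
            Real.exp (-(s.im / 4) * v)) atTop (𝓝 0) := by
          rw [← mul_zero (Real.exp ((1 - s.re) * a) *
            (a ^ (B + 0) * ((B + 0).factorial / (s.im / 4) ^ (B + 0) * Real.exp (s.im / 4))))]
          refine Tendsto.const_mul _ (Real.tendsto_exp_atBot.comp ?_)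
          exact tendsto_id.const_mul_atTop_of_neg (by linarith)
        refine squeeze_zero_norm' ?_ hz
        filter_upwards [eventually_ge_atTop 0] with v hv
        simpa using E_dom hB ha.le haθ.le hv hε (by linarith) 0
      have := integral_Ioi_of_hasDerivAt_of_tendsto' (a := 0) (f := fun v : ℝ => E η θ s (a - v * I))
        (f' := fun v : ℝ => -I * (E η θ s (a - v * I) * ((η - s * θ) / (a - v * I) + (1 - s))))
        (fun v _ => by
          have h := (hasDerivAt_E_u (η := η) (θ := θ) (s := s) (slit (v := v) ha.le)).scomp (𝕜 := ℝ) v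
            (h := fun v : ℝ => (a : ℂ) - v * I)
            (((Complex.ofRealCLM.hasDerivAt (x := v)).mul_const I).const_sub _)
          simpa [Function.comp_def] using h) hint hten
      rw [integral_const_mul] at this
      simp only [ofReal_zero, zero_mul, sub_zero, zero_sub] at this
      linear_combination this
    rw [e]
    exact h2
  · filter_upwards [hnhd] with x hx
    exact (continuous_E_v ((le_max_left _ _).trans hx.1.le)).aestronglyMeasurable
  · exact E_int ha.le haθ.le ht
  · refine Continuous.aestronglyMeasurable ((continuous_E_v ha.le).mul ?_)
    refine Continuous.add (Continuous.div continuous_const (by fun_prop) fun v => ?_) continuous_const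
    exact slitPlane_ne_zero (slit ha.le)
  · refine (ae_restrict_mem measurableSet_Ioi).mono fun v hv x hx => ?_
    have hx1 : 1 ≤ x := (le_max_left _ _).trans hx.1.le
    have hxθ : 2 * |θ| ≤ x := (le_max_right _ _).trans hx.1.le
    have h2 := E_dom hB hx1 hxθ (le_of_lt hv) hε (by linarith) 0
    simp only [pow_zero, mul_one, add_zero] at h2
    have hn1 : 1 ≤ ‖(x : ℂ) - v * I‖ := hx1.trans le_norm_u
    have h3 : ‖((η - s * θ) / (x - v * I) + (1 - s) : ℂ)‖ ≤ L := by
      refine (norm_add_le _ _).trans ?_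
      rw [hL, norm_div]
      gcongr
      exact div_le_self (norm_nonneg _) hn1
    rw [norm_mul]
    calc _ ≤ (Real.exp ((1 - s.re) * x) * (x ^ B * (B.factorial / (s.im / 4) ^ B *
          Real.exp (s.im / 4))) * Real.exp (-(s.im / 4) * v)) * L := by gcongr
      _ ≤ (Real.exp (|1 - s.re| * (a + 1)) * ((a + 1) ^ B * (B.factorial / (s.im / 4) ^ B *
          Real.exp (s.im / 4))) * Real.exp (-(s.im / 4) * v)) * L := by
          have := hx.2.le
          gcongr
          exact le_abs_self _
      _ = _ := by ring
  · exact dom_int _ hε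
  · exact Eventually.of_forall fun v x hx => hd v x ((le_max_left _ _).trans hx.1.le)


noncomputable def f (η θ : ℝ) (s : ℂ) (x : ℝ) : ℂ :=
  Complex.exp (((η : ℂ) - s * θ) * (Real.log (Real.log x) : ℝ) - s * (Real.log x : ℝ))

lemma term_eq (η θ : ℝ) (s : ℂ) (n : ℕ) :
    ((Real.log ((n : ℝ) + 2)) ^ η : ℝ) *
          Complex.exp (-s * ((Real.log ((n : ℝ) + 2) : ℝ)
            + θ * Real.log (Real.log ((n : ℝ) + 2)))) = f η θ s ((n : ℝ) + 2) := by
  have h : 0 < Real.log ((n : ℝ) + 2) := Real.log_pos (by linarith [n.cast_nonneg (α := ℝ)])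
  rw [Real.rpow_def_of_pos h, Complex.ofReal_exp, ← Complex.exp_add, f]
  congr 1
  push_cast
  ring

lemma E_eq_f {η θ : ℝ} {s : ℂ} {x : ℝ} (hx : 0 < x) (hl : 0 < Real.log x) :
    E η θ s (Real.log x) = f η θ s x * x := by
  have : (x : ℂ) = Complex.exp (Real.log x : ℝ) := by
    rw [← Complex.ofReal_exp, Real.exp_log hx]
  rw [E, f, ← Complex.ofReal_log hl.le]
  conv_rhs => rw [this]
  rw [← Complex.exp_add]
  congr 1
  ring

lemma Q_deriv {η θ : ℝ} {s : ℂ} {x : ℝ} (hx : 0 < x) (h1 : 1 < Real.log x)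
    (h2 : 2 * |θ| < Real.log x) (ht : 0 < s.im) :
    HasDerivAt (fun x => P η θ s (Real.log x)) (f η θ s x) x := by
  have h := (P_deriv (η := η) h1 h2 ht).scomp x (Real.hasDerivAt_log hx.ne')
  refine h.congr_deriv ?_
  rw [E_eq_f hx (by linarith), Complex.real_smul]
  push_cast
  have : (x : ℂ) ≠ 0 := by exact_mod_cast hx.ne'
  field_simp

lemma f_deriv {η θ : ℝ} {s : ℂ} {x : ℝ} (hx : 0 < x) (h1 : 1 < Real.log x) :
    HasDerivAt (f η θ s)
      (f η θ s x * ((η - s * θ) * ((x⁻¹ / Real.log x : ℝ) : ℂ) - s * ((x⁻¹ : ℝ) : ℂ))) x := by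
  have hl := (Real.hasDerivAt_log hx.ne')
  have hll := hl.log (by linarith)
  have h := (((hll.ofReal_comp).const_mul ((η : ℂ) - s * θ)).sub ((hl.ofReal_comp).const_mul s)).cexp
  exact h

lemma f_diff_s {η θ : ℝ} {x : ℝ} : Differentiable ℂ (fun s => f η θ s x) := by
  unfold f; fun_prop

lemma norm_f_eq {η θ : ℝ} {s : ℂ} {x : ℝ} : ‖f η θ s x‖ =
    Real.exp ((η - s.re * θ) * Real.log (Real.log x) - s.re * Real.log x) := by
  rw [f, Complex.norm_exp]
  congr 1
  simp

lemma norm_f_le {η θ : ℝ} {s : ℂ} {B : ℕ} (hB : |η| + |s.re| * |θ| ≤ B) {x δ : ℝ} (hx : 0 < x)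
    (h1 : 1 ≤ Real.log x) (hδ : 0 < δ) :
    ‖f η θ s x‖ ≤ (B.factorial / δ ^ B) * x ^ (δ - s.re) := by
  have hl : 0 < Real.log x := by linarith
  have h := pow_le_exp B hδ hl.le
  have i1 : (η - s.re * θ) * Real.log (Real.log x) ≤ B * Real.log (Real.log x) := by
    have : η - s.re * θ ≤ B := by
      refine le_trans ?_ hB
      rw [← abs_mul]
      linarith [le_abs_self η, neg_abs_le (s.re * θ)]
    have := Real.log_nonneg h1
    gcongr
  rw [norm_f_eq, Real.rpow_def_of_pos hx]
  calc _ ≤ Real.exp (B * Real.log (Real.log x) - s.re * Real.log x) := by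
        rw [Real.exp_le_exp]; linarith
    _ = (Real.log x) ^ B * Real.exp (- s.re * Real.log x) := by
        rw [sub_eq_add_neg, Real.exp_add, ← Real.log_pow, Real.exp_log (by positivity), neg_mul]
    _ ≤ ((B.factorial / δ ^ B) * Real.exp (δ * Real.log x)) * Real.exp (- s.re * Real.log x) := by
        gcongr
    _ = _ := by rw [mul_assoc, ← Real.exp_add]; ring_nf

lemma incr_le {η θ c d : ℝ} {s : ℂ} {B : ℕ} (hc : 0 < c) (hB : |η| + d * |θ| ≤ B)
    (hs1 : c ≤ s.re) (hs2 : s.re ≤ d) (ht : 0 < s.im) {x : ℝ} (hx : 1 ≤ x)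
    (h1 : 1 < Real.log x) (h2 : 2 * |θ| < Real.log x) :
    ‖f η θ s x - (P η θ s (Real.log (x + 1)) - P η θ s (Real.log x))‖ ≤
      ‖s‖ * (((B.factorial / (c / 2) ^ B) * (|η| / c + |θ| + 1)) * x ^ (-(1 + c / 2))) := by
  set W := ‖s‖ * (((B.factorial / (c / 2) ^ B) * (|η| / c + |θ| + 1)) * x ^ (-(1 + c / 2))) with hW
  have hx0 : 0 < x := by linarith
  have hsn : c ≤ ‖s‖ := hs1.trans (Complex.re_le_norm s)
  have hB' : |η| + |s.re| * |θ| ≤ B := by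
    refine le_trans ?_ hB
    rw [abs_of_nonneg (by linarith : 0 ≤ s.re)]
    gcongr
  have hlog : ∀ y, x ≤ y → Real.log x ≤ Real.log y := fun y hy => Real.log_le_log hx0 hy
  have hW0 : 0 ≤ W := by positivity
  have hder : ∀ y, x ≤ y →
      ‖f η θ s y * ((η - s * θ) * ((y⁻¹ / Real.log y : ℝ) : ℂ) - s * ((y⁻¹ : ℝ) : ℂ))‖ ≤ W := by
    intro y hy
    have hy0 : 0 < y := by linarith
    have hly : 1 ≤ Real.log y := by linarith [hlog y hy]
    have a1 := norm_f_le hB' hy0 hly (by positivity : 0 < c / 2)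
    have a2 : ‖((η - s * θ) * ((y⁻¹ / Real.log y : ℝ) : ℂ) - s * ((y⁻¹ : ℝ) : ℂ))‖ ≤
        ‖s‖ * (|η| / c + |θ| + 1) * y⁻¹ := by
      have b1 : ‖(η - s * θ : ℂ)‖ ≤ |η| + ‖s‖ * |θ| := by
        refine (norm_sub_le _ _).trans ?_
        simp
      have b2 : |η| ≤ ‖s‖ * (|η| / c) := by
        rw [mul_div_assoc', le_div_iff₀ hc, mul_comm]
        gcongr
      have b3 : ‖((y⁻¹ / Real.log y : ℝ) : ℂ)‖ ≤ y⁻¹ := by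
        rw [Complex.norm_real, Real.norm_of_nonneg (by positivity)]
        exact div_le_self (by positivity) hly
      have b4 : ‖((y⁻¹ : ℝ) : ℂ)‖ = y⁻¹ := by
        rw [Complex.norm_real, Real.norm_of_nonneg (by positivity)]
      refine (norm_sub_le _ _).trans ?_
      rw [norm_mul, norm_mul, b4]
      calc _ ≤ (|η| + ‖s‖ * |θ|) * y⁻¹ + ‖s‖ * y⁻¹ := by gcongr
        _ ≤ (‖s‖ * (|η| / c) + ‖s‖ * |θ|) * y⁻¹ + ‖s‖ * y⁻¹ := by gcongr
        _ = _ := by ring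
    have a3 : y ^ (c / 2 - s.re) * y⁻¹ ≤ x ^ (-(1 + c / 2)) := by
      rw [← Real.rpow_neg_one, ← Real.rpow_add hy0]
      calc y ^ (c / 2 - s.re + -1) ≤ y ^ (-(1 + c / 2)) :=
            Real.rpow_le_rpow_of_exponent_le (by linarith) (by linarith)
        _ ≤ _ := Real.rpow_le_rpow_of_nonpos hx0 hy (by linarith)
    rw [norm_mul]
    calc _ ≤ ((B.factorial / (c / 2) ^ B) * y ^ (c / 2 - s.re)) *
          (‖s‖ * (|η| / c + |θ| + 1) * y⁻¹) := by gcongr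
      _ = ‖s‖ * ((B.factorial / (c / 2) ^ B) * (|η| / c + |θ| + 1) *
          (y ^ (c / 2 - s.re) * y⁻¹)) := by ring
      _ ≤ _ := by rw [hW]; gcongr
  have hfd : ∀ y ∈ Icc x (x + 1), ‖f η θ s y - f η θ s x‖ ≤ W * (y - x) :=
    norm_image_sub_le_of_norm_deriv_le_segment'
      (fun y hy => (f_deriv (by linarith [hy.1]) (by linarith [hlog y hy.1])).hasDerivWithinAt)
      (fun y hy => hder y hy.1)
  have hQ := norm_image_sub_le_of_norm_deriv_le_segment' (a := x) (b := x + 1) (C := W)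
      (f := fun y : ℝ => P η θ s (Real.log y) - y * f η θ s x)
      (f' := fun y => f η θ s y - 1 * f η θ s x)
      (fun y hy => ((Q_deriv (by linarith [hy.1]) (by linarith [hlog y hy.1])
        (by linarith [hlog y hy.1]) ht).sub
        ((Complex.ofRealCLM.hasDerivAt (x := y)).mul_const (f η θ s x))).hasDerivWithinAt)
      (fun y hy => by
        rw [one_mul]
        refine (hfd y ⟨hy.1, hy.2.le⟩).trans ?_
        have := hy.2
        nlinarith) (x + 1) ⟨by linarith, le_rfl⟩
  rw [← norm_neg]
  convert hQ using 1
  · congr 1; push_cast; ring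
  · ring

lemma P_tendsto {η θ : ℝ} {s : ℂ} (hs : 1 < s.re) (ht : 0 < s.im) :
    Tendsto (P η θ s) atTop (𝓝 0) := by
  obtain ⟨B, hB⟩ := exists_nat_ge (|η| + |s.re| * |θ|)
  have h0 := (tendsto_rpow_mul_exp_neg_mul_atTop_nhds_zero (B : ℝ) (s.re - 1) (by linarith)).mul_const
    ((B.factorial / (s.im / 4) ^ B * Real.exp (s.im / 4)) *
      ∫ v in Ioi (0 : ℝ), Real.exp (-(s.im / 4) * v))
  rw [zero_mul] at h0
  refine squeeze_zero_norm' ?_ h0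
  filter_upwards [eventually_ge_atTop 1, eventually_ge_atTop (2 * |θ|)] with a ha haθ
  refine (norm_P_le hB ha haθ (by positivity : 0 < s.im / 4) (by linarith)).trans_eq ?_
  rw [Real.rpow_natCast]
  ring_nf

lemma summable_shift {p : ℝ} (hp : p < -1) (M : ℕ) :
    Summable (fun k : ℕ => ((M : ℝ) + k + 2) ^ p) := by
  have h := (summable_nat_add_iff (M + 2)).2 (Real.summable_nat_rpow.2 hp)
  refine h.congr fun k => ?_
  push_cast
  congr 1
  ring

set_option maxHeartbeats 2000000 in
lemma upper (η θ : ℝ)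
    (F : ℂ → ℂ)
    (hF_diff : DifferentiableOn ℂ F {s : ℂ | ¬(s.im = 0 ∧ s.re ≤ 1)})
    (hF_eq : ∀ s : ℂ, 1 < s.re →
      F s = ∑' n : ℕ, f η θ s ((n : ℝ) + 2)) (σ₁ σ₂ : ℝ) (h₁ : 0 < σ₁) (h₂ : σ₁ ≤ σ₂) :
      ∃ C > (0 : ℝ), ∀ s : ℂ,
        σ₁ ≤ s.re → s.re ≤ σ₂ → 1 ≤ s.im →
        ‖F s‖ ≤ C * (1 + |s.im|) := by
  set c := σ₁ / 2 with hc
  set d := σ₂ + 2 with hd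
  have hc0 : 0 < c := by positivity
  have hd0 : 0 < d := by linarith
  obtain ⟨B, hB⟩ := exists_nat_ge (|η| + d * |θ|)
  obtain ⟨M, hM⟩ : ∃ M : ℕ, max 1 (2 * |θ|) < Real.log ((M : ℝ) + 2) := by
    have : Tendsto (fun M : ℕ => Real.log ((M : ℝ) + 2)) atTop atTop :=
      Real.tendsto_log_atTop.comp (tendsto_atTop_add_const_right _ _ tendsto_natCast_atTop_atTop)
    exact (this.eventually_gt_atTop _).exists
  have hM1 : 1 < Real.log ((M : ℝ) + 2) := (le_max_left _ _).trans_lt hM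
  have hM2 : 2 * |θ| < Real.log ((M : ℝ) + 2) := (le_max_right _ _).trans_lt hM
  set X : ℕ → ℝ := fun k => (M : ℝ) + k + 2 with hX
  have hX1 : ∀ k, 1 ≤ X k := fun k => by simp only [hX]; linarith [M.cast_nonneg (α := ℝ), k.cast_nonneg (α := ℝ)]
  have hXs : ∀ k, X k + 1 = X (k + 1) := fun k => by simp only [hX]; push_cast; ring
  have hX0 : X 0 = M + 2 := by simp [hX]
  have hXl : ∀ k, Real.log ((M : ℝ) + 2) ≤ Real.log (X k) := fun k =>
    Real.log_le_log (by positivity) (by simp only [hX]; linarith [k.cast_nonneg (α := ℝ)])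
  have hXt : Tendsto X atTop atTop :=
    tendsto_atTop_add_const_right _ _ (tendsto_atTop_add_const_left _ _ tendsto_natCast_atTop_atTop)
  set U : Set ℂ := {s | c < s.re ∧ s.re < d ∧ 0 < s.im} with hU
  have hUo : IsOpen U := by
    have e : U = {s | c < s.re} ∩ ({s | s.re < d} ∩ {s | 0 < s.im}) := rfl
    rw [e]
    exact (isOpen_lt continuous_const Complex.continuous_re).inter
      ((isOpen_lt Complex.continuous_re continuous_const).inter
        (isOpen_lt continuous_const Complex.continuous_im))
  have hUc : IsPreconnected U := by
    have e : U = {s | c < s.re} ∩ ({s | s.re < d} ∩ {s | 0 < s.im}) := rfl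
    rw [e]
    exact ((convex_halfSpace_re_gt c).inter ((convex_halfSpace_re_lt d).inter
      (convex_halfSpace_im_gt 0))).isPreconnected
  have hs0 : ∀ s ∈ U, s ≠ 0 := fun s hs h => by
    have := hs.2.2
    simp [h] at this
  set D : ℕ → ℂ → ℂ := fun k s =>
    f η θ s (X k) - (P η θ s (Real.log (X (k + 1))) - P η θ s (Real.log (X k))) with hD
  set K := (B.factorial / (c / 2) ^ B) * (|η| / c + |θ| + 1) with hK
  set w : ℕ → ℝ := fun k => K * (X k) ^ (-(1 + c / 2)) with hw
  have hws : Summable w := (summable_shift (by linarith) M).mul_left K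
  have hDle : ∀ k, ∀ s ∈ U, ‖D k s‖ ≤ ‖s‖ * w k := fun k s hs => by
    have := incr_le (η := η) hc0 hB hs.1.le hs.2.1.le hs.2.2 (hX1 k) (hM1.trans_le (hXl k))
      (hM2.trans_le (hXl k))
    rw [hXs] at this
    exact this
  have hDle' : ∀ k, ∀ s ∈ U, ‖D k s / s‖ ≤ w k := fun k s hs => by
    rw [norm_div, div_le_iff₀ (norm_pos_iff.2 (hs0 s hs)), mul_comm]
    exact hDle k s hs
  have hPd : ∀ k, DifferentiableOn ℂ (fun s => P η θ s (Real.log (X k))) U := fun k s hs =>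
    (P_diff_s (hM1.trans_le (hXl k)).le (hM2.trans_le (hXl k)).le hs.2.2).differentiableWithinAt
  have hDd : ∀ k, DifferentiableOn ℂ (fun s => D k s / s) U := fun k =>
    ((f_diff_s.differentiableOn).sub ((hPd (k + 1)).sub (hPd k))).div differentiableOn_id hs0
  have hHd := differentiableOn_tsum_of_summable_norm hws hDd hUo hDle'
  set G : ℂ → ℂ := fun s => (∑ n ∈ Finset.range M, f η θ s ((n : ℝ) + 2))
    - P η θ s (Real.log (X 0)) + s * ∑' k, D k s / s with hG
  have hGd : DifferentiableOn ℂ G U :=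
    ((DifferentiableOn.fun_sum fun n _ => f_diff_s.differentiableOn).sub (hPd 0)).add
      (differentiableOn_id.mul hHd)
  have hFG : ∀ s ∈ U, 1 < s.re → F s = G s := by
    intro s hs hs1
    have hB' : |η| + |s.re| * |θ| ≤ B := by
      refine le_trans ?_ hB
      rw [abs_of_nonneg (by linarith : 0 ≤ s.re)]
      have := hs.2.1.le
      gcongr
    have hfs' : Summable (fun k => f η θ s (X k)) := by
      refine Summable.of_norm_bounded (g := fun k => (B.factorial / ((s.re - 1) / 2) ^ B) *
        (X k) ^ ((s.re - 1) / 2 - s.re)) ((summable_shift (by linarith) M).mul_left _) fun k => ?_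
      exact norm_f_le hB' (by linarith [hX1 k]) (hM1.trans_le (hXl k)).le (by linarith)
    have hsh : (fun k => f η θ s (X k)) = fun k : ℕ => f η θ s (((k + M : ℕ) : ℝ) + 2) := by
      funext k
      simp only [hX]
      push_cast
      congr 1
      ring
    have hfs : Summable (fun n : ℕ => f η θ s ((n : ℝ) + 2)) := by
      rw [hsh] at hfs'
      exact (summable_nat_add_iff (f := fun n : ℕ => f η θ s ((n : ℝ) + 2)) M).1 hfs'
    have hDs : Summable (fun k => D k s) :=
      Summable.of_norm_bounded (hws.mul_left ‖s‖) fun k => hDle k s hs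
    have t1 := hfs'.hasSum.tendsto_sum_nat
    have t2 := hDs.hasSum.tendsto_sum_nat
    have t3 : Tendsto (fun m => P η θ s (Real.log (X m))) atTop (𝓝 0) :=
      (P_tendsto hs1 hs.2.2).comp (Real.tendsto_log_atTop.comp hXt)
    have t4 := (t2.add t3).sub_const (P η θ s (Real.log (X 0)))
    have e : ∀ m, ∑ k ∈ Finset.range m, f η θ s (X k) =
        ∑ k ∈ Finset.range m, D k s + P η θ s (Real.log (X m)) - P η θ s (Real.log (X 0)) := by
      intro m
      have := Finset.sum_range_sub (fun k => P η θ s (Real.log (X k))) m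
      simp only [hD, Finset.sum_sub_distrib] at this ⊢
      linear_combination this
    have t5 := tendsto_nhds_unique t1 (t4.congr fun m => (e m).symm)
    rw [hF_eq s hs1, ← hfs.sum_add_tsum_nat_add M, ← hsh, t5]
    simp only [hG]
    rw [tsum_div_const, mul_div_cancel₀ _ (hs0 s hs)]
    ring
  have hFd : DifferentiableOn ℂ F U := hF_diff.mono fun s hs h => by
    have := hs.2.2
    rw [h.1] at this
    exact lt_irrefl _ this
  set z₀ : ℂ := ⟨σ₂ + 3 / 2, 1⟩ with hz
  have hz0 : z₀ ∈ U := ⟨show c < σ₂ + 3 / 2 by linarith, show σ₂ + 3 / 2 < d by linarith,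
    show (0 : ℝ) < 1 from one_pos⟩
  have hz1 : 1 < z₀.re := show 1 < σ₂ + 3 / 2 by linarith
  have hev : F =ᶠ[𝓝 z₀] G := by
    filter_upwards [hUo.mem_nhds hz0,
      (isOpen_lt continuous_const Complex.continuous_re).mem_nhds hz1] with s hs hs1
    exact hFG s hs hs1
  have hEq : EqOn F G U := (hFd.analyticOnNhd hUo).eqOn_of_preconnected_of_eventuallyEq
    (hGd.analyticOnNhd hUo) hUc hz0 hev
  set A := ∑ n ∈ Finset.range M, Real.exp ((|η| + d * |θ|) * |Real.log (Real.log ((n : ℝ) + 2))|) with hA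
  set R := Real.exp (Real.log (X 0)) * ((Real.log (X 0)) ^ B * (B.factorial / (1 / 4 : ℝ) ^ B *
    Real.exp (1 / 4))) * ∫ v in Ioi (0 : ℝ), Real.exp (-(1 / 4) * v) with hR
  have hX0l : 1 < Real.log (X 0) := hM1.trans_le (hXl 0)
  have hA0 : 0 ≤ A := Finset.sum_nonneg fun n _ => (Real.exp_pos _).le
  have hR0 : 0 ≤ R := by
    have : 0 ≤ ∫ v in Ioi (0 : ℝ), Real.exp (-(1 / 4) * v) := integral_nonneg fun v => by positivity
    positivity
  have hS0 : 0 ≤ ∑' k, w k := tsum_nonneg fun k => by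
    have hx := hX1 k
    have hk : 0 ≤ K := by rw [hK]; positivity
    exact mul_nonneg hk (Real.rpow_nonneg (by linarith) _)
  refine ⟨A + R + (d + 1) * (∑' k, w k) + 1, by
    have := mul_nonneg (by linarith : (0 : ℝ) ≤ d + 1) hS0
    linarith, fun s hs1 hs2 ht => ?_⟩
  have hsU : s ∈ U := ⟨by linarith, by linarith, by linarith⟩
  have hsre : 0 ≤ s.re := by linarith
  have hB' : |η| + |s.re| * |θ| ≤ |η| + d * |θ| := by
    rw [abs_of_nonneg hsre]
    have := hsU.2.1.le
    gcongr
  have b1 : ‖∑ n ∈ Finset.range M, f η θ s ((n : ℝ) + 2)‖ ≤ A := by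
    refine (norm_sum_le _ _).trans (Finset.sum_le_sum fun n _ => ?_)
    rw [norm_f_eq, Real.exp_le_exp]
    have hl : 0 ≤ Real.log ((n : ℝ) + 2) := Real.log_nonneg (by linarith [n.cast_nonneg (α := ℝ)])
    have : |η - s.re * θ| ≤ |η| + d * |θ| := by
      refine le_trans ?_ hB'
      rw [← abs_mul]
      exact abs_sub _ _
    calc _ ≤ (η - s.re * θ) * Real.log (Real.log ((n : ℝ) + 2)) := by
          linarith [mul_nonneg hsre hl]
      _ ≤ |η - s.re * θ| * |Real.log (Real.log ((n : ℝ) + 2))| := by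
          rw [← abs_mul]; exact le_abs_self _
      _ ≤ _ := by gcongr
  have b2 : ‖P η θ s (Real.log (X 0))‖ ≤ R := by
    refine (norm_P_le (hB'.trans hB) hX0l.le (hM2.trans_le (hXl 0)).le
      (by norm_num : (0 : ℝ) < 1 / 4) (by linarith)).trans ?_
    rw [hR]
    have : 0 ≤ ∫ v in Ioi (0 : ℝ), Real.exp (-(1 / 4) * v) := integral_nonneg fun v => by positivity
    gcongr
    nlinarith
  have b3 : ‖s * ∑' k, D k s / s‖ ≤ (d + 1) * (1 + |s.im|) * ∑' k, w k := by
    rw [norm_mul]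
    have h1 : ‖∑' k, D k s / s‖ ≤ ∑' k, w k :=
      tsum_of_norm_bounded hws.hasSum fun k => hDle' k s hsU
    have h2 : ‖s‖ ≤ (d + 1) * (1 + |s.im|) := by
      refine (Complex.norm_le_abs_re_add_abs_im s).trans ?_
      rw [abs_of_nonneg hsre]
      nlinarith [hsU.2.1, abs_nonneg s.im]
    gcongr
  rw [hEq hsU]
  have : ‖G s‖ ≤ A + R + (d + 1) * (1 + |s.im|) * ∑' k, w k :=
    (norm_add_le _ _).trans (add_le_add ((norm_sub_le _ _).trans (add_le_add b1 b2)) b3)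
  have m1 := mul_nonneg hA0 (abs_nonneg s.im)
  have m2 := mul_nonneg hR0 (abs_nonneg s.im)
  refine this.trans ?_
  generalize (∑' k, w k) = S at *
  have e : (A + R + (d + 1) * S + 1) * (1 + |s.im|) = A + R + (d + 1) * (1 + |s.im|) * S
      + (A * |s.im| + R * |s.im| + 1 + |s.im|) := by ring
  rw [e]
  linarith [abs_nonneg s.im]

lemma f_conj (η θ : ℝ) (s : ℂ) (x : ℝ) :
    (starRingEnd ℂ) (f η θ ((starRingEnd ℂ) s) x) = f η θ s x := by
  rw [f, ← Complex.exp_conj, f]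
  simp

end ZetaAux

open ZetaAux in
/-- Lemma 2.2 (polynomial growth): the analytic continuation `F` of
`ζ_{η,θ}` to `ℂ \ (−∞, 1]` grows at most polynomially in `|Im s|` on vertical
strips with bounded positive real part. -/
theorem zeta_eta_theta_polynomial_growth (η θ : ℝ)
    (F : ℂ → ℂ)
    (hF_diff : DifferentiableOn ℂ F {s : ℂ | ¬(s.im = 0 ∧ s.re ≤ 1)})
    (hF_eq : ∀ s : ℂ, 1 < s.re →
      F s = ∑' n : ℕ,
        ((Real.log ((n : ℝ) + 2)) ^ η : ℝ) *
          Complex.exp (-s * ((Real.log ((n : ℝ) + 2) : ℝ)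
            + θ * Real.log (Real.log ((n : ℝ) + 2))))) :
    ∀ σ₁ σ₂ : ℝ, 0 < σ₁ → σ₁ ≤ σ₂ →
      ∃ C > (0 : ℝ), ∃ k : ℕ, ∀ s : ℂ,
        σ₁ ≤ s.re → s.re ≤ σ₂ → 1 ≤ |s.im| →
        ‖F s‖ ≤ C * (1 + |s.im|) ^ k := by
  intro σ₁ σ₂ h₁ h₂
  have hE : ∀ s : ℂ, 1 < s.re → F s = ∑' n : ℕ, f η θ s ((n : ℝ) + 2) := fun s hs => by
    rw [hF_eq s hs]
    exact tsum_congr fun n => term_eq η θ s n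
  have hE' : ∀ s : ℂ, 1 < s.re →
      ((starRingEnd ℂ) ∘ F ∘ (starRingEnd ℂ)) s = ∑' n : ℕ, f η θ s ((n : ℝ) + 2) := fun s hs => by
    simp only [Function.comp]
    rw [hE _ (by simpa using hs), Complex.conj_tsum]
    exact tsum_congr fun n => f_conj η θ s _
  have hopen : IsOpen {s : ℂ | ¬(s.im = 0 ∧ s.re ≤ 1)} :=
    ((isClosed_eq Complex.continuous_im continuous_const).inter
      (isClosed_le Complex.continuous_re continuous_const)).isOpen_compl
  have hd' : DifferentiableOn ℂ ((starRingEnd ℂ) ∘ F ∘ (starRingEnd ℂ))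
      {s : ℂ | ¬(s.im = 0 ∧ s.re ≤ 1)} := fun s hs => by
    have hs' : (starRingEnd ℂ) s ∈ {s : ℂ | ¬(s.im = 0 ∧ s.re ≤ 1)} := by simpa using hs
    have h := (hF_diff.differentiableAt (hopen.mem_nhds hs')).conj_conj
    rw [Complex.conj_conj] at h
    exact h.differentiableWithinAt
  obtain ⟨C₁, hC₁, H₁⟩ := upper η θ F hF_diff hE σ₁ σ₂ h₁ h₂
  obtain ⟨C₂, hC₂, H₂⟩ := upper η θ _ hd' hE' σ₁ σ₂ h₁ h₂
  refine ⟨C₁ + C₂, by positivity, 1, fun s hs1 hs2 ht => ?_⟩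
  rw [pow_one, add_mul]
  have hp : 0 ≤ 1 + |s.im| := by positivity
  rcases le_abs.1 ht with h | h
  · have := H₁ s hs1 hs2 h
    nlinarith
  · have := H₂ ((starRingEnd ℂ) s) (by simpa using hs1) (by simpa using hs2) (by simpa using h)
    simp only [Function.comp, Complex.conj_conj, Complex.norm_conj, Complex.conj_im, abs_neg] at this
    nlinarith
end

section
/- Let η(s) := Σ_{n=0}^∞ (n!)^{−s}, which converges absolutely and defines an analytic function on the right half-plane {s ∈ ℂ : Re(s) > 0}. Then s·log(1/s)·η(s) → 1 as s → 0 along the positive real axis. -/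
open Filter Real

/-- `M ^ n ≤ n! e ^ M` in logarithmic form, with the summability and bound it yields. -/
theorem fds_upper (s m : ℝ) (hs : 0 < s) (hm : 0 < m) :
    Summable (fun n : ℕ => Real.exp (-s * Real.log (n.factorial : ℝ))) ∧
    ∑' n : ℕ, Real.exp (-s * Real.log (n.factorial : ℝ)) ≤
      Real.exp (s * Real.exp m) * ((1 + s * m) / (s * m)) := by
  have hx : 0 < s * m := mul_pos hs hm
  have key : ∀ n : ℕ, Real.exp (-s * Real.log (n.factorial : ℝ)) ≤
      Real.exp (s * Real.exp m) * (Real.exp (-(s * m))) ^ n := by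
    intro n
    have h1 : (Real.exp m) ^ n / (n.factorial : ℝ) ≤ Real.exp (Real.exp m) :=
      Real.pow_div_factorial_le_exp _ (Real.exp_pos m).le n
    have hf : (0 : ℝ) < n.factorial := by exact_mod_cast n.factorial_pos
    have h2 : n * m - Real.log (n.factorial : ℝ) ≤ Real.exp m := by
      have h3 := Real.log_le_log (by positivity) h1
      rw [Real.log_div (by positivity) (by positivity), Real.log_pow, Real.log_exp,
        Real.log_exp] at h3
      exact h3
    rw [← Real.exp_nat_mul, ← Real.exp_add]
    apply Real.exp_le_exp.2
    have := mul_le_mul_of_nonneg_left h2 hs.le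
    nlinarith
  have hr0 : 0 ≤ Real.exp (-(s * m)) := (Real.exp_pos _).le
  have hr1 : Real.exp (-(s * m)) < 1 := Real.exp_lt_one_iff.2 (by linarith)
  have hg : HasSum (fun n : ℕ => Real.exp (s * Real.exp m) * (Real.exp (-(s * m))) ^ n)
      (Real.exp (s * Real.exp m) * (1 - Real.exp (-(s * m)))⁻¹) :=
    (hasSum_geometric_of_lt_one hr0 hr1).mul_left _
  have hsum : Summable (fun n : ℕ => Real.exp (-s * Real.log (n.factorial : ℝ))) :=
    Summable.of_nonneg_of_le (fun n => (Real.exp_pos _).le) key hg.summable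
  refine ⟨hsum, (hsum.tsum_le_tsum key hg.summable).trans ?_⟩
  rw [hg.tsum_eq]
  apply mul_le_mul_of_nonneg_left _ (Real.exp_pos _).le
  have h4 : Real.exp (-(s * m)) ≤ (1 + s * m)⁻¹ := by
    rw [Real.exp_neg]
    apply inv_anti₀ (by linarith)
    linarith [Real.add_one_le_exp (s * m)]
  have h5 : (s * m) / (1 + s * m) ≤ 1 - Real.exp (-(s * m)) := by
    have : (s * m) / (1 + s * m) = 1 - (1 + s * m)⁻¹ := by
      field_simp
      ring
    linarith
  have h6 := inv_anti₀ (by positivity) h5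
  rwa [inv_div] at h6

theorem fds_lower (s : ℝ) (hs : 0 < s) (hs1 : s < 1)
    (hsum : Summable (fun n : ℕ => Real.exp (-s * Real.log (n.factorial : ℝ)))) :
    (1 - s) / (s * (Real.log (1 / s) + s)) ≤
      ∑' n : ℕ, Real.exp (-s * Real.log (n.factorial : ℝ)) := by
  obtain ⟨N, hN⟩ : ∃ N : ℕ, N = ⌈1 / s⌉₊ := ⟨_, rfl⟩
  have hN1 : 1 / s ≤ N := hN ▸ Nat.le_ceil _
  have hN2 : (N : ℝ) < 1 / s + 1 := hN ▸ Nat.ceil_lt_add_one (by positivity)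
  have h1s : 1 < 1 / s := by rw [lt_div_iff₀ hs]; linarith
  have hNpos : (1 : ℝ) < N := lt_of_lt_of_le h1s hN1
  have hlog : 0 < Real.log N := Real.log_pos hNpos
  have hlogle : Real.log N ≤ Real.log (1 / s) + s := by
    have e : 1 / s + 1 = (1 / s) * (1 + s) := by field_simp
    have h := Real.log_le_log (by linarith) hN2.le
    rw [e, Real.log_mul (by positivity) (by positivity)] at h
    linarith [Real.log_le_sub_one_of_pos (show 0 < 1 + s by linarith)]
  set r := Real.exp (-(s * Real.log N)) with hr
  have hx : 0 < s * Real.log N := mul_pos hs hlog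
  have hr1 : r < 1 := Real.exp_lt_one_iff.2 (by linarith)
  have hr2 : 1 - r ≤ s * Real.log N := by
    linarith [Real.add_one_le_exp (-(s * Real.log N))]
  have key : ∀ n ∈ Finset.range N, r ^ n ≤ Real.exp (-s * Real.log (n.factorial : ℝ)) := by
    intro n hn
    have hn' := Finset.mem_range.1 hn
    have hf : (0 : ℝ) < n.factorial := by exact_mod_cast n.factorial_pos
    have h1 : (n.factorial : ℝ) ≤ (N : ℝ) ^ n := by
      exact_mod_cast (Nat.factorial_le_pow n).trans (Nat.pow_le_pow_left hn'.le n)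
    have h2 := Real.log_le_log hf h1
    rw [Real.log_pow] at h2
    rw [hr, ← Real.exp_nat_mul]
    apply Real.exp_le_exp.2
    nlinarith [mul_le_mul_of_nonneg_left h2 hs.le]
  have hrN : r ^ N ≤ s := by
    have h1 : 1 ≤ s * N := by
      have := mul_le_mul_of_nonneg_left hN1 hs.le
      rwa [mul_one_div_cancel hs.ne'] at this
    calc r ^ N = Real.exp (-((s * N) * Real.log N)) := by
          rw [hr, ← Real.exp_nat_mul]; congr 1; ring
      _ ≤ Real.exp (-Real.log N) := by
          apply Real.exp_le_exp.2
          nlinarith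
      _ = (N : ℝ)⁻¹ := by rw [Real.exp_neg, Real.exp_log (by linarith)]
      _ ≤ (1 / s)⁻¹ := inv_anti₀ (by positivity) hN1
      _ = s := by simp
  have hge : (1 - r ^ N) / (1 - r) = ∑ n ∈ Finset.range N, r ^ n := by
    rw [geom_sum_eq hr1.ne, ← neg_div_neg_eq]; congr 1 <;> ring
  calc (1 - s) / (s * (Real.log (1 / s) + s)) ≤ (1 - s) / (1 - r) := by
        apply div_le_div_of_nonneg_left (by linarith) (by linarith)
        exact hr2.trans (mul_le_mul_of_nonneg_left hlogle hs.le)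
    _ ≤ (1 - r ^ N) / (1 - r) := by
        apply div_le_div_of_nonneg_right _ (by linarith)
        linarith
    _ = ∑ n ∈ Finset.range N, r ^ n := hge
    _ ≤ ∑ n ∈ Finset.range N, Real.exp (-s * Real.log (n.factorial : ℝ)) :=
        Finset.sum_le_sum key
    _ ≤ _ := hsum.sum_le_tsum _ (fun n _ => (Real.exp_pos _).le)

/-- Lemma 3.1 (asymptotics at the origin): for the factorial Dirichlet series
`η(s) = ∑_{n=0}^∞ (n!)^{−s}` one has `η(s) ∼ 1/(s log(1/s))` as `s ↓ 0` along
the positive real axis, i.e. `s · log(1/s) · η(s) → 1`. -/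
theorem factorial_dirichlet_series_asymptotics_at_zero :
    Filter.Tendsto
      (fun s : ℝ =>
        s * Real.log (1 / s) *
          ∑' n : ℕ, Real.exp (-s * Real.log (n.factorial : ℝ)))
      (nhdsWithin 0 (Set.Ioi (0 : ℝ))) (nhds 1) := by
  have hs0 : Tendsto (fun s : ℝ => s) (nhdsWithin 0 (Set.Ioi (0 : ℝ))) (nhds 0) :=
    tendsto_nhdsWithin_of_tendsto_nhds tendsto_id
  have hL : Tendsto (fun s : ℝ => Real.log (1 / s)) (nhdsWithin 0 (Set.Ioi (0 : ℝ))) atTop := by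
    simp only [one_div]
    exact Real.tendsto_log_atTop.comp tendsto_inv_nhdsGT_zero
  have hsL : Tendsto (fun s : ℝ => s * Real.log (1 / s))
      (nhdsWithin 0 (Set.Ioi (0 : ℝ))) (nhds 0) := by
    have h := (Real.continuous_mul_log.tendsto 0).neg
    simp only [Real.log_zero, mul_zero, neg_zero] at h
    refine (tendsto_nhdsWithin_of_tendsto_nhds h).congr (fun s => ?_)
    rw [one_div, Real.log_inv]; ring
  have hLinv : Tendsto (fun s : ℝ => (Real.log (1 / s))⁻¹)
      (nhdsWithin 0 (Set.Ioi (0 : ℝ))) (nhds 0) := tendsto_inv_atTop_zero.comp hL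
  have hq : Tendsto (fun s : ℝ => Real.log (Real.log (1 / s)) / Real.log (1 / s))
      (nhdsWithin 0 (Set.Ioi (0 : ℝ))) (nhds 0) :=
    (Real.isLittleO_log_id_atTop.tendsto_div_nhds_zero).comp hL
  have hlo : Tendsto (fun s : ℝ => (1 - s) / (1 + s * (Real.log (1 / s))⁻¹))
      (nhdsWithin 0 (Set.Ioi (0 : ℝ))) (nhds 1) := by
    have := (hs0.const_sub 1).div ((hs0.mul hLinv).const_add 1) (by norm_num)
    simpa [Pi.div_def] using this
  have hup : Tendsto (fun s : ℝ => Real.exp ((Real.log (1 / s))⁻¹) *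
      ((1 + (s * Real.log (1 / s)) * (1 - Real.log (Real.log (1 / s)) / Real.log (1 / s))) /
        (1 - Real.log (Real.log (1 / s)) / Real.log (1 / s))))
      (nhdsWithin 0 (Set.Ioi (0 : ℝ))) (nhds 1) := by
    have h1 := hq.const_sub 1
    have h2 := ((Real.continuous_exp.tendsto 0).comp hLinv).mul
      (((hsL.mul h1).const_add 1).div h1 (by norm_num))
    simpa using h2
  have hpos : ∀ᶠ s : ℝ in nhdsWithin 0 (Set.Ioi (0 : ℝ)), 0 < s := self_mem_nhdsWithin
  have hlt : ∀ᶠ s : ℝ in nhdsWithin 0 (Set.Ioi (0 : ℝ)), s < 1 :=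
    hs0.eventually_lt_const (by norm_num)
  refine tendsto_of_tendsto_of_tendsto_of_le_of_le' hlo hup ?_ ?_
  · filter_upwards [hpos, hlt, hL.eventually_gt_atTop 0] with s h0 h1 h2
    have h3 := fds_lower s h0 h1 (fds_upper s 1 h0 one_pos).1
    refine le_trans (le_of_eq ?_) (mul_le_mul_of_nonneg_left h3 (by positivity))
    generalize Real.log (1 / s) = L at *
    field_simp
  · filter_upwards [hpos, hL.eventually_gt_atTop 0] with s h0 h2
    have e1 : Real.log (1 / s) = -Real.log s := by rw [one_div, Real.log_inv]
    have hll : Real.log (Real.log (1 / s)) ≤ Real.log (1 / s) - 1 :=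
      Real.log_le_sub_one_of_pos h2
    have hm : 0 < Real.log (1 / s) - Real.log (Real.log (1 / s)) := by linarith
    have h3 := (fds_upper s _ h0 hm).2
    have e2 : s * Real.exp (Real.log (1 / s) - Real.log (Real.log (1 / s))) =
        (Real.log (1 / s))⁻¹ := by
      rw [Real.exp_sub, Real.exp_log (by positivity), Real.exp_log h2]
      field_simp
    rw [e2] at h3
    refine (mul_le_mul_of_nonneg_left h3 (by positivity)).trans (le_of_eq ?_)
    generalize Real.log (Real.log (1 / s)) = K at *
    generalize Real.log (1 / s) = L at *
    have e3 : 1 - K / L = (L - K) / L := by field_simp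
    rw [e3]
    have := hm.ne'
    field_simp
end

section
/- Let η(s) := Σ_{n=0}^∞ (n!)^{−s} for Re(s) > 0. The imaginary axis is a natural boundary for η: for every t ∈ ℝ and every ε > 0, there is no function g analytic on the open ball B(i·t, ε) ⊆ ℂ such that g(s) = η(s) for all s ∈ B(i·t, ε) with Re(s) > 0. -/
open Filter Complex

noncomputable def lf (n : ℕ) : ℝ := Real.log (n.factorial : ℝ)

lemma lf_succ (n : ℕ) : lf (n+1) = lf n + Real.log (n+1) := by
  unfold lf
  rw [Nat.factorial_succ]
  push_cast
  rw [Real.log_mul (by positivity) (by positivity)]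
  ring

lemma lf_nonneg (n : ℕ) : 0 ≤ lf n :=
  Real.log_nonneg (by exact_mod_cast Nat.one_le_iff_ne_zero.mpr (Nat.factorial_ne_zero n))

lemma lf_le (n : ℕ) : lf n ≤ n * Real.log (n+1) := by
  unfold lf
  rw [← Real.log_pow]
  apply Real.log_le_log (by positivity)
  have h : n.factorial ≤ (n+1)^n := (Nat.factorial_le_pow n).trans (Nat.pow_le_pow_left (by omega) n)
  exact_mod_cast h

lemma lf_slope {n m : ℕ} (hn : 1 ≤ n) (h : n ≤ m) : lf n / n ≤ lf m / m := by
  induction m, h using Nat.le_induction with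
  | base => exact le_rfl
  | succ k hk ih =>
    refine ih.trans ?_
    have hk0 : (0:ℝ) < k := by exact_mod_cast (show 0 < k by omega)
    rw [div_le_div_iff₀ hk0 (by positivity), lf_succ]
    push_cast
    have := lf_le k
    nlinarith

lemma lf_sep {n m : ℕ} (hm : 1 ≤ m) :
    |((n:ℤ) - (m:ℤ) : ℤ)| * (lf m / m) ≤ |lf n - lf m| := by
  have hm0 : (0:ℝ) < m := by exact_mod_cast hm
  have hc : lf m = m * (lf m / m) := by field_simp
  set c := lf m / m with hcdef
  have hc0 : 0 ≤ c := div_nonneg (lf_nonneg m) hm0.le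
  push_cast
  rcases le_total n m with h | h
  · have hh : (n:ℝ) ≤ m := by exact_mod_cast h
    have h1 : lf n ≤ n * c := by
      rcases Nat.eq_zero_or_pos n with h0 | h0
      · subst h0; simp [lf]
      · have := lf_slope h0 h
        rw [← hcdef, div_le_iff₀ (by exact_mod_cast h0)] at this
        linarith
    rw [abs_of_nonpos (by linarith), abs_of_nonpos (by nlinarith)]
    linarith
  · have hh : (m:ℝ) ≤ n := by exact_mod_cast h
    have h1 : n * c ≤ lf n := by
      have := lf_slope hm h
      rw [← hcdef, le_div_iff₀ (by linarith)] at this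
      linarith
    rw [abs_of_nonneg (by linarith), abs_of_nonneg (by nlinarith)]
    linarith

lemma lf_tendsto : Tendsto (fun m : ℕ => lf m / m) atTop atTop := by
  rw [tendsto_atTop]
  intro b
  have h := (FloorSemiring.tendsto_pow_div_factorial_atTop (Real.exp b)).eventually
    (gt_mem_nhds zero_lt_one)
  filter_upwards [h, eventually_ge_atTop 1] with m hm h1
  have hm0 : (0:ℝ) < m := by exact_mod_cast h1
  rw [div_lt_one (by positivity)] at hm
  rw [le_div_iff₀ hm0]
  have := Real.log_le_log (by positivity) hm.le
  rw [Real.log_pow, Real.log_exp] at this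
  unfold lf; linarith

lemma lf_summable {σ : ℝ} (hσ : 0 < σ) : Summable (fun n => Real.exp (-σ * lf n)) := by
  have hs : Summable (fun n : ℕ => Real.exp (-σ) ^ n) :=
    summable_geometric_of_lt_one (Real.exp_pos _).le (by simpa using hσ)
  refine hs.of_norm_bounded_eventually_nat ?_
  filter_upwards [lf_tendsto.eventually_ge_atTop 1, eventually_ge_atTop 1] with n h h1
  have hm0 : (0:ℝ) < n := by exact_mod_cast h1
  rw [le_div_iff₀ hm0] at h
  rw [Real.norm_eq_abs, abs_of_pos (Real.exp_pos _), ← Real.exp_nat_mul]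
  apply Real.exp_le_exp.mpr
  nlinarith

noncomputable def kerT (T u : ℝ) : ℂ :=
  ∫ x in (-T)..T, ((T:ℂ)^2 - (x:ℂ)^2) * Complex.exp (-(u * x) * I)

lemma kerT_zero (T : ℝ) : kerT T 0 = ((4/3 * T^3 : ℝ) : ℂ) := by
  have : kerT T 0 = ((∫ x in (-T)..T, (T^2 - x^2) : ℝ) : ℂ) := by
    rw [← intervalIntegral.integral_ofReal]
    simp [kerT]
  rw [this]
  congr 1
  rw [intervalIntegral.integral_sub (by simp) (by simp)]
  simp
  ring

lemma kerT_bound {T u : ℝ} (hT : 0 < T) (hu : 1 ≤ |u|) : ‖kerT T u‖ ≤ (4*T+4) / u^2 := by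
  have hu0 : u ≠ 0 := by rintro rfl; norm_num at hu
  have huc : (u:ℂ) ≠ 0 := by exact_mod_cast hu0
  let G : ℝ → ℂ := fun x => Complex.exp (-(u * x) * I) *
    (((T:ℂ)^2 - (x:ℂ)^2) * I / u - 2 * x / u^2 + 2 * I / u^3)
  have hd : ∀ x ∈ Set.uIcc (-T) T, HasDerivAt G
      (((T:ℂ)^2 - (x:ℂ)^2) * Complex.exp (-(u * x) * I)) x := by
    intro x _
    have h0 : HasDerivAt (fun y : ℝ => (y:ℂ)) 1 x := Complex.ofRealCLM.hasDerivAt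
    have h1 := (((h0.const_mul (u:ℂ)).neg).mul_const I).cexp
    have h2 := (((((h0.pow 2).const_sub ((T:ℂ)^2)).mul_const I).div_const (u:ℂ)).sub
      ((h0.const_mul 2).div_const ((u:ℂ)^2))).add_const (2 * I / (u:ℂ)^3)
    refine (h1.mul h2).congr_deriv ?_
    simp only [Pi.neg_apply, Pi.pow_apply, Pi.sub_apply]
    field_simp
    push_cast
    have hI : I^2 = -1 := I_sq
    linear_combination (-(u:ℂ)^2 * (T^2 - x^2) - 2) * hI
  have hkerG : kerT T u = G T - G (-T) := by
    apply intervalIntegral.integral_eq_sub_of_hasDerivAt hd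
    apply Continuous.intervalIntegrable
    fun_prop
  have hb : ∀ x : ℝ, x^2 = T^2 → ‖G x‖ ≤ (2*T+2)/u^2 := by
    intro x hx
    have hxa : |x| = T := by
      rw [← abs_of_pos hT]; exact (sq_eq_sq_iff_abs_eq_abs _ _).1 hx
    have hx' : (T:ℂ)^2 - (x:ℂ)^2 = 0 := by
      rw [sub_eq_zero]; exact_mod_cast hx.symm
    simp only [G]
    rw [norm_mul, hx', show (-((u:ℂ) * x) * I) = ((-(u*x) : ℝ) : ℂ) * I by push_cast; ring,
      Complex.norm_exp_ofReal_mul_I, one_mul]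
    have e : (0 * I / u - 2 * x / u^2 + 2 * I / u^3 : ℂ) = (-2 * x + 2 * I / u) / u^2 := by
      field_simp; ring
    rw [e, norm_div]
    have : ‖(u:ℂ)^2‖ = u^2 := by simp
    rw [this]
    gcongr
    refine (norm_add_le _ _).trans ?_
    simp only [norm_mul, norm_div, norm_neg, Complex.norm_real, Complex.norm_I, Real.norm_eq_abs, hxa,
      Complex.norm_two]
    have : (2 * 1 / |u|) ≤ 2 := by rw [div_le_iff₀ (by linarith)]; linarith
    linarith
  rw [hkerG]
  refine (norm_sub_le _ _).trans ?_
  have h1 := hb T rfl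
  have h2 := hb (-T) (by ring)
  calc _ ≤ (2*T+2)/u^2 + (2*T+2)/u^2 := add_le_add h1 h2
    _ = _ := by ring

lemma series_hasSum {σ t T : ℝ} (hσ : 0 < σ) (c : ℝ) :
    HasSum (fun n => Complex.exp (-(σ + t * I) * (lf n : ℂ)) * kerT T (lf n - c))
      (∫ x in (-T)..T, ((T:ℂ)^2 - (x:ℂ)^2) *
        (∑' n : ℕ, Complex.exp (-(σ + (t + x) * I) * (lf n : ℂ))) * Complex.exp (c * x * I)) := by
  have key := intervalIntegral.hasSum_integral_of_dominated_convergence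
    (μ := MeasureTheory.volume) (a := -T) (b := T)
    (F := fun (n : ℕ) (x : ℝ) => ((T:ℂ)^2 - (x:ℂ)^2) *
        Complex.exp (-(σ + (t + x) * I) * (lf n : ℂ)) * Complex.exp (c * x * I))
    (f := fun x : ℝ => ((T:ℂ)^2 - (x:ℂ)^2) *
        (∑' n : ℕ, Complex.exp (-(σ + (t + x) * I) * (lf n : ℂ))) * Complex.exp (c * x * I))
    (fun n x => ‖((T:ℂ)^2 - (x:ℂ)^2)‖ * Real.exp (-σ * lf n)) ?_ ?_ ?_ ?_ ?_
  · refine Eq.mp (congrArg (fun F : ℕ → ℂ => HasSum F _) (funext fun n => ?_)) key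
    symm
    unfold kerT
    rw [← intervalIntegral.integral_const_mul]
    congr 1
    funext x
    have e : Complex.exp (-(σ + t * I) * (lf n : ℂ)) *
        Complex.exp (-(((lf n - c : ℝ) : ℂ) * x) * I) =
        Complex.exp (-(σ + (t + x) * I) * (lf n : ℂ)) * Complex.exp (c * x * I) := by
      rw [← Complex.exp_add, ← Complex.exp_add]
      congr 1
      push_cast
      ring
    linear_combination ((T:ℂ)^2 - (x:ℂ)^2) * e
  · intro n
    apply Continuous.aestronglyMeasurable
    fun_prop
  · intro n
    refine .of_forall fun x _ => ?_
    rw [norm_mul, norm_mul, show (c:ℂ) * x * I = ((c * x : ℝ) : ℂ) * I by push_cast; ring,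
      Complex.norm_exp_ofReal_mul_I, mul_one, Complex.norm_exp]
    simp
  · exact .of_forall fun x _ => (lf_summable hσ).mul_left _
  · simp_rw [tsum_mul_left]
    apply Continuous.intervalIntegrable
    fun_prop
  · refine .of_forall fun x _ => ?_
    refine HasSum.mul_right _ (HasSum.mul_left _ (Summable.hasSum ?_))
    refine Summable.of_norm_bounded (lf_summable hσ) fun n => ?_
    rw [Complex.norm_exp]
    simp

lemma series_bound {σ t T : ℝ} (hσ : 0 < σ) (hT : 0 < T) {m : ℕ} (hm : 1 ≤ m)
    (hc : 1 ≤ lf m / m) {J : ℂ}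
    (hJ : HasSum (fun n => Complex.exp (-(σ + t * I) * (lf n : ℂ)) * kerT T (lf n - lf m)) J) :
    Real.exp (-σ * lf m) * (4/3 * T^3) ≤
      ‖J‖ + (4*T+4) / (lf m / m)^2 * ∑' k : ℤ, 1 / (k:ℝ)^2 := by
  have hS : Summable (fun k : ℤ => 1 / (k:ℝ)^2) := Real.summable_one_div_int_pow.2 (by norm_num)
  set c := lf m / m with hcdef
  have hinj : Function.Injective (fun n : ℕ => (n:ℤ) - (m:ℤ)) := by
    intro a b h; simpa using h
  have hS' := hS.comp_injective hinj
  have hle : ∑' n : ℕ, 1 / ((((n:ℤ) - (m:ℤ) : ℤ)):ℝ)^2 ≤ ∑' k : ℤ, 1 / (k:ℝ)^2 :=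
    tsum_comp_le_tsum_of_inj hS (fun k => by positivity) hinj
  have hu := hJ.update m 0
  have hb := hu.norm_le_of_bounded ((hS'.hasSum).mul_left ((4*T+4)/c^2)) (fun n => by
    by_cases h : n = m
    · subst h; simp
    · rw [Function.update_of_ne h]
      have hsep := lf_sep (n := n) hm
      rw [← hcdef] at hsep
      have hk : (1:ℝ) ≤ |((n:ℤ) - (m:ℤ) : ℤ)| := by
        exact_mod_cast Int.one_le_abs (sub_ne_zero.2 (by exact_mod_cast h : (n:ℤ) ≠ m))
      have h1 : 1 ≤ |lf n - lf m| := le_trans (by nlinarith) hsep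
      have hexp : ‖Complex.exp (-(σ + t * I) * (lf n : ℂ))‖ ≤ 1 := by
        rw [Complex.norm_exp]
        have := lf_nonneg n
        simp only [neg_mul, neg_re, mul_re, add_re, ofReal_re, I_re, mul_zero, ofReal_im, I_im, mul_one, sub_self, add_zero, add_im, mul_im, zero_add, zero_mul, sub_zero]
        rw [Real.exp_le_one_iff]
        nlinarith
      rw [norm_mul]
      calc _ ≤ 1 * ((4*T+4) / (lf n - lf m)^2) := by
            gcongr
            exact kerT_bound hT h1
        _ ≤ (4*T+4) / ((((n:ℤ) - (m:ℤ) : ℤ):ℝ)^2 * c^2) := by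
            rw [one_mul]
            have : 0 < ((((n:ℤ) - (m:ℤ) : ℤ):ℝ)^2 * c^2) := by
              rw [← sq_abs]
              have : (0:ℝ) < |(((n:ℤ) - (m:ℤ) : ℤ):ℝ)| := by
                have := hk; push_cast at this ⊢; linarith
              positivity
            gcongr
            rw [← mul_pow, ← sq_abs (lf n - lf m)]
            rw [← sq_abs, abs_mul, abs_of_pos (show 0 < c by linarith)]
            gcongr
            push_cast at hsep ⊢
            exact hsep
        _ = _ := by
            simp only [Function.comp_apply]
            rw [mul_one_div, div_div, mul_comm (c^2)])
  have hf : ‖Complex.exp (-(σ + t * I) * (lf m : ℂ)) * kerT T (lf m - lf m)‖ =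
      Real.exp (-σ * lf m) * (4/3 * T^3) := by
    rw [norm_mul, sub_self, kerT_zero, Complex.norm_exp, Complex.norm_real, Real.norm_eq_abs,
      abs_of_pos (by positivity)]
    simp
  rw [← hf]
  set v := Complex.exp (-(σ + t * I) * (lf m : ℂ)) * kerT T (lf m - lf m) with hv
  have h3 : ‖v‖ ≤ ‖J‖ + ‖0 - v + J‖ := by
    calc ‖v‖ = ‖J - (0 - v + J)‖ := by congr 1; ring
      _ ≤ _ := norm_sub_le _ _
  have h4 : (4*T+4)/c^2 * ∑' n : ℕ, 1 / ((((n:ℤ) - (m:ℤ) : ℤ)):ℝ)^2 ≤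
      (4*T+4)/c^2 * ∑' k : ℤ, 1 / (k:ℝ)^2 := by gcongr
  exact h3.trans (add_le_add le_rfl (hb.trans h4))

lemma RL {T : ℝ} (hT : 0 < T) (f : ℝ → ℂ) :
    Tendsto (fun m : ℕ => ∫ x in (-T)..T, f x * Complex.exp (lf m * x * I)) atTop (nhds 0) := by
  have h := Real.tendsto_integral_exp_smul_cocompact ((Set.Ioc (-T) T).indicator f)
  have ht : Tendsto (fun m : ℕ => -(lf m / (2 * Real.pi))) atTop (cocompact ℝ) := by
    rw [cocompact_eq_atBot_atTop]
    refine Tendsto.mono_right ?_ le_sup_left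
    refine tendsto_neg_atTop_atBot.comp (Tendsto.atTop_div_const (by positivity) ?_)
    refine tendsto_atTop_mono' _ ?_ lf_tendsto
    filter_upwards [eventually_ge_atTop 1] with m hm
    exact div_le_self (lf_nonneg m) (by exact_mod_cast hm)
  refine (h.comp ht).congr fun m => ?_
  simp only [Function.comp_apply]
  rw [intervalIntegral.integral_of_le (by linarith), ← MeasureTheory.integral_indicator measurableSet_Ioc]
  congr 1
  ext x
  by_cases hx : x ∈ Set.Ioc (-T) T
  · rw [Set.indicator_of_mem hx, Set.indicator_of_mem hx, Circle.smul_def, Real.fourierChar_apply,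
      smul_eq_mul, mul_comm]
    congr 2
    have : (Real.pi:ℂ) ≠ 0 := by exact_mod_cast Real.pi_ne_zero
    push_cast
    field_simp
  · simp [Set.indicator_of_notMem hx]

/-- Lemma 3.1 (natural boundary): the imaginary axis is a natural boundary of
the factorial Dirichlet series `η(s) = ∑_{n=0}^∞ (n!)^{−s}`: no point `i t`
of the imaginary axis admits a ball on which an analytic function agrees with
`η` on the part of the ball inside the right half-plane. -/
theorem factorial_dirichlet_series_natural_boundary :
    ∀ t : ℝ, ∀ ε > (0 : ℝ),
      ¬ ∃ g : ℂ → ℂ,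
        DifferentiableOn ℂ g (Metric.ball ((t : ℂ) * Complex.I) ε) ∧
        ∀ s ∈ Metric.ball ((t : ℂ) * Complex.I) ε, 0 < s.re →
          g s = ∑' n : ℕ, Complex.exp (-s * (Real.log (n.factorial : ℝ) : ℂ)) := by
  rintro t ε hε ⟨g, hg, hgs⟩
  obtain ⟨T, hT, hTε⟩ : ∃ T : ℝ, 0 < T ∧ T + T < ε := ⟨ε/4, by linarith, by linarith⟩
  have hball : ∀ p ∈ Set.Icc (0:ℝ) T ×ˢ Set.Icc (-T) T,
      ((p.1:ℂ) + (t + p.2) * I) ∈ Metric.ball ((t : ℂ) * I) ε := by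
    rintro ⟨σ, x⟩ ⟨h1, h2⟩
    simp only [Set.mem_Icc] at h1 h2
    rw [Metric.mem_ball, dist_eq_norm]
    have e : (σ:ℂ) + (t + x) * I - t * I = σ + x * I := by ring
    rw [e]
    refine (norm_add_le _ _).trans_lt ?_
    rw [norm_mul, norm_I, norm_real, norm_real, mul_one, Real.norm_eq_abs, Real.norm_eq_abs,
      abs_of_nonneg h1.1]
    have := abs_le.2 h2
    linarith [h1.2]
  have hgc : ContinuousOn (fun p : ℝ × ℝ => g ((p.1:ℂ) + (t + p.2) * I))
      (Set.Icc (0:ℝ) T ×ˢ Set.Icc (-T) T) :=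
    hg.continuousOn.comp (Continuous.continuousOn (by fun_prop)) hball
  let J : ℕ → ℝ → ℂ := fun m σ => ∫ x in (-T)..T, ((T:ℂ)^2 - (x:ℂ)^2) *
        g ((σ:ℂ) + (t + x) * I) * Complex.exp (lf m * x * I)
  have hFc : ∀ m, ContinuousOn (fun p : ℝ × ℝ => ((T:ℂ)^2 - (p.2:ℂ)^2) *
        g ((p.1:ℂ) + (t + p.2) * I) * Complex.exp (lf m * p.2 * I))
        (Set.Icc (0:ℝ) T ×ˢ Set.Icc (-T) T) := fun m =>
    (ContinuousOn.mul (Continuous.continuousOn (by fun_prop)) hgc).mul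
      (Continuous.continuousOn (by fun_prop))
  have hIoc : Set.uIoc (-T) T ⊆ Set.Icc (-T) T := by
    rw [Set.uIoc_of_le (by linarith)]; exact Set.Ioc_subset_Icc_self
  have hIcc : ∀ᶠ σ in nhdsWithin (0:ℝ) (Set.Ioi 0), σ ∈ Set.Ioc 0 T := Ioc_mem_nhdsGT hT
  have hJ0 : ∀ m, Tendsto (J m) (nhdsWithin 0 (Set.Ioi 0)) (nhds (J m 0)) := by
    intro m
    obtain ⟨C, hC⟩ := (isCompact_Icc.prod isCompact_Icc).exists_bound_of_continuousOn (hFc m)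
    apply intervalIntegral.tendsto_integral_filter_of_dominated_convergence (fun _ => C)
    · filter_upwards [hIcc] with σ hσ
      refine ContinuousOn.aestronglyMeasurable ?_ measurableSet_uIoc
      exact (hFc m).comp (f := fun x : ℝ => (σ, x)) (Continuous.continuousOn (by fun_prop))
        (fun x hx => ⟨Set.Ioc_subset_Icc_self hσ, hIoc hx⟩)
    · filter_upwards [hIcc] with σ hσ
      exact .of_forall fun x hx => hC (σ, x) ⟨Set.Ioc_subset_Icc_self hσ, hIoc hx⟩
    · exact intervalIntegrable_const
    · refine .of_forall fun x hx => ?_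
      have h1 : ContinuousOn (fun σ : ℝ => ((T:ℂ)^2 - (x:ℂ)^2) *
          g ((σ:ℂ) + (t + x) * I) * Complex.exp (lf m * x * I)) (Set.Icc 0 T) :=
        (hFc m).comp (f := fun σ : ℝ => (σ, x)) (Continuous.continuousOn (by fun_prop))
          (fun σ hσ => ⟨hσ, hIoc hx⟩)
      have h2 := h1 0 ⟨le_rfl, hT.le⟩
      exact h2.tendsto.mono_left (nhdsWithin_le_of_mem (by
        filter_upwards [hIcc] with σ hσ using Set.Ioc_subset_Icc_self hσ))
  have hJσ : ∀ m σ, σ ∈ Set.Ioc 0 T →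
      HasSum (fun n => Complex.exp (-(σ + t * I) * (lf n : ℂ)) * kerT T (lf n - lf m)) (J m σ) := by
    intro m σ hσ
    have h := series_hasSum (t := t) (T := T) hσ.1 (lf m)
    convert h using 1
    apply intervalIntegral.integral_congr
    intro x hx
    rw [Set.uIcc_of_le (by linarith)] at hx
    have := hgs _ (hball (σ, x) ⟨Set.Ioc_subset_Icc_self hσ, hx⟩) (by simpa using hσ.1)
    simp only at this ⊢
    rw [this]
    rfl
  have hmain : ∀ᶠ m : ℕ in atTop, 4/3 * T^3 ≤
      ‖J m 0‖ + (4*T+4) / (lf m / m)^2 * ∑' k : ℤ, 1 / (k:ℝ)^2 := by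
    filter_upwards [lf_tendsto.eventually_ge_atTop 1, eventually_ge_atTop 1] with m hc hm
    have hl : Tendsto (fun σ : ℝ => Real.exp (-σ * lf m) * (4/3 * T^3))
        (nhdsWithin 0 (Set.Ioi 0)) (nhds (4/3 * T^3)) := by
      have : Continuous (fun σ : ℝ => Real.exp (-σ * lf m) * (4/3 * T^3)) := by fun_prop
      have h := this.tendsto 0
      simp only [neg_zero, zero_mul, Real.exp_zero, one_mul] at h
      exact h.mono_left nhdsWithin_le_nhds
    refine le_of_tendsto_of_tendsto hl ((hJ0 m).norm.add_const _) ?_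
    filter_upwards [hIcc] with σ hσ
    exact series_bound hσ.1 hT hm hc (hJσ m σ hσ)
  have hlim : Tendsto (fun m : ℕ => ‖J m 0‖ + (4*T+4) / (lf m / m)^2 * ∑' k : ℤ, 1 / (k:ℝ)^2)
      atTop (nhds (‖(0:ℂ)‖ + 0 * ∑' k : ℤ, 1 / (k:ℝ)^2)) := by
    refine (RL hT _).norm.add (Tendsto.mul_const _ ?_)
    exact Tendsto.div_atTop tendsto_const_nhds ((tendsto_pow_atTop (by norm_num)).comp lf_tendsto)
  have := ge_of_tendsto hlim hmain
  simp only [norm_zero, zero_mul, add_zero] at this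
  have : 0 < T^3 := by positivity
  linarith
end

section
/- The Dirichlet series s ↦ Σ_{n=2}^∞ (log n!)^{−s}, which converges absolutely for Re(s) > 1, has an analytic continuation to {s ∈ ℂ : Re(s) > 0} \ (0, 1]; that is, there exists a function F analytic on {s ∈ ℂ : Re(s) > 0} \ (0, 1] with F(s) = Σ_{n=2}^∞ (log n!)^{−s} whenever Re(s) > 1. -/
open Filter Complex
open MeasureTheory Set Topology

lemma lf_param_diff {μ : Measure ℝ} {G : ℂ → ℝ → ℂ} {s₀ : ℂ} {r : ℝ} (hr : 0 < r) {b : ℝ → ℝ}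
    (hb : Integrable b μ)
    (hm : ∀ s ∈ Metric.ball s₀ r, AEStronglyMeasurable (G s) μ)
    (hd : ∀ᵐ t ∂μ, DifferentiableOn ℂ (fun s => G s t) (Metric.ball s₀ r))
    (hbd : ∀ᵐ t ∂μ, ∀ s ∈ Metric.ball s₀ r, ‖G s t‖ ≤ b t) :
    DifferentiableAt ℂ (fun s => ∫ t, G s t ∂μ) s₀ := by
  have h0 : s₀ ∈ Metric.ball s₀ r := Metric.mem_ball_self hr
  have hderiv : ∀ᵐ t ∂μ, ∀ s ∈ Metric.ball s₀ r,
      HasDerivAt (fun s => G s t) (deriv (fun s => G s t) s) s := by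
    filter_upwards [hd] with t ht s hs
    exact (ht.differentiableAt (Metric.isOpen_ball.mem_nhds hs)).hasDerivAt
  refine (hasDerivAt_integral_of_dominated_loc_of_deriv_le (F := G)
    (F' := fun s t => deriv (fun s => G s t) s) (bound := fun t => b t / (r / 3))
    (Metric.ball_mem_nhds s₀ (half_pos hr)) ?_ ?_ ?_ ?_ ?_ ?_).2.differentiableAt
  · filter_upwards [Metric.ball_mem_nhds s₀ hr] with s hs using hm s hs
  · exact hb.mono' (hm s₀ h0) (by filter_upwards [hbd] with t ht using ht s₀ h0)
  · let h : ℕ → ℂ := fun n => s₀ + ((r / (n + 2) : ℝ) : ℂ)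
    have hpos : ∀ n : ℕ, 0 < r / ((n : ℝ) + 2) := fun n => by positivity
    have hmem : ∀ n, h n ∈ Metric.ball s₀ r := by
      intro n
      simp only [h, Metric.mem_ball, dist_self_add_left, Complex.norm_real, Real.norm_eq_abs]
      rw [abs_of_pos (hpos n), div_lt_iff₀ (by positivity)]
      nlinarith [(Nat.cast_nonneg n : (0 : ℝ) ≤ n)]
    have hlim : Tendsto h atTop (𝓝[≠] s₀) := by
      rw [tendsto_nhdsWithin_iff]
      constructor
      · have h1 : Tendsto (fun n : ℕ => r / ((n : ℝ) + 2)) atTop (𝓝 0) :=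
          Tendsto.div_atTop tendsto_const_nhds
            (tendsto_atTop_add_const_right _ _ tendsto_natCast_atTop_atTop)
        have h2 := ((Complex.continuous_ofReal.tendsto 0).comp h1).const_add s₀
        simpa [h, Function.comp_def] using h2
      · refine Eventually.of_forall fun n => ?_
        simp only [h, mem_compl_iff, mem_singleton_iff, add_eq_left, Complex.ofReal_eq_zero]
        exact (hpos n).ne'
    refine aestronglyMeasurable_of_tendsto_ae (u := (atTop : Filter ℕ))
      (f := fun n t => slope (fun s => G s t) s₀ (h n)) ?_ ?_
    · intro n
      simp only [slope, vsub_eq_sub]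
      exact ((hm _ (hmem n)).sub (hm _ h0)).const_smul ((h n - s₀)⁻¹)
    · filter_upwards [hderiv] with t ht
      exact (hasDerivAt_iff_tendsto_slope.1 (ht s₀ h0)).comp hlim
  · filter_upwards [hd, hbd] with t ht1 ht2 s hs
    have hsub : Metric.closedBall s (r / 3) ⊆ Metric.ball s₀ r := by
      intro z hz
      rw [Metric.mem_closedBall] at hz
      rw [Metric.mem_ball] at hs ⊢
      linarith [dist_triangle z s s₀]
    refine Complex.norm_deriv_le_of_forall_mem_sphere_norm_le (by positivity) ?_ ?_
    · apply DifferentiableOn.diffContOnCl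
      exact ht1.mono ((Metric.closure_ball_subset_closedBall).trans hsub)
    · intro z hz
      exact ht2 z (hsub (Metric.sphere_subset_closedBall hz))
  · exact hb.div_const _
  · filter_upwards [hderiv] with t ht s hs
    exact ht s (Metric.ball_subset_ball (by linarith) hs)

/-- the comparison function -/
noncomputable def lfF (x : ℝ) : ℝ := x * (Real.log x - 1)

lemma lfF_grad {x y : ℝ} (hx : 0 < x) (hy : 0 < y) :
    lfF x + Real.log x * (y - x) ≤ lfF y := by
  have h := Real.log_le_sub_one_of_pos (div_pos hx hy)
  rw [Real.log_div hx.ne' hy.ne'] at h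
  have h2 := mul_le_mul_of_nonneg_left h hy.le
  have h3 : y * (x / y - 1) = x - y := by field_simp
  unfold lfF
  nlinarith

lemma lf_log8 : 2 ≤ Real.log 8 := by
  have : (8 : ℝ) = 2 ^ (3 : ℕ) := by norm_num
  rw [this, Real.log_pow]
  have := Real.log_two_gt_d9
  push_cast
  linarith

lemma lf_log_ge {x : ℝ} (hx : 8 ≤ x) : 2 ≤ Real.log x :=
  lf_log8.trans (Real.log_le_log (by norm_num) hx)

lemma lfF_ge {x : ℝ} (hx : 8 ≤ x) : x ≤ lfF x := by
  unfold lfF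
  nlinarith [lf_log_ge hx]

lemma lfF_mono {x y : ℝ} (hx : 8 ≤ x) (hy : x ≤ y) : lfF x ≤ lfF y := by
  have := lfF_grad (show 0 < x by linarith) (show 0 < y by linarith)
  nlinarith [lf_log_ge hx]

lemma lf_fact (n : ℕ) : lfF (n + 1) ≤ Real.log ((n + 1).factorial : ℝ) ∧
    Real.log ((n + 1).factorial : ℝ) ≤ lfF (n + 1) + 1 + Real.log (n + 1) := by
  induction n with
  | zero => simp [lfF]
  | succ n ih =>
    have e : Real.log ((n + 1 + 1).factorial : ℝ)
        = Real.log ((n : ℝ) + 1 + 1) + Real.log ((n + 1).factorial : ℝ) := by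
      rw [Nat.factorial_succ (n + 1), Nat.cast_mul, Real.log_mul (by positivity) (by positivity)]
      push_cast
      rfl
    rw [e]
    push_cast
    have h1 := lfF_grad (show (0 : ℝ) < (n : ℝ) + 1 by positivity)
      (show (0 : ℝ) < (n : ℝ) + 1 + 1 by positivity)
    have h2 := lfF_grad (show (0 : ℝ) < (n : ℝ) + 1 + 1 by positivity)
      (show (0 : ℝ) < (n : ℝ) + 1 by positivity)
    constructor <;> nlinarith [ih.1, ih.2]

/-- bounds used for `n ≥ 8` -/
lemma lf_fact8 (m : ℕ) : (m : ℝ) + 8 ≤ Real.log ((m + 8).factorial : ℝ) := by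
  have h := (lf_fact (m + 7)).1
  push_cast at h
  have e : (m : ℝ) + 7 + 1 = m + 8 := by ring
  rw [e] at h
  exact (lfF_ge (by linarith [(Nat.cast_nonneg m : (0 : ℝ) ≤ m)])).trans h

lemma lf_close (m : ℕ) {x : ℝ} (h1 : (m : ℝ) + 8 ≤ x) (h2 : x ≤ (m : ℝ) + 9) :
    |Real.log ((m + 8).factorial : ℝ) - lfF x| ≤ 3 * Real.log ((m : ℝ) + 8) := by
  obtain ⟨ha, hb⟩ := lf_fact (m + 7)
  push_cast at ha hb
  have e : (m : ℝ) + 7 + 1 = m + 8 := by ring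
  have e' : m + 7 + 1 = m + 8 := by ring
  rw [e, e'] at ha hb
  have hm : (0 : ℝ) ≤ m := Nat.cast_nonneg m
  have h8 : (8 : ℝ) ≤ (m : ℝ) + 8 := by linarith
  have hl := lf_log_ge h8
  have hmono := lfF_mono h8 h1
  have hg := lfF_grad (show 0 < x by linarith) (show 0 < (m : ℝ) + 8 by linarith)
  have hlx : Real.log x ≤ 2 * Real.log ((m : ℝ) + 8) := by
    have : Real.log (((m : ℝ) + 8) ^ 2) = 2 * Real.log ((m : ℝ) + 8) := by
      rw [Real.log_pow]; norm_num
    rw [← this]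
    exact Real.log_le_log (by linarith) (by nlinarith)
  have hlx0 := lf_log_ge (h8.trans h1)
  rw [abs_le]
  constructor <;> nlinarith

lemma lf_mvt {s : ℂ} (hs : 0 < s.re) {c p q : ℝ} (hc : 0 < c) (hp : c ≤ p) (hq : c ≤ q) :
    ‖Complex.exp (-s * (Real.log p : ℂ)) - Complex.exp (-s * (Real.log q : ℂ))‖
      ≤ ‖s‖ * c ^ (-s.re - 1) * |p - q| := by
  have key := Convex.norm_image_sub_le_of_norm_hasDerivWithin_le (s := Set.Ici c)
    (f := fun x : ℝ => Complex.exp (-s * (Real.log x : ℂ)))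
    (f' := fun x : ℝ => Complex.exp (-s * (Real.log x : ℂ)) * (-s * ((x⁻¹ : ℝ) : ℂ)))
    (C := ‖s‖ * c ^ (-s.re - 1)) (x := q) (y := p) ?_ ?_ (convex_Ici c) hq hp
  · simpa using key
  · intro x hx
    have hx0 : 0 < x := lt_of_lt_of_le hc hx
    exact (((Real.hasDerivAt_log hx0.ne').ofReal_comp.const_mul (-s)).cexp).hasDerivWithinAt
  · intro x hx
    have hx0 : 0 < x := lt_of_lt_of_le hc hx
    rw [norm_mul, norm_mul, norm_neg, Complex.norm_exp, Complex.norm_real, Real.norm_eq_abs,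
      abs_of_pos (inv_pos.2 hx0)]
    have : Real.exp ((-s * (Real.log x : ℂ)).re) * x⁻¹ = x ^ (-s.re - 1) := by
      rw [Real.rpow_sub_one hx0.ne', Real.rpow_def_of_pos hx0, div_eq_mul_inv]
      congr 2
      simp; ring
    calc _ = ‖s‖ * (Real.exp ((-s * (Real.log x : ℂ)).re) * x⁻¹) := by ring
      _ ≤ _ := by
        rw [this]
        gcongr ‖s‖ * ?_
        exact Real.rpow_le_rpow_of_nonpos hc hx (by linarith)

/-- summand of the integral part -/
noncomputable def lfH (s : ℂ) (x : ℝ) : ℂ := Complex.exp (-s * (Real.log (lfF x) : ℂ))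

lemma lfH_meas (s : ℂ) : Measurable (lfH s) := by
  unfold lfH lfF
  fun_prop

lemma lfH_norm {s : ℂ} (hs : 0 < s.re) {x : ℝ} (hx : 8 ≤ x) : ‖lfH s x‖ ≤ x ^ (-s.re) := by
  have hx0 : 0 < x := by linarith
  unfold lfH
  rw [Complex.norm_exp, Real.rpow_def_of_pos hx0]
  have := Real.log_le_log hx0 (lfF_ge hx)
  simp
  nlinarith

lemma lfH_norm_one {s : ℂ} (hs : 0 < s.re) {x : ℝ} (hx : 8 ≤ x) : ‖lfH s x‖ ≤ 1 :=
  (lfH_norm hs hx).trans (Real.rpow_le_one_of_one_le_of_nonpos (by linarith) (by linarith))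

/-- difference terms -/
noncomputable def lfD (m : ℕ) (s : ℂ) : ℂ :=
  Complex.exp (-s * (Real.log (Real.log ((m + 8).factorial : ℝ)) : ℂ))
    - ∫ x in ((m : ℝ) + 8)..((m : ℝ) + 9), lfH s x

lemma lfH_int {s : ℂ} (hs : 0 < s.re) {a b : ℝ} (ha : 8 ≤ a) (hab : a ≤ b) :
    IntervalIntegrable (lfH s) volume a b := by
  rw [intervalIntegrable_iff_integrableOn_Ioc_of_le hab]
  refine Integrable.mono' (g := fun _ => (1 : ℝ)) (integrable_const _)
    (lfH_meas s).aestronglyMeasurable ?_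
  filter_upwards [ae_restrict_mem measurableSet_Ioc] with x hx
  exact lfH_norm_one hs (ha.trans hx.1.le)

lemma lfD_bound (m : ℕ) {s : ℂ} (hs : 0 < s.re) :
    ‖lfD m s‖ ≤ ‖s‖ * ((m : ℝ) + 8) ^ (-s.re - 1) * (3 * Real.log ((m : ℝ) + 8)) := by
  have hm : (0 : ℝ) ≤ m := Nat.cast_nonneg m
  have e : lfD m s = ∫ x in ((m : ℝ) + 8)..((m : ℝ) + 9),
      (Complex.exp (-s * (Real.log (Real.log ((m + 8).factorial : ℝ)) : ℂ)) - lfH s x) := by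
    rw [intervalIntegral.integral_sub (by simp) (lfH_int hs (by linarith) (by linarith)),
      intervalIntegral.integral_const, lfD]
    have : (m : ℝ) + 9 - (m + 8) = 1 := by ring
    rw [this, one_smul]
  rw [e]
  refine (intervalIntegral.norm_integral_le_of_norm_le_const
    (C := ‖s‖ * ((m : ℝ) + 8) ^ (-s.re - 1) * (3 * Real.log ((m : ℝ) + 8))) ?_).trans ?_
  · intro x hx
    rw [uIoc_of_le (by linarith)] at hx
    refine (lf_mvt hs (c := (m : ℝ) + 8) (by linarith) (lf_fact8 m) ?_).trans ?_
    · exact hx.1.le.trans (lfF_ge (by linarith [hx.1]))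
    · gcongr
      exact lf_close m hx.1.le hx.2
  · have : (m : ℝ) + 9 - (m + 8) = 1 := by ring
    rw [this]; simp

lemma lfD_diff (m : ℕ) {s₀ : ℂ} (hs : 0 < s₀.re) : DifferentiableAt ℂ (lfD m) s₀ := by
  have hm : (0 : ℝ) ≤ m := Nat.cast_nonneg m
  unfold lfD
  refine DifferentiableAt.sub (by fun_prop) ?_
  simp_rw [intervalIntegral.integral_of_le (show (m : ℝ) + 8 ≤ m + 9 by linarith)]
  obtain ⟨r, hr, hsub⟩ := Metric.isOpen_iff.1 (isOpen_lt continuous_const Complex.continuous_re)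
    s₀ (show (0 : ℝ) < s₀.re from hs)
  refine lf_param_diff hr (b := fun _ => 1) (integrable_const _) ?_ ?_ ?_
  · exact fun s _ => (lfH_meas s).aestronglyMeasurable
  · refine Eventually.of_forall fun t => ?_
    unfold lfH
    fun_prop
  · filter_upwards [ae_restrict_mem measurableSet_Ioc] with x hx s hs
    exact lfH_norm_one (hsub hs) (by linarith [hx.1])

lemma lf_summ {a : ℝ} (ha : a < -1) : Summable (fun m : ℕ => ((m : ℝ) + 8) ^ a) := by
  have := (summable_nat_add_iff 8).2 (Real.summable_nat_rpow.2 ha)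
  simpa using this

lemma lfD_bound2 {σ M : ℝ} (hσ : 0 < σ) (m : ℕ) {s : ℂ} (hs : σ ≤ s.re) (hM : ‖s‖ ≤ M) :
    ‖lfD m s‖ ≤ M * (3 / (σ / 2)) * ((m : ℝ) + 8) ^ (-(σ / 2) - 1) := by
  have hm : (0 : ℝ) ≤ m := Nat.cast_nonneg m
  have h8 : (0 : ℝ) < (m : ℝ) + 8 := by linarith
  have hl := lf_log_ge (show (8 : ℝ) ≤ m + 8 by linarith)
  refine (lfD_bound m (hσ.trans_le hs)).trans ?_
  have h1 := Real.log_le_rpow_div h8.le (half_pos hσ)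
  have h2 : ((m : ℝ) + 8) ^ (-s.re - 1) ≤ ((m : ℝ) + 8) ^ (-σ - 1) :=
    Real.rpow_le_rpow_of_exponent_le (by linarith) (by linarith)
  have h3 : ((m : ℝ) + 8) ^ (-(σ / 2) - 1)
      = ((m : ℝ) + 8) ^ (-σ - 1) * ((m : ℝ) + 8) ^ (σ / 2) := by
    rw [← Real.rpow_add h8]; ring_nf
  have hM0 : 0 ≤ M := (norm_nonneg _).trans hM
  calc _ ≤ M * ((m : ℝ) + 8) ^ (-σ - 1) * (3 * (((m : ℝ) + 8) ^ (σ / 2) / (σ / 2))) := by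
        gcongr
    _ = _ := by rw [h3]; ring

lemma lfD_summable {s : ℂ} (hs : 0 < s.re) : Summable (fun m => lfD m s) := by
  refine Summable.of_norm_bounded (g := fun m : ℕ =>
    ‖s‖ * (3 / (s.re / 2)) * ((m : ℝ) + 8) ^ (-(s.re / 2) - 1)) ?_ ?_
  · exact (lf_summ (by linarith)).mul_left _
  · exact fun m => lfD_bound2 hs m le_rfl le_rfl

lemma lfD_tsum_diff {s₀ : ℂ} (hs : 0 < s₀.re) :
    DifferentiableAt ℂ (fun s => ∑' m, lfD m s) s₀ := by
  have hU : IsOpen ({s : ℂ | s₀.re / 2 < s.re} ∩ Metric.ball 0 (‖s₀‖ + 1)) :=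
    (isOpen_lt continuous_const Complex.continuous_re).inter Metric.isOpen_ball
  have hmem : s₀ ∈ ({s : ℂ | s₀.re / 2 < s.re} ∩ Metric.ball 0 (‖s₀‖ + 1)) := by
    refine ⟨half_lt_self hs, ?_⟩
    simp
  refine (differentiableOn_tsum_of_summable_norm (u := fun m : ℕ =>
    (‖s₀‖ + 1) * (3 / (s₀.re / 2 / 2)) * ((m : ℝ) + 8) ^ (-(s₀.re / 2 / 2) - 1))
    ((lf_summ (by linarith)).mul_left _) ?_ hU ?_).differentiableAt (hU.mem_nhds hmem)
  · intro m s h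
    refine (lfD_diff m ?_).differentiableWithinAt
    have : s₀.re / 2 < s.re := h.1
    linarith
  · intro m s h
    refine lfD_bound2 (half_pos hs) m (le_of_lt h.1) ?_
    have := h.2
    rw [mem_ball_zero_iff] at this
    exact this.le

/-- integrand of the continuation of the integral -/
noncomputable def lfK (s : ℂ) (t : ℝ) : ℂ :=
  (t : ℂ) ^ (s - 1) * Complex.exp (-((Real.log 8 - 1) * t : ℝ)) * (8 : ℂ) ^ (1 - s) / (s + t - 1)

lemma lfK_meas (s : ℂ) : Measurable (lfK s) := by
  unfold lfK
  fun_prop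

lemma lf_gamma_int {a : ℝ} (ha : 0 < a) :
    IntegrableOn (fun t : ℝ => t ^ (a - 1) * Real.exp (-t)) (Ioi 0) := by
  simpa [mul_comm] using Real.GammaIntegral_convergent ha

lemma lfK_diff {s₀ : ℂ} (hs : 0 < s₀.re) (hs' : s₀ - 1 ∈ slitPlane) :
    DifferentiableAt ℂ (fun s => ∫ t in Ioi (0 : ℝ), lfK s t) s₀ := by
  have hU : IsOpen ({s : ℂ | s₀.re / 2 < s.re} ∩ {s : ℂ | s.re < s₀.re + 1} ∩
      ((fun s => s - 1) ⁻¹' slitPlane)) :=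
    ((isOpen_lt continuous_const Complex.continuous_re).inter
      (isOpen_lt Complex.continuous_re continuous_const)).inter
      (isOpen_slitPlane.preimage (by fun_prop))
  obtain ⟨ρ, hρ, hsub⟩ := Metric.isOpen_iff.1 hU s₀
    ⟨⟨half_lt_self hs, show s₀.re < s₀.re + 1 by linarith⟩, hs'⟩
  have hfar : ∀ t : ℝ, 0 < t → ∀ s ∈ Metric.ball s₀ (ρ / 2), ρ / 2 ≤ ‖s + t - 1‖ := by
    intro t ht s hs1
    have h1 : ρ ≤ ‖s₀ + t - 1‖ := by
      by_contra hcon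
      push Not at hcon
      have hmem : ((1 - t : ℝ) : ℂ) ∈ Metric.ball s₀ ρ := by
        rw [mem_ball_iff_norm, ← norm_neg]
        have e : -(((1 - t : ℝ) : ℂ) - s₀) = s₀ + t - 1 := by push_cast; ring
        rw [e]
        exact hcon
      have := (hsub hmem).2
      simp only [mem_preimage, mem_slitPlane_iff] at this
      simp at this
      linarith
    rw [mem_ball_iff_norm] at hs1
    have h2 : ‖s₀ + t - 1‖ ≤ ‖s + t - 1‖ + ‖s - s₀‖ := by
      have : s₀ + t - 1 = (s + t - 1) - (s - s₀) := by ring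
      rw [this]; exact norm_sub_le _ _
    linarith
  have hsub' : Metric.ball s₀ (ρ / 2) ⊆ Metric.ball s₀ ρ := Metric.ball_subset_ball (by linarith)
  refine lf_param_diff (half_pos hρ)
    (b := fun t => (t ^ (s₀.re / 2 - 1) * Real.exp (-t)
      + t ^ (s₀.re + 1 - 1) * Real.exp (-t)) * 8 / (ρ / 2)) ?_ ?_ ?_ ?_
  · exact (((lf_gamma_int (half_pos hs)).add (lf_gamma_int (by linarith))).mul_const 8).div_const _
  · exact fun s _ => (lfK_meas s).aestronglyMeasurable
  · filter_upwards [ae_restrict_mem measurableSet_Ioi] with t ht s hs1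
    have ht0 : (0 : ℝ) < t := ht
    have hne : s + t - 1 ≠ 0 := by
      intro h0
      have := hfar t ht s hs1
      rw [h0, norm_zero] at this
      linarith
    have htne : (t : ℂ) ≠ 0 := by exact_mod_cast ht0.ne'
    have h1 : DifferentiableAt ℂ (fun s : ℂ => (t : ℂ) ^ (s - 1)) s :=
      DifferentiableAt.const_cpow (by fun_prop) (Or.inl htne)
    have h2 : DifferentiableAt ℂ (fun s : ℂ => (8 : ℂ) ^ (1 - s)) s :=
      DifferentiableAt.const_cpow (by fun_prop) (Or.inl (by norm_num))
    unfold lfK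
    exact (((h1.mul_const _).mul h2).div (by fun_prop) hne).differentiableWithinAt
  · filter_upwards [ae_restrict_mem measurableSet_Ioi] with t ht s hs1
    have ht0 : (0 : ℝ) < t := ht
    have hf := hfar t ht s hs1
    have hlo : s₀.re / 2 < s.re := (hsub (hsub' hs1)).1.1
    have hhi : s.re < s₀.re + 1 := (hsub (hsub' hs1)).1.2
    have hl := lf_log8
    unfold lfK
    rw [norm_div, norm_mul, norm_mul, Complex.norm_cpow_eq_rpow_re_of_pos ht0, Complex.norm_exp]
    have h8 : ‖(8 : ℂ) ^ (1 - s)‖ ≤ 8 := by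
      have : (8 : ℂ) = ((8 : ℝ) : ℂ) := by norm_num
      rw [this, Complex.norm_cpow_eq_rpow_re_of_pos (by norm_num)]
      calc (8 : ℝ) ^ (1 - s).re ≤ 8 ^ (1 : ℝ) :=
            Real.rpow_le_rpow_of_exponent_le (by norm_num) (by simp; linarith)
        _ = 8 := by norm_num
    have he : Real.exp (-(((Real.log 8 - 1) * t : ℝ) : ℂ)).re ≤ Real.exp (-t) := by
      rw [← Complex.ofReal_neg, Complex.ofReal_re]
      apply Real.exp_le_exp.2
      nlinarith
    have hp : t ^ (s - 1).re ≤ t ^ (s₀.re / 2 - 1) + t ^ (s₀.re + 1 - 1) := by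
      have e : (s - 1).re = s.re - 1 := by simp
      rw [e]
      rcases le_total t 1 with h | h
      · have := Real.rpow_le_rpow_of_exponent_ge ht0 h
          (show s₀.re / 2 - 1 ≤ s.re - 1 by linarith)
        linarith [Real.rpow_nonneg ht0.le (s₀.re + 1 - 1)]
      · have := Real.rpow_le_rpow_of_exponent_le h
          (show s.re - 1 ≤ s₀.re + 1 - 1 by linarith)
        linarith [Real.rpow_nonneg ht0.le (s₀.re / 2 - 1)]
    rw [← add_mul]
    gcongr

/-- two variable integrand -/
noncomputable def lfPhi (s : ℂ) (x t : ℝ) : ℂ :=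
  (t : ℂ) ^ (s - 1) * Complex.exp ((t : ℂ) - (s + t) * (Real.log x : ℂ))

lemma lfPhi_int {s : ℂ} (hs : 1 < s.re) :
    Integrable (Function.uncurry (lfPhi s))
      ((volume.restrict (Ioi (8 : ℝ))).prod (volume.restrict (Ioi (0 : ℝ)))) := by
  have h1 : IntegrableOn (fun x : ℝ => x ^ (-s.re)) (Ioi 8) :=
    integrableOn_Ioi_rpow_of_lt (by linarith) (by norm_num)
  have h2 := lf_gamma_int (show 0 < s.re by linarith)
  refine (Integrable.mul_prod h1 h2).mono' ?_ ?_
  · apply Measurable.aestronglyMeasurable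
    unfold lfPhi Function.uncurry
    fun_prop
  · rw [Measure.prod_restrict]
    filter_upwards [ae_restrict_mem (measurableSet_Ioi.prod measurableSet_Ioi)] with z hz
    obtain ⟨x, t⟩ := z
    have hx : (8 : ℝ) < x := hz.1
    have ht : (0 : ℝ) < t := hz.2
    have hl := lf_log_ge hx.le
    simp only [Function.uncurry, lfPhi]
    rw [norm_mul, Complex.norm_cpow_eq_rpow_re_of_pos ht, Complex.norm_exp,
      Real.rpow_def_of_pos (show 0 < x by linarith)]
    have : Real.exp ((t : ℂ) - (s + t) * (Real.log x : ℂ)).re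
        ≤ Real.exp (Real.log x * -s.re) * Real.exp (-t) := by
      rw [← Real.exp_add]
      apply Real.exp_le_exp.2
      simp
      nlinarith
    have e : (s - 1).re = s.re - 1 := by simp
    rw [e]
    calc _ ≤ t ^ (s.re - 1) * (Real.exp (Real.log x * -s.re) * Real.exp (-t)) := by gcongr
      _ = _ := by ring

lemma lfPhi_t {s : ℂ} (hs : 1 < s.re) {x : ℝ} (hx : 8 < x) :
    ∫ t in Ioi (0 : ℝ), lfPhi s x t = Complex.Gamma s * lfH s x := by
  have hl := lf_log_ge hx.le
  have hx0 : 0 < x := by linarith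
  have h := Complex.integral_cpow_mul_exp_neg_mul_Ioi (a := s) (r := Real.log x - 1)
    (by linarith) (by linarith)
  rw [Complex.ofReal_sub, Complex.ofReal_one] at h
  have e : ∀ t : ℝ, lfPhi s x t = Complex.exp (-s * (Real.log x : ℂ)) *
      ((t : ℂ) ^ (s - 1) * Complex.exp (-(((Real.log x : ℂ) - 1) * t))) := by
    intro t
    unfold lfPhi
    rw [mul_left_comm, ← Complex.exp_add]
    congr 2
    ring
  simp_rw [e]
  rw [integral_const_mul, h]
  have hr : (1 / ((Real.log x : ℂ) - 1)) ^ s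
      = Complex.exp (-s * (Real.log (Real.log x - 1) : ℂ)) := by
    have e1 : (1 / ((Real.log x : ℂ) - 1)) = (((Real.log x - 1)⁻¹ : ℝ) : ℂ) := by
      push_cast; ring
    rw [e1, Complex.cpow_def_of_ne_zero, ← Complex.ofReal_log, Real.log_inv]
    · congr 1; push_cast; ring
    · exact inv_nonneg.2 (by linarith)
    · norm_cast
      exact inv_ne_zero (by linarith)
  rw [hr, lfH, lfF, Real.log_mul hx0.ne' (by linarith)]
  push_cast
  rw [mul_add, Complex.exp_add]
  ring

lemma lfPhi_x {s : ℂ} (hs : 1 < s.re) {t : ℝ} (ht : 0 < t) :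
    ∫ x in Ioi (8 : ℝ), lfPhi s x t = lfK s t := by
  have h := integral_Ioi_cpow_of_lt (a := -s - t) (by simp; linarith) (show (0 : ℝ) < 8 by norm_num)
  have e : ∀ x ∈ Ioi (8 : ℝ), lfPhi s x t
      = ((t : ℂ) ^ (s - 1) * Complex.exp t) * (x : ℂ) ^ (-s - t : ℂ) := by
    intro x hx
    have hx0 : (0 : ℝ) < x := by linarith [mem_Ioi.1 hx]
    rw [Complex.cpow_def_of_ne_zero (x := (x : ℂ)) (by exact_mod_cast hx0.ne'), ← Complex.ofReal_log hx0.le,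
      lfPhi, mul_assoc, ← Complex.exp_add]
    congr 2
    ring
  rw [setIntegral_congr_fun measurableSet_Ioi e, integral_const_mul, h, lfK]
  have hne : s + t - 1 ≠ 0 := by
    intro h0
    have := congrArg Complex.re h0
    simp at this
    linarith
  have hne2 : -s - t + 1 ≠ 0 := by
    intro h0
    apply hne
    linear_combination -h0
  have e2 : Complex.exp t * ((8 : ℝ) : ℂ) ^ (-s - t + 1 : ℂ)
      = Complex.exp (-((Real.log 8 - 1) * t : ℝ)) * (8 : ℂ) ^ (1 - s) := by
    have e8 : (8 : ℂ) = ((8 : ℝ) : ℂ) := by norm_num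
    rw [e8, Complex.cpow_def_of_ne_zero (by norm_num), Complex.cpow_def_of_ne_zero (by norm_num),
      ← Complex.ofReal_log (by norm_num), ← Complex.exp_add, ← Complex.exp_add]
    congr 1
    push_cast
    ring
  have e3 : -((8 : ℝ) : ℂ) ^ (-s - t + 1 : ℂ) / (-s - t + 1 : ℂ)
      = ((8 : ℝ) : ℂ) ^ (-s - t + 1 : ℂ) / (s + t - 1) := by
    rw [div_eq_div_iff hne2 hne]; ring
  rw [e3, mul_assoc ((t : ℂ) ^ (s - 1)) (Complex.exp (-((Real.log 8 - 1) * t : ℝ))), ← e2]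
  ring

lemma lfH_integral {s : ℂ} (hs : 1 < s.re) :
    ∫ x in Ioi (8 : ℝ), lfH s x = (Complex.Gamma s)⁻¹ * ∫ t in Ioi (0 : ℝ), lfK s t := by
  have h := integral_integral_swap (lfPhi_int hs)
  rw [setIntegral_congr_fun measurableSet_Ioi (fun x hx => lfPhi_t hs hx),
    setIntegral_congr_fun measurableSet_Ioi (fun t ht => lfPhi_x hs ht), integral_const_mul] at h
  rw [← h, inv_mul_cancel_left₀ (Complex.Gamma_ne_zero_of_re_pos (by linarith))]

lemma lfH_hasSum {s : ℂ} (hs : 1 < s.re)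
    (hsum : Summable (fun m : ℕ => ∫ x in ((m : ℝ) + 8)..((m : ℝ) + 9), lfH s x)) :
    ∑' m : ℕ, ∫ x in ((m : ℝ) + 8)..((m : ℝ) + 9), lfH s x = ∫ x in Ioi (8 : ℝ), lfH s x := by
  have hint : IntegrableOn (lfH s) (Ioi 8) := by
    refine Integrable.mono' (integrableOn_Ioi_rpow_of_lt (a := -s.re) (by linarith)
      (show (0 : ℝ) < 8 by norm_num)) (lfH_meas s).aestronglyMeasurable ?_
    filter_upwards [ae_restrict_mem measurableSet_Ioi] with x hx
    exact lfH_norm (by linarith) (le_of_lt hx)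
  have hlim := intervalIntegral_tendsto_integral_Ioi (8 : ℝ) hint
    (tendsto_atTop_add_const_right atTop (8 : ℝ) (tendsto_natCast_atTop_atTop (R := ℝ)))
  have hl2 := hsum.hasSum.tendsto_sum_nat
  refine tendsto_nhds_unique hl2 (hlim.congr fun n => ?_)
  have := intervalIntegral.sum_integral_adjacent_intervals (μ := volume) (f := lfH s)
    (a := fun k : ℕ => (k : ℝ) + 8) (n := n) (fun k _ => lfH_int (by linarith)
      (by linarith [(Nat.cast_nonneg k : (0 : ℝ) ≤ k)]) (by push_cast; linarith))
  simp only [Nat.cast_zero, zero_add] at this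
  rw [← this]
  refine Finset.sum_congr rfl fun k _ => ?_
  congr 1
  push_cast; ring

lemma lf_term_summable {s : ℂ} (hs : 1 < s.re) : Summable (fun m : ℕ =>
    Complex.exp (-s * (Real.log (Real.log ((m + 8).factorial : ℝ)) : ℂ))) := by
  refine Summable.of_norm_bounded (g := fun m : ℕ => ((m : ℝ) + 8) ^ (-s.re))
    (lf_summ (by linarith)) fun m => ?_
  have hm : (0 : ℝ) ≤ m := Nat.cast_nonneg m
  have h0 : (0 : ℝ) < (m : ℝ) + 8 := by linarith
  rw [Complex.norm_exp, Real.rpow_def_of_pos h0]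
  have := Real.log_le_log h0 (lf_fact8 m)
  apply Real.exp_le_exp.2
  simp only [neg_mul, Complex.neg_re, Complex.re_mul_ofReal]
  nlinarith

/-- The Dirichlet series `∑_{n=2}^∞ (log n!)^{−s}`, convergent for
`Re(s) > 1`, has an analytic continuation to `{Re(s) > 0} \ (0, 1]`. -/
theorem log_factorial_dirichlet_series_continuation :
    ∃ F : ℂ → ℂ,
      DifferentiableOn ℂ F
        ({s : ℂ | 0 < s.re} \ {s : ℂ | s.im = 0 ∧ 0 < s.re ∧ s.re ≤ 1}) ∧
      ∀ s : ℂ, 1 < s.re →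
        F s = ∑' n : ℕ,
          Complex.exp (-s * (Real.log (Real.log ((n + 2).factorial : ℝ)) : ℂ)) := by
  refine ⟨fun s => (∑ n ∈ Finset.range 6,
      Complex.exp (-s * (Real.log (Real.log ((n + 2).factorial : ℝ)) : ℂ)))
      + ((∑' m, lfD m s) + (Complex.Gamma s)⁻¹ * ∫ t in Ioi (0 : ℝ), lfK s t), ?_, ?_⟩
  · rintro s ⟨hs, hs2⟩
    have hs0 : 0 < s.re := hs
    have hslit : s - 1 ∈ slitPlane := by
      rw [mem_slitPlane_iff]
      by_contra hcon
      push Not at hcon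
      apply hs2
      simp at hcon
      exact ⟨hcon.2, hs0, hcon.1⟩
    apply DifferentiableAt.differentiableWithinAt
    refine DifferentiableAt.add ?_ ((lfD_tsum_diff hs0).add
      ((Complex.differentiable_one_div_Gamma s).mul (lfK_diff hs0 hslit)))
    fun_prop
  · intro s hs
    have ht := lf_term_summable hs
    have hD := lfD_summable (s := s) (by linarith)
    have hI : Summable (fun m : ℕ => ∫ x in ((m : ℝ) + 8)..((m : ℝ) + 9), lfH s x) := by
      refine (ht.sub hD).congr fun m => ?_
      simp [lfD]
    have e1 : ∑' m, lfD m s + (Complex.Gamma s)⁻¹ * ∫ t in Ioi (0 : ℝ), lfK s t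
        = ∑' m : ℕ, Complex.exp (-s * (Real.log (Real.log ((m + 8).factorial : ℝ)) : ℂ)) := by
      rw [← lfH_integral hs, ← lfH_hasSum hs hI, ← hD.tsum_add hI]
      refine tsum_congr fun m => ?_
      simp [lfD]
    have ht' : Summable (fun n : ℕ =>
        Complex.exp (-s * (Real.log (Real.log ((n + 2).factorial : ℝ)) : ℂ))) :=
      (summable_nat_add_iff 6).1 ht
    show _ + (_ + _) = _
    rw [e1, ← ht'.sum_add_tsum_nat_add 6]
end
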